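/- For g ∈ C_c^∞(𝔻) define the singular integral Sg(z) = lim_{ε→0⁺} −(1/π) ∫_{𝔻 ∖ B(z,ε)} g(w)/(w−z)² dμ(w) for z ∈ 𝔻. Then: (i) this principal value limit exists for every z ∈ 𝔻; and (ii) for every 1 < p < ∞ there exists a constant C > 0 such that for all g ∈ C_c^∞(𝔻), ∫_𝔻 |Sg(z)|ᵖ |z|⁻¹ dμ(z) ≤ C · ∫_𝔻 |g(z)|ᵖ |z|⁻¹ dμ(z). That is, S is bounded on Lᵖ of the unit disk with respect to the Muckenhoupt weight |z|⁻¹. -/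

import Mathlib

open MeasureTheory Metric Filter Topology Set ENNReal NNReal

/-!
`Sg` is the Beurling transform `∂(Cg)/∂z`, where `C` is the Cauchy transform, the solution
operator of `∂(Cg)/∂z̄ = g`. On test functions, `∂v/∂z` arises from `∂v/∂z̄` by applying twice the
multiplier `ζ ↦ ζ̄ / |ζ|` (up to a constant), which by the method of rotations is an average of
directional Hilbert transforms. So `‖∂v/∂z‖_p ≲ ‖∂v/∂z̄‖_p` follows from M. Riesz' theorem: for
`p ≤ 2`, take real parts of the `p`-th power of a Cauchy integral, whose integral along horizontal
lines vanishes; for `p > 2`, use duality. Applied to a cutoff of `Cg`, this bounds `S` on `Lᵖ` of a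
disk.

For the weight `|z|⁻ˢ`, put `a = s / p`. The commutator of `S` with `|z|⁻ᵃ`, applied to `g`, is at
most `∫ k(l) |zl|⁻ᵃ |g(zl)| dμ(l)` with `k(l) = ||l|ᵃ - 1| / |l - 1|²`: an average of dilations,
which Minkowski's inequality bounds on `Lᵖ` because `∫ k(l) |l|^(-2/p) dμ(l)` converges for `s < 2`
and `p > 1`. As `|z|⁻ᵃ g` need not be smooth, `|z|⁻ᵃ` is first replaced by `(|z|² + δ²)^(-a/2)`, and
Fatou's lemma lets `δ` tend to zero.
-/

namespace Beurling

section PowerIntegrals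

variable {α β : Type*} [MeasurableSpace α] [MeasurableSpace β] {μ : Measure α} {ν : Measure β}
  {E : Type*} [NormedAddCommGroup E] {p : ℝ}

lemma lintegral_mul_rpow_le_lintegral_mul_rpow (hp : 1 < p) {k f : α → ℝ≥0∞}
    (hk : AEMeasurable k μ) (hf : AEMeasurable f μ) :
    (∫⁻ a, k a * f a ∂μ) ^ p ≤ (∫⁻ a, k a ∂μ) ^ (p - 1) * ∫⁻ a, k a * f a ^ p ∂μ := by
  have hp0 : 0 < p := by linarith
  have hpq := (Real.HolderConjugate.conjExponent hp).symm
  set q := Real.conjExponent p with hq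
  have hq0 : 0 < q := hpq.pos
  have split (a : α) : k a ^ (1 / q) * (k a ^ (1 / p) * f a) = k a * f a := by
    rw [← mul_assoc, ← ENNReal.rpow_add_of_nonneg _ _ (by positivity) (by positivity), one_div,
      one_div, hpq.inv_add_inv_eq_one, ENNReal.rpow_one]
  calc (∫⁻ a, k a * f a ∂μ) ^ p
      ≤ ((∫⁻ a, (k a ^ (1 / q)) ^ q ∂μ) ^ (1 / q) *
          (∫⁻ a, (k a ^ (1 / p) * f a) ^ p ∂μ) ^ (1 / p)) ^ p := by
        simp_rw [← split]
        gcongr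
        exact ENNReal.lintegral_mul_le_Lp_mul_Lq μ hpq (hk.pow_const _) ((hk.pow_const _).mul hf)
    _ = (∫⁻ a, k a ∂μ) ^ (p - 1) * ∫⁻ a, k a * f a ^ p ∂μ := by
        simp only [ENNReal.mul_rpow_of_nonneg _ _ hp0.le, ← ENNReal.rpow_mul,
          one_div_mul_cancel hp0.ne', one_div_mul_cancel hq0.ne', ENNReal.rpow_one]
        congr 2
        rw [hq, Real.conjExponent]
        field_simp

lemma lintegral_lintegral_mul_rpow_le [SFinite μ] [SFinite ν] (hp : 1 < p) {k : α → ℝ≥0∞}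
    {F : β → α → ℝ≥0∞} (hk : Measurable k) (hF : Measurable (Function.uncurry F)) {M : ℝ≥0∞}
    (hM : ∀ a, ∫⁻ b, F b a ^ p ∂ν ≤ M) :
    ∫⁻ b, (∫⁻ a, k a * F b a ∂μ) ^ p ∂ν ≤ (∫⁻ a, k a ∂μ) ^ p * M := by
  have hkF : Measurable fun q : β × α => k q.2 * F q.1 q.2 ^ p :=
    (hk.comp measurable_snd).mul (hF.pow_const p)
  calc ∫⁻ b, (∫⁻ a, k a * F b a ∂μ) ^ p ∂ν
      ≤ ∫⁻ b, (∫⁻ a, k a ∂μ) ^ (p - 1) * ∫⁻ a, k a * F b a ^ p ∂μ ∂ν :=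
        lintegral_mono fun b => lintegral_mul_rpow_le_lintegral_mul_rpow hp hk.aemeasurable
          (hF.comp measurable_prodMk_left).aemeasurable
    _ = (∫⁻ a, k a ∂μ) ^ (p - 1) * ∫⁻ a, ∫⁻ b, k a * F b a ^ p ∂ν ∂μ := by
        rw [lintegral_const_mul _ hkF.lintegral_prod_right',
          lintegral_lintegral_swap hkF.aemeasurable]
    _ ≤ (∫⁻ a, k a ∂μ) ^ (p - 1) * ∫⁻ a, k a * M ∂μ := by
        gcongr with a
        rw [lintegral_const_mul (k a) (Measurable.of_uncurry_right hF |>.pow_const p)]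
        gcongr
        exact hM a
    _ = (∫⁻ a, k a ∂μ) ^ p * M := by
        rw [lintegral_mul_const _ hk, ← mul_assoc]
        congr 1
        nth_rewrite 2 [← ENNReal.rpow_one (∫⁻ a, k a ∂μ)]
        rw [← ENNReal.rpow_add_of_nonneg _ _ (by linarith) zero_le_one, sub_add_cancel]

lemma lintegral_add_rpow_le (hp : 1 ≤ p) {f g : α → ℝ≥0∞} (hf : AEMeasurable f μ) :
    ∫⁻ a, (f a + g a) ^ p ∂μ ≤ 2 ^ (p - 1) * (∫⁻ a, f a ^ p ∂μ + ∫⁻ a, g a ^ p ∂μ) := by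
  calc ∫⁻ a, (f a + g a) ^ p ∂μ ≤ ∫⁻ a, 2 ^ (p - 1) * (f a ^ p + g a ^ p) ∂μ :=
        lintegral_mono fun a => ENNReal.rpow_add_le_mul_rpow_add_rpow _ _ hp
    _ = 2 ^ (p - 1) * (∫⁻ a, f a ^ p ∂μ + ∫⁻ a, g a ^ p ∂μ) := by
        rw [lintegral_const_mul' _ _ (by finiteness), lintegral_add_left' (hf.pow_const p)]

lemma lintegral_rpow_le_of_le_add (hp : 1 ≤ p) {f g h : α → ℝ≥0∞} (hg : AEMeasurable g μ)
    (hfgh : ∀ᵐ a ∂μ, f a ≤ g a + h a) {M : ℝ≥0∞} (hgM : ∫⁻ a, g a ^ p ∂μ ≤ M)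
    (hhM : ∫⁻ a, h a ^ p ∂μ ≤ M) : ∫⁻ a, f a ^ p ∂μ ≤ 2 ^ p * M := by
  calc ∫⁻ a, f a ^ p ∂μ ≤ ∫⁻ a, (g a + h a) ^ p ∂μ := by
        refine lintegral_mono_ae (hfgh.mono fun a ha => ?_)
        gcongr
    _ ≤ 2 ^ (p - 1) * (M + M) := (lintegral_add_rpow_le hp hg).trans (by gcongr)
    _ = 2 ^ p * M := by
        rw [← two_mul, ← mul_assoc]
        congr 1
        nth_rewrite 2 [← ENNReal.rpow_one 2]
        rw [← ENNReal.rpow_add_of_nonneg _ _ (by linarith) zero_le_one, sub_add_cancel]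

lemma lintegral_enorm_rpow_le_of_tendsto_ae {F : ℕ → α → E} {f : α → E}
    (hF : ∀ n, AEStronglyMeasurable (F n) μ)
    (hlim : ∀ᵐ a ∂μ, Tendsto (fun n => F n a) atTop (𝓝 (f a))) {M : ℝ≥0∞}
    (hM : ∀ n, ∫⁻ a, ‖F n a‖ₑ ^ p ∂μ ≤ M) : ∫⁻ a, ‖f a‖ₑ ^ p ∂μ ≤ M := by
  have hlim' : ∀ᵐ a ∂μ, ‖f a‖ₑ ^ p ≤ liminf (fun n => ‖F n a‖ₑ ^ p) atTop := by
    filter_upwards [hlim] with a ha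
    exact ((ENNReal.continuous_rpow_const.tendsto _).comp ha.enorm).liminf_eq.ge
  calc ∫⁻ a, ‖f a‖ₑ ^ p ∂μ ≤ ∫⁻ a, liminf (fun n => ‖F n a‖ₑ ^ p) atTop ∂μ :=
        lintegral_mono_ae hlim'
    _ ≤ liminf (fun n => ∫⁻ a, ‖F n a‖ₑ ^ p ∂μ) atTop :=
        lintegral_liminf_le' fun n => (hF n).enorm.pow_const p
    _ ≤ M := liminf_le_of_frequently_le' (Frequently.of_forall hM)

end PowerIntegrals

section BoundedCompactSupport

variable {G E : Type*} [NormedAddCommGroup G] [MeasurableSpace G] [NormedAddCommGroup E]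
  [MeasurableSpace E]

/-- Bounded measurable functions with compact support: the functions on which singular integral
operators are estimated before the estimates are extended to `Lᵖ`. -/
structure BoundedCompactSupport (f : G → E) : Prop where
  measurable : Measurable f
  bounded : ∃ B, ∀ t, ‖f t‖ ≤ B
  hasCompactSupport : HasCompactSupport f

variable {f : G → E}

lemma BoundedCompactSupport.comp {F : Type*} [NormedAddCommGroup F] [MeasurableSpace F]
    (hf : BoundedCompactSupport f) {φ : E → F} (hφ : Measurable φ) (hle : ∀ z, ‖φ z‖ ≤ ‖z‖) :
    BoundedCompactSupport fun t => φ (f t) where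
  measurable := hφ.comp hf.measurable
  bounded := hf.bounded.imp fun _ hB t => (hle _).trans (hB t)
  hasCompactSupport := hf.hasCompactSupport.comp_left (by simpa using hle 0)

variable [BorelSpace E] [SecondCountableTopology E] {μ : Measure G} [IsFiniteMeasureOnCompacts μ]

lemma BoundedCompactSupport.memLp (hf : BoundedCompactSupport f) (p : ℝ≥0∞) : MemLp f p μ :=
  let ⟨B, hB⟩ := hf.bounded
  hf.hasCompactSupport.memLp_of_bound hf.measurable.aestronglyMeasurable B (.of_forall hB)

lemma BoundedCompactSupport.integrable (hf : BoundedCompactSupport f) : Integrable f μ :=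
  memLp_one_iff_integrable.1 (hf.memLp 1)

lemma BoundedCompactSupport.lintegral_rpow_ne_top (hf : BoundedCompactSupport f) {p : ℝ}
    (hp : 0 < p) : ∫⁻ t, ‖f t‖ₑ ^ p ∂μ ≠ ⊤ := by
  have := lintegral_rpow_enorm_lt_top_of_eLpNorm_lt_top (by simpa using hp) ENNReal.ofReal_ne_top
    (hf.memLp (μ := μ) (ENNReal.ofReal p)).2
  rw [ENNReal.toReal_ofReal hp.le] at this
  exact this.ne

end BoundedCompactSupport

variable {G E : Type*} [NormedAddCommGroup G] [MeasurableSpace G] [BorelSpace G] [ProperSpace G]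
  [NormedAddCommGroup E] [MeasurableSpace E] [BorelSpace E] in
lemma exists_boundedCompactSupport_approx {f : G → E} (hf : Measurable f) :
    ∃ g : ℕ → G → E, (∀ n, BoundedCompactSupport (g n)) ∧ (∀ n t, ‖g n t‖ ≤ ‖f t‖) ∧
      ∀ t, ∀ᶠ n in atTop, g n t = f t := by
  let S (n : ℕ) : Set G := {t | ‖t‖ ≤ n ∧ ‖f t‖ ≤ n}
  have hS (n : ℕ) : MeasurableSet (S n) :=
    (measurableSet_le measurable_norm measurable_const).inter
      (measurableSet_le hf.norm measurable_const)
  refine ⟨fun n => (S n).indicator f, fun n => ⟨hf.indicator (hS n), ⟨n, fun t => ?_⟩, ?_⟩,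
    fun n t => norm_indicator_le_norm_self _ _, fun t => ?_⟩
  · by_cases ht : t ∈ S n
    · simpa only [indicator_of_mem ht] using ht.2
    · simp [indicator_of_notMem ht]
  · exact .intro (isCompact_closedBall 0 (n : ℝ)) fun t ht =>
      indicator_of_notMem (fun h => ht (mem_closedBall_zero_iff.2 h.1)) _
  · filter_upwards [tendsto_natCast_atTop_atTop.eventually_ge_atTop (max ‖t‖ ‖f t‖)] with n hn
    exact indicator_of_mem (s := S n) (max_le_iff.1 hn) f

section Convolution

open scoped Convolution
open ContinuousLinearMap (lsmul)

variable {G : Type*} [NormedAddCommGroup G] [MeasurableSpace G] [BorelSpace G] {μ : Measure G}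
  {E : Type*} [NormedAddCommGroup E] [NormedSpace ℝ E] [MeasurableSpace E] [BorelSpace E]
  {K : G → ℝ} {f : G → E} {p : ℝ}

lemma BoundedCompactSupport.convolutionExists [SecondCountableTopology E]
    [IsFiniteMeasureOnCompacts μ] [μ.IsAddLeftInvariant] [μ.IsNegInvariant]
    (hf : BoundedCompactSupport f) (hK : Continuous K) :
    ConvolutionExists K f (lsmul ℝ ℝ) μ :=
  hf.hasCompactSupport.convolutionExists_right_of_continuous_left _ hK
    hf.integrable.locallyIntegrable

variable [SecondCountableTopology G] [SFinite μ]

lemma lintegral_enorm_convolution_rpow_le [μ.IsAddRightInvariant] (hp : 1 < p)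
    (hK : Measurable K) (hf : Measurable f) :
    ∫⁻ x, ‖(K ⋆[lsmul ℝ ℝ, μ] f) x‖ₑ ^ p ∂μ ≤
      (∫⁻ s, ‖K s‖ₑ ∂μ) ^ p * ∫⁻ t, ‖f t‖ₑ ^ p ∂μ := by
  calc ∫⁻ x, ‖(K ⋆[lsmul ℝ ℝ, μ] f) x‖ₑ ^ p ∂μ
      ≤ ∫⁻ x, (∫⁻ s, ‖K s‖ₑ * ‖f (x - s)‖ₑ ∂μ) ^ p ∂μ := by
        gcongr with x
        refine (enorm_integral_le_lintegral_enorm _).trans_eq ?_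
        simp only [ContinuousLinearMap.lsmul_apply, enorm_smul]
    _ ≤ _ := lintegral_lintegral_mul_rpow_le hp hK.enorm
        (hf.comp (measurable_fst.sub measurable_snd)).enorm
        fun s => (lintegral_sub_right_eq_self (fun x => ‖f x‖ₑ ^ p) s).le

variable [SecondCountableTopology E]

lemma measurable_convolution (hK : Measurable K) (hf : Measurable f) :
    Measurable (K ⋆[lsmul ℝ ℝ, μ] f) := by
  have : StronglyMeasurable fun q : G × G => K q.2 • f (q.1 - q.2) :=
    Measurable.stronglyMeasurable (by fun_prop)
  exact this.integral_prod_right'.measurable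

lemma lintegral_enorm_convolution_rpow_le_of_boundedCompactSupport [ProperSpace G]
    (hK : Measurable K) {C : ℝ≥0∞}
    (hC : ∀ g : G → E, BoundedCompactSupport g →
      ∫⁻ x, ‖(K ⋆[lsmul ℝ ℝ, μ] g) x‖ₑ ^ p ∂μ ≤ C * ∫⁻ t, ‖g t‖ₑ ^ p ∂μ)
    (hp : 0 ≤ p) (hf : Measurable f) :
    ∫⁻ x, ‖(K ⋆[lsmul ℝ ℝ, μ] f) x‖ₑ ^ p ∂μ ≤ C * ∫⁻ t, ‖f t‖ₑ ^ p ∂μ := by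
  obtain ⟨g, hg, g_le, g_lim⟩ := exists_boundedCompactSupport_approx hf
  let I : Set G := {x | ConvolutionExistsAt K f x (lsmul ℝ ℝ) μ}
  have hI : MeasurableSet I := measurableSet_integrable
    (f := fun x t => K t • f (x - t)) (Measurable.stronglyMeasurable (by fun_prop))
  refine lintegral_enorm_rpow_le_of_tendsto_ae
    (F := fun n => I.indicator (K ⋆[lsmul ℝ ℝ, μ] g n))
    (fun n => ((measurable_convolution hK (hg n).measurable).indicator hI).aestronglyMeasurable)
    (.of_forall fun x => ?_) fun n => ?_
  · by_cases hx : x ∈ I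
    · simp only [indicator_of_mem hx]
      refine tendsto_integral_of_dominated_convergence (fun s => ‖K s • f (x - s)‖)
        (fun n => ?_) (Integrable.norm hx) (fun n => .of_forall fun s => ?_)
        (.of_forall fun s => ?_)
      · have := (hg n).measurable
        exact Measurable.aestronglyMeasurable (by fun_prop)
      · simp only [ContinuousLinearMap.lsmul_apply, norm_smul]
        gcongr
        exact g_le n _
      · refine tendsto_const_nhds.congr' ?_
        filter_upwards [g_lim (x - s)] with n hn
        rw [hn]
    · simp only [indicator_of_notMem hx, convolution]
      rw [integral_undef hx]
      exact tendsto_const_nhds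
  · calc ∫⁻ x, ‖I.indicator (K ⋆[lsmul ℝ ℝ, μ] g n) x‖ₑ ^ p ∂μ
        ≤ ∫⁻ x, ‖(K ⋆[lsmul ℝ ℝ, μ] g n) x‖ₑ ^ p ∂μ := by
          gcongr with x
          exact enorm_indicator_le_enorm_self _ _
      _ ≤ C * ∫⁻ t, ‖g n t‖ₑ ^ p ∂μ := hC _ (hg n)
      _ ≤ C * ∫⁻ t, ‖f t‖ₑ ^ p ∂μ := by
          gcongr with t
          exact enorm_le_iff_norm_le.2 (g_le n t)

end Convolution

section Riesz

open scoped Convolution Real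
open ContinuousLinearMap (lsmul)
open Complex (I)

variable {p : ℝ}

lemma exists_abs_sin_rpow_le (hp : 1 < p) (hp2 : p ≤ 2) :
    ∃ A B : ℝ, 0 < A ∧ 0 < B ∧ ∀ θ, |θ| < π / 2 →
      |Real.sin θ| ^ p ≤ A * Real.cos θ ^ p - B * Real.cos (p * θ) := by
  have hπ := Real.pi_pos
  have hp0 : 0 < p := by linarith
  -- `cos (p * θ)` is negative as soon as `β ≤ p * |θ|`, and `cos θ` is bounded below otherwise.
  set β : ℝ := (1 + p) / 2 * (π / 2) with hβ
  have hβp : β / p < π / 2 := by rw [div_lt_iff₀ hp0]; nlinarith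
  have hcosβ : Real.cos β < 0 := Real.cos_neg_of_pi_div_two_lt_of_lt (by nlinarith) (by nlinarith)
  have hcosβp : 0 < Real.cos (β / p) :=
    Real.cos_pos_of_mem_Ioo ⟨(neg_neg_of_pos (by positivity)).trans (by positivity), hβp⟩
  obtain ⟨c, hc⟩ : ∃ c, c = -Real.cos β := ⟨_, rfl⟩
  have hc0 : 0 < c := by linarith
  refine ⟨(1 + 1 / c) / Real.cos (β / p) ^ p, 1 / c, by positivity, by positivity,
    fun θ hθ => ?_⟩
  have hcos : 0 < Real.cos θ := Real.cos_pos_of_mem_Ioo (abs_lt.1 hθ)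
  have hsin : |Real.sin θ| ^ p ≤ 1 :=
    Real.rpow_le_one (abs_nonneg _) (Real.abs_sin_le_one θ) hp0.le
  have habs : Real.cos (p * θ) = Real.cos (p * |θ|) := by
    rw [← Real.cos_abs, abs_mul, abs_of_pos hp0]
  rw [habs]
  rcases le_or_gt β (p * |θ|) with hlarge | hsmall
  · have hle : Real.cos (p * |θ|) ≤ -c := by
      rw [hc, neg_neg]
      exact Real.cos_le_cos_of_nonneg_of_le_pi (by positivity) (by nlinarith [abs_nonneg θ]) hlarge
    have : 1 ≤ -(1 / c * Real.cos (p * |θ|)) := by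
      rw [← mul_neg, one_div, inv_mul_eq_div, one_le_div hc0]
      linarith
    have : 0 ≤ (1 + 1 / c) / Real.cos (β / p) ^ p * Real.cos θ ^ p := by positivity
    linarith
  · have hle : Real.cos (β / p) ≤ Real.cos θ := by
      rw [← Real.cos_abs θ]
      refine Real.cos_le_cos_of_nonneg_of_le_pi (abs_nonneg _) (by linarith) ?_
      rw [le_div_iff₀ hp0]
      linarith
    have : 1 + 1 / c ≤ (1 + 1 / c) / Real.cos (β / p) ^ p * Real.cos θ ^ p := by
      rw [div_mul_eq_mul_div, le_div_iff₀ (by positivity)]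
      gcongr
    have : 1 / c * Real.cos (p * |θ|) ≤ 1 / c * 1 := by
      gcongr
      exact Real.cos_le_one _
    linarith

lemma exists_abs_im_rpow_le (hp : 1 < p) (hp2 : p ≤ 2) :
    ∃ A B : ℝ, 0 < A ∧ 0 < B ∧ ∀ w : ℂ, 0 < w.re →
      |w.im| ^ p ≤ A * w.re ^ p - B * (w ^ (p : ℂ)).re := by
  obtain ⟨A, B, hA, hB, hAB⟩ := exists_abs_sin_rpow_le hp hp2
  refine ⟨A, B, hA, hB, fun w hw => ?_⟩
  have harg : |w.arg| < π / 2 := Complex.abs_arg_lt_pi_div_two_iff.2 (.inl hw)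
  have hcos : 0 ≤ Real.cos w.arg := Real.cos_nonneg_of_mem_Icc (abs_le.1 harg.le)
  calc |w.im| ^ p = ‖w‖ ^ p * |Real.sin w.arg| ^ p := by
        rw [← Complex.norm_mul_sin_arg w, abs_mul, abs_norm,
          Real.mul_rpow (norm_nonneg _) (abs_nonneg _)]
    _ ≤ ‖w‖ ^ p * (A * Real.cos w.arg ^ p - B * Real.cos (p * w.arg)) := by
        gcongr
        exact hAB _ harg
    _ = A * w.re ^ p - B * (w ^ (p : ℂ)).re := by
        rw [Complex.cpow_ofReal_re, mul_comm w.arg]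
        rw [← Complex.norm_mul_cos_arg w, Real.mul_rpow (norm_nonneg _) hcos]
        ring

lemma intervalIntegral_abs_im_rpow_le {A B : ℝ} (hp : 0 < p) (hB : 0 ≤ B)
    (hAB : ∀ w : ℂ, 0 < w.re → |w.im| ^ p ≤ A * w.re ^ p - B * (w ^ (p : ℂ)).re)
    {G : ℝ → ℂ} (hG : Continuous G) (hre : ∀ x, 0 < (G x).re) {u v : ℝ} (huv : u ≤ v) :
    ∫ x in u..v, |(G x).im| ^ p ≤
      A * (∫ x in u..v, (G x).re ^ p) + B * ‖∫ x in u..v, G x ^ (p : ℂ)‖ := by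
  have hGp : Continuous fun x => G x ^ (p : ℂ) := hG.cpow continuous_const fun x => .inl (hre x)
  have him : Continuous fun x => |(G x).im| ^ p :=
    (Complex.continuous_im.comp hG).abs.rpow_const fun _ => .inr hp.le
  have hre' : Continuous fun x => A * (G x).re ^ p :=
    ((Complex.continuous_re.comp hG).rpow_const fun _ => .inr hp.le).const_mul A
  have hGp_re : Continuous fun x => B * (G x ^ (p : ℂ)).re := by fun_prop
  calc ∫ x in u..v, |(G x).im| ^ p
      ≤ ∫ x in u..v, (A * (G x).re ^ p - B * (G x ^ (p : ℂ)).re) :=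
        intervalIntegral.integral_mono_on (μ := volume) huv (him.intervalIntegrable _ _)
          ((hre'.sub hGp_re).intervalIntegrable _ _) fun x _ => hAB _ (hre x)
    _ = A * (∫ x in u..v, (G x).re ^ p) - B * (∫ x in u..v, G x ^ (p : ℂ)).re := by
        rw [intervalIntegral.integral_sub (hre'.intervalIntegrable _ _)
            (hGp_re.intervalIntegrable _ _),
          intervalIntegral.integral_const_mul, intervalIntegral.integral_const_mul]
        congr 2
        exact Complex.reCLM.intervalIntegral_comp_comm (hGp.intervalIntegrable _ _)
    _ ≤ A * (∫ x in u..v, (G x).re ^ p) + B * ‖∫ x in u..v, G x ^ (p : ℂ)‖ := by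
        nlinarith [neg_le_of_abs_le (Complex.abs_re_le_norm (∫ x in u..v, G x ^ (p : ℂ)))]

lemma lintegral_enorm_im_rpow_le_of_tendsto {A B : ℝ} (hp : 0 < p) (hA : 0 ≤ A) (hB : 0 ≤ B)
    (hAB : ∀ w : ℂ, 0 < w.re → |w.im| ^ p ≤ A * w.re ^ p - B * (w ^ (p : ℂ)).re)
    {G : ℝ → ℂ} (hG : Continuous G) (hre : ∀ x, 0 < (G x).re)
    (hlim : Tendsto (fun T : ℝ => ∫ x in -T..T, G x ^ (p : ℂ)) atTop (𝓝 0)) :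
    ∫⁻ x, ‖(G x).im‖ₑ ^ p ≤ ENNReal.ofReal A * ∫⁻ x, ‖(G x).re‖ₑ ^ p := by
  have him : Continuous fun x => |(G x).im| ^ p :=
    (Complex.continuous_im.comp hG).abs.rpow_const fun _ => .inr hp.le
  have hre' : Continuous fun x => (G x).re ^ p :=
    (Complex.continuous_re.comp hG).rpow_const fun _ => .inr hp.le
  have ofReal_integral {φ : ℝ → ℝ} (hφ : Continuous φ) (h0 : ∀ x, 0 ≤ φ x) {T : ℝ}
      (hT : -T ≤ T) : ∫⁻ x in Ioc (-T) T, ENNReal.ofReal (φ x) =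
        ENNReal.ofReal (∫ x in -T..T, φ x) := by
    rw [intervalIntegral.integral_of_le hT, ofReal_integral_eq_lintegral_ofReal
      (hφ.intervalIntegrable (-T) T).1 (.of_forall h0)]
  have lim_im : Tendsto (fun T : ℝ => ∫⁻ x in Ioc (-T) T, ‖(G x).im‖ₑ ^ p) atTop
      (𝓝 (∫⁻ x, ‖(G x).im‖ₑ ^ p)) :=
    (aecover_Ioc tendsto_neg_atTop_atBot tendsto_id).lintegral_tendsto_of_countably_generated
      ((Complex.continuous_im.comp hG).measurable.enorm.pow_const p).aemeasurable
  have lim_err : Tendsto (fun T : ℝ => ENNReal.ofReal (B * ‖∫ x in -T..T, G x ^ (p : ℂ)‖)) atTop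
      (𝓝 0) := by
    simpa using ENNReal.tendsto_ofReal (hlim.norm.const_mul B)
  refine le_of_tendsto_of_tendsto lim_im (by simpa using lim_err.const_add _) ?_
  filter_upwards [eventually_ge_atTop 0] with T hT0
  have hT : -T ≤ T := by linarith
  calc ∫⁻ x in Ioc (-T) T, ‖(G x).im‖ₑ ^ p
      = ENNReal.ofReal (∫ x in -T..T, |(G x).im| ^ p) := by
        rw [← ofReal_integral him (fun _ => by positivity) hT]
        simp only [Real.enorm_eq_ofReal_abs, ENNReal.ofReal_rpow_of_nonneg (abs_nonneg _) hp.le]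
    _ ≤ ENNReal.ofReal A * ENNReal.ofReal (∫ x in -T..T, (G x).re ^ p) +
          ENNReal.ofReal (B * ‖∫ x in -T..T, G x ^ (p : ℂ)‖) := by
        rw [← ENNReal.ofReal_mul hA]
        exact (ENNReal.ofReal_le_ofReal
          (intervalIntegral_abs_im_rpow_le hp hB hAB hG hre hT)).trans ENNReal.ofReal_add_le
    _ ≤ _ := by
        rw [← ofReal_integral hre' (fun x => Real.rpow_nonneg (hre x).le p) hT]
        simp only [Real.enorm_of_nonneg (hre _).le, ENNReal.ofReal_rpow_of_nonneg (hre _).le hp.le]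
        gcongr
        exact Measure.restrict_le_self

/-- Cauchy's theorem on the rectangle with base `[-T, T] + iy` and height `T`. -/
lemma norm_integral_horizontal_le {G : ℂ → ℂ} (hG : DifferentiableOn ℂ G {z | 0 < z.im})
    {y T ε : ℝ} (hy : 0 < y) (hT : 0 < T) (hε : ∀ z, 0 < z.im → T ≤ ‖z‖ → ‖G z‖ ≤ ε) :
    ‖∫ x in -T..T, G (x + y * I)‖ ≤ 4 * T * ε := by
  have hrect := Complex.integral_boundary_rect_eq_zero_of_differentiableOn G (⟨-T, y⟩ : ℂ)
    (⟨T, y + T⟩ : ℂ) <| hG.mono fun z hz => by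
      have hz := hz.2
      rw [uIcc_of_le (by linarith)] at hz
      exact hy.trans_le hz.1
  simp only [smul_eq_mul] at hrect
  have top_le : ‖∫ x in -T..T, G (x + ((y + T : ℝ) : ℂ) * I)‖ ≤ ε * |T - -T| := by
    refine intervalIntegral.norm_integral_le_of_norm_le_const fun x _ => hε _ ?_ ?_
    · simpa using by linarith
    · refine le_trans ?_ (Complex.abs_im_le_norm _)
      simpa using (by linarith : T ≤ y + T).trans (le_abs_self _)
  have side_le {a : ℝ} (ha : |a| = T) :
      ‖∫ x in y..(y + T), G (a + x * I)‖ ≤ ε * |y + T - y| := by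
    refine intervalIntegral.norm_integral_le_of_norm_le_const fun x hx => hε _ ?_ ?_
    · rw [uIoc_of_le (by linarith)] at hx
      simpa using hy.trans hx.1
    · refine ha.symm.le.trans ((Complex.abs_re_le_norm _).trans_eq' ?_)
      simp
  have right_le := side_le (abs_of_pos hT)
  have left_le := side_le ((abs_neg T).trans (abs_of_pos hT))
  rw [show |T - -T| = 2 * T by rw [abs_of_pos] <;> linarith] at top_le
  rw [add_sub_cancel_left, abs_of_pos hT] at left_le right_le
  calc ‖∫ x in -T..T, G (x + y * I)‖
      = ‖(∫ x in -T..T, G (x + ((y + T : ℝ) : ℂ) * I)) - I * (∫ x in y..(y + T), G (T + x * I)) +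
          I * ∫ x in y..(y + T), G (((-T : ℝ) : ℂ) + x * I)‖ := by
        congr 1
        linear_combination hrect
    _ ≤ 2 * T * ε + T * ε + T * ε := by
        refine (norm_add_le _ _).trans (add_le_add ((norm_sub_le _ _).trans (add_le_add ?_ ?_)) ?_)
        · linarith
        · rw [norm_mul, Complex.norm_I]
          linarith
        · rw [norm_mul, Complex.norm_I]
          linarith
    _ = 4 * T * ε := by ring

lemma tendsto_integral_horizontal_atTop_zero (hp : 1 < p) {G : ℂ → ℂ}
    (hG : DifferentiableOn ℂ G {z | 0 < z.im}) {M R : ℝ}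
    (hM : ∀ z, 0 < z.im → R ≤ ‖z‖ → ‖G z‖ ≤ M * ‖z‖ ^ (-p)) {y : ℝ} (hy : 0 < y) :
    Tendsto (fun T : ℝ => ∫ x in -T..T, G (x + y * I)) atTop (𝓝 0) := by
  have hlim : Tendsto (fun T : ℝ => 4 * |M| * T ^ (-(p - 1))) atTop (𝓝 0) := by
    simpa using (tendsto_rpow_neg_atTop (sub_pos.2 hp)).const_mul (4 * |M|)
  refine squeeze_zero_norm' ?_ hlim
  filter_upwards [eventually_ge_atTop R, eventually_gt_atTop 0] with T hTR hT
  calc ‖∫ x in -T..T, G (x + y * I)‖ ≤ 4 * T * (|M| * T ^ (-p)) := by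
        refine norm_integral_horizontal_le hG hy hT fun z hz hTz =>
          (hM z hz (hTR.trans hTz)).trans ?_
        exact mul_le_mul (le_abs_self M) (Real.rpow_le_rpow_of_nonpos hT hTz (by linarith))
          (by positivity) (abs_nonneg M)
    _ = 4 * |M| * T ^ (-(p - 1)) := by
        rw [show -(p - 1) = -p + 1 by ring, Real.rpow_add hT, Real.rpow_one]
        ring

/-- The Poisson kernel of the upper half plane. -/
noncomputable def poissonKernel (y s : ℝ) : ℝ := y / (π * (s ^ 2 + y ^ 2))

/-- The conjugate Poisson kernel of the upper half plane. -/
noncomputable def conjPoissonKernel (y s : ℝ) : ℝ := s / (π * (s ^ 2 + y ^ 2))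

variable {y : ℝ}

lemma poissonKernel_pos (hy : 0 < y) (s : ℝ) : 0 < poissonKernel y s := by
  unfold poissonKernel
  positivity

lemma continuous_poissonKernel (hy : 0 < y) : Continuous (poissonKernel y) :=
  continuous_const.div (by fun_prop) fun s => by positivity

lemma continuous_conjPoissonKernel (hy : 0 < y) : Continuous (conjPoissonKernel y) :=
  continuous_id.div (by fun_prop) fun s => by positivity

lemma poissonKernel_eq_inv_one_add_sq (hy : 0 < y) (s : ℝ) :
    poissonKernel y s = (π * y)⁻¹ * (1 + (y⁻¹ * s) ^ 2)⁻¹ := by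
  unfold poissonKernel
  field_simp
  ring

lemma integrable_poissonKernel (hy : 0 < y) : Integrable (poissonKernel y) := by
  rw [funext (poissonKernel_eq_inv_one_add_sq hy)]
  exact (integrable_inv_one_add_sq.comp_mul_left' (by positivity)).const_mul _

lemma integral_poissonKernel (hy : 0 < y) : ∫ s, poissonKernel y s = 1 := by
  simp_rw [poissonKernel_eq_inv_one_add_sq hy]
  rw [integral_const_mul, Measure.integral_comp_mul_left (fun s => (1 + s ^ 2)⁻¹),
    integral_univ_inv_one_add_sq, inv_inv, abs_of_pos hy, smul_eq_mul]
  field_simp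

lemma lintegral_enorm_poissonKernel (hy : 0 < y) : ∫⁻ s, ‖poissonKernel y s‖ₑ = 1 := by
  simp_rw [Real.enorm_of_nonneg (poissonKernel_pos hy _).le]
  rw [← ofReal_integral_eq_lintegral_ofReal (integrable_poissonKernel hy)
    (.of_forall fun s => (poissonKernel_pos hy s).le), integral_poissonKernel hy,
    ENNReal.ofReal_one]

/-- The Cauchy integral of `f`, normalized so that its real part is the Poisson integral of `f`. -/
noncomputable def cauchyIntegral (f : ℝ → ℝ) (z : ℂ) : ℂ := ∫ t, (f t : ℂ) * (I / π / (z - t))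

lemma cauchyKernel_eq (hy : 0 < y) (x t : ℝ) :
    I / π / (x + y * I - t) =
      (poissonKernel y (x - t) : ℂ) + (conjPoissonKernel y (x - t) : ℂ) * I := by
  have hden : (x : ℂ) + y * I - t ≠ 0 := fun h => hy.ne' (by simpa using congrArg Complex.im h)
  have hsq : ((x : ℂ) - t) ^ 2 + (y : ℂ) ^ 2 ≠ 0 := by
    have : 0 < (x - t) ^ 2 + y ^ 2 := by positivity
    exact_mod_cast this.ne'
  have hπ : (π : ℂ) ≠ 0 := by exact_mod_cast Real.pi_ne_zero
  unfold poissonKernel conjPoissonKernel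
  push_cast
  rw [div_div, div_mul_eq_mul_div, ← add_div, div_eq_div_iff (mul_ne_zero hπ hden)
    (mul_ne_zero hπ hsq)]
  linear_combination (-(π : ℂ) * ((x : ℂ) - t) * y) * Complex.I_sq

lemma im_le_norm_sub_ofReal (z : ℂ) (t : ℝ) : z.im ≤ ‖z - t‖ := by
  simpa using (le_abs_self _).trans (Complex.abs_im_le_norm (z - t))

variable {f : ℝ → ℝ}

lemma integrable_mul_cauchyKernel (hf : Integrable f) {z : ℂ} (hz : 0 < z.im) :
    Integrable fun t : ℝ => (f t : ℂ) * (I / π / (z - t)) := by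
  refine hf.ofReal.mul_bdd (c := ‖I / π‖ / z.im)
    (Measurable.aestronglyMeasurable (by fun_prop)) (.of_forall fun t => ?_)
  rw [norm_div]
  gcongr
  exact im_le_norm_sub_ofReal z t

lemma cauchyIntegral_eq (hf : Integrable f) (hy : 0 < y) (x : ℝ) :
    cauchyIntegral f (x + y * I) = ((poissonKernel y ⋆[lsmul ℝ ℝ] f) x : ℂ) +
      ((conjPoissonKernel y ⋆[lsmul ℝ ℝ] f) x : ℂ) * I := by
  have hint := integrable_mul_cauchyKernel hf (z := x + y * I) (by simpa using hy)
  simp only [cauchyKernel_eq hy] at hint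
  simp only [cauchyIntegral, cauchyKernel_eq hy, convolution_lsmul_swap]
  refine Complex.ext ((integral_re hint).symm.trans ?_) ((integral_im hint).symm.trans ?_) <;>
    simp [mul_comm]

lemma differentiableOn_cauchyIntegral (hf : Integrable f) :
    DifferentiableOn ℂ (cauchyIntegral f) {z | 0 < z.im} := by
  intro z₀ (hz₀ : 0 < z₀.im)
  have im_gt {z : ℂ} (hz : z ∈ ball z₀ (z₀.im / 2)) (t : ℝ) : z₀.im / 2 < ‖z - t‖ := by
    have h := (neg_le_abs _).trans (Complex.abs_im_le_norm (z - z₀))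
    rw [Complex.sub_im] at h
    have := im_le_norm_sub_ofReal z t
    have := mem_ball_iff_norm.1 hz
    linarith
  refine DifferentiableAt.differentiableWithinAt <| HasDerivAt.differentiableAt <| And.right <|
    hasDerivAt_integral_of_dominated_loc_of_deriv_le
    (F := fun (z : ℂ) (t : ℝ) => (f t : ℂ) * (I / π / (z - t)))
    (F' := fun (z : ℂ) (t : ℝ) => (f t : ℂ) * (-(I / π) / (z - t) ^ 2))
    (bound := fun t => |f t| * (‖I / π‖ / (z₀.im / 2) ^ 2))
    (ball_mem_nhds z₀ (half_pos hz₀)) (.of_forall fun z => ?_)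
    (integrable_mul_cauchyKernel hf hz₀) ?_ (.of_forall fun t z hz => ?_)
    (hf.norm.mul_const _) (.of_forall fun t z hz => ?_)
  · exact hf.ofReal.aestronglyMeasurable.mul (Measurable.aestronglyMeasurable (by fun_prop))
  · exact hf.ofReal.aestronglyMeasurable.mul (Measurable.aestronglyMeasurable (by fun_prop))
  · rw [norm_mul, norm_div, norm_neg, norm_pow, Complex.norm_real, Real.norm_eq_abs]
    gcongr
    exact (im_gt hz t).le
  · have hne : z - t ≠ 0 := norm_pos_iff.1 ((half_pos hz₀).trans (im_gt hz t))
    refine ((((hasDerivAt_id z).sub_const (t : ℂ)).inv hne).const_mul (I / π)).const_mul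
      (f t : ℂ) |>.congr_deriv ?_
    simp only [id]
    ring

lemma norm_cauchyIntegral_le (hf : Integrable f) {R : ℝ} (hR : ∀ t, R < |t| → f t = 0) {z : ℂ}
    (hz0 : z ≠ 0) (hz : 2 * R ≤ ‖z‖) : ‖cauchyIntegral f z‖ ≤ (∫ t, |f t|) * (2 / ‖z‖) := by
  have hz0 : 0 < ‖z‖ / 2 := half_pos (norm_pos_iff.2 hz0)
  rw [← integral_mul_const]
  refine norm_integral_le_of_norm_le (hf.norm.mul_const _) (.of_forall fun t => ?_)
  rw [norm_mul, Complex.norm_real, Real.norm_eq_abs]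
  rcases lt_or_ge R |t| with ht | ht
  · simp [hR t ht]
  · have hle : ‖z‖ / 2 ≤ ‖z - t‖ := by
      have := norm_sub_norm_le z t
      rw [Complex.norm_real, Real.norm_eq_abs] at this
      linarith
    have hπ : 1 / π ≤ 1 := (div_le_one Real.pi_pos).2 (by linarith [Real.pi_gt_three])
    gcongr
    rw [norm_div, norm_div, Complex.norm_I, Complex.norm_real, Real.norm_of_nonneg Real.pi_nonneg]
    calc 1 / π / ‖z - t‖ ≤ 1 / (‖z‖ / 2) := div_le_div₀ zero_le_one hπ hz0 hle
      _ = 2 / ‖z‖ := by field_simp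

lemma convolution_poissonKernel_pos (hf : BoundedCompactSupport f) (hf0 : ∀ t, 0 ≤ f t)
    (hfi : 0 < ∫ t, f t) (hy : 0 < y) (x : ℝ) : 0 < (poissonKernel y ⋆[lsmul ℝ ℝ] f) x := by
  have hconv := (hf.convolutionExists (μ := volume) (continuous_poissonKernel hy) x).integrable_swap
  simp only [ContinuousLinearMap.lsmul_apply, smul_eq_mul] at hconv
  simp only [convolution_lsmul_swap, smul_eq_mul]
  rw [integral_pos_iff_support_of_nonneg (fun t => mul_nonneg (poissonKernel_pos hy _).le (hf0 t))
    hconv]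
  rw [integral_pos_iff_support_of_nonneg hf0 hf.integrable] at hfi
  convert hfi using 2
  ext t
  simp [(poissonKernel_pos hy _).ne']

lemma tendsto_integral_cauchyIntegral_cpow (hf : BoundedCompactSupport f) (hp : 1 < p)
    (hre : ∀ z, 0 < z.im → 0 < (cauchyIntegral f z).re) (hy : 0 < y) :
    Tendsto (fun T : ℝ => ∫ x in -T..T, cauchyIntegral f (x + y * I) ^ (p : ℂ)) atTop (𝓝 0) := by
  obtain ⟨R, hR⟩ := hf.hasCompactSupport.isCompact.isBounded.exists_norm_le
  have hR (t : ℝ) (ht : R < |t|) : f t = 0 :=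
    image_eq_zero_of_notMem_tsupport fun h => ht.not_ge (hR t h)
  refine tendsto_integral_horizontal_atTop_zero hp
    ((differentiableOn_cauchyIntegral hf.integrable).cpow_const fun z hz => .inl (hre z hz))
    (M := (2 * ∫ t, |f t|) ^ p) (R := 2 * R) (fun z hz hzR => ?_) hy
  have hz0 : z ≠ 0 := fun h => by simp [h] at hz
  calc ‖cauchyIntegral f z ^ (p : ℂ)‖ = ‖cauchyIntegral f z‖ ^ p := Complex.norm_cpow_real _ _
    _ ≤ ((∫ t, |f t|) * (2 / ‖z‖)) ^ p := by
        gcongr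
        exact norm_cauchyIntegral_le hf.integrable hR hz0 hzR
    _ = (2 * ∫ t, |f t|) ^ p * ‖z‖ ^ (-p) := by
        rw [Real.rpow_neg (norm_nonneg z), ← div_eq_mul_inv, ← Real.div_rpow (by positivity)
          (norm_nonneg z)]
        ring_nf

/-- M. Riesz' argument: integrate the inequality
`|w.im| ^ p ≤ A * w.re ^ p - B * (w ^ p).re` at the values `w` of the Cauchy integral, whose
`p`-th power has integral zero along horizontal lines. -/
lemma lintegral_convolution_conjPoissonKernel_le (hp : 1 < p) (hp2 : p ≤ 2) :
    ∃ C : ℝ≥0∞, C ≠ ⊤ ∧ ∀ f : ℝ → ℝ, BoundedCompactSupport f → (∀ t, 0 ≤ f t) → ∀ y, 0 < y →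
      ∫⁻ x, ‖(conjPoissonKernel y ⋆[lsmul ℝ ℝ] f) x‖ₑ ^ p ≤ C * ∫⁻ t, ‖f t‖ₑ ^ p := by
  obtain ⟨A, B, hA, hB, hAB⟩ := exists_abs_im_rpow_le hp hp2
  refine ⟨ENNReal.ofReal A, ENNReal.ofReal_ne_top, fun f hf hf0 y hy => ?_⟩
  have hp0 : 0 < p := by linarith
  rcases (integral_nonneg hf0 : 0 ≤ ∫ t, f t).eq_or_lt with hfi | hfi
  · have hfae : f =ᵐ[volume] 0 := (integral_eq_zero_iff_of_nonneg hf0 hf.integrable).1 hfi.symm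
    have hconv (x : ℝ) : (conjPoissonKernel y ⋆[lsmul ℝ ℝ] f) x = 0 := by
      rw [convolution_lsmul_swap]
      refine integral_eq_zero_of_ae ?_
      filter_upwards [hfae] with t ht
      simp [ht]
    simp [hconv, hp0]
  have hre (z : ℂ) (hz : 0 < z.im) : 0 < (cauchyIntegral f z).re := by
    rw [← Complex.re_add_im z, cauchyIntegral_eq hf.integrable hz]
    simpa using convolution_poissonKernel_pos hf hf0 hfi hz z.re
  have hcont : Continuous fun x : ℝ => cauchyIntegral f (x + y * I) :=
    (differentiableOn_cauchyIntegral hf.integrable).continuousOn.comp_continuous (by fun_prop)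
      fun x => by simpa using hy
  have him_le := lintegral_enorm_im_rpow_le_of_tendsto hp0 hA.le hB.le hAB hcont
    (fun x => hre _ (by simpa using hy)) (tendsto_integral_cauchyIntegral_cpow hf hp hre hy)
  simp only [cauchyIntegral_eq hf.integrable hy, Complex.add_re, Complex.add_im, Complex.ofReal_re,
    Complex.ofReal_im, Complex.re_ofReal_mul, Complex.im_ofReal_mul, Complex.I_re, Complex.I_im,
    mul_zero, mul_one, add_zero, zero_add] at him_le
  refine him_le.trans (mul_le_mul_right ?_ _)
  simpa [lintegral_enorm_poissonKernel hy] using lintegral_enorm_convolution_rpow_le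
    (μ := volume) hp (continuous_poissonKernel hy).measurable hf.measurable

end Riesz

section Hilbert

open scoped Convolution ComplexConjugate Real
open ContinuousLinearMap (lsmul)
open Complex (I)

lemma convolution_linearIsometry_comp {G E F : Type*} [AddGroup G] [MeasurableSpace G]
    {μ : Measure G} [NormedAddCommGroup E] [NormedSpace ℝ E] [CompleteSpace E]
    [NormedAddCommGroup F] [NormedSpace ℝ F] [CompleteSpace F] {K : G → ℝ} (φ : E →ₗᵢ[ℝ] F)
    (f : G → E) (x : G) :
    (K ⋆[lsmul ℝ ℝ, μ] fun t => φ (f t)) x = φ ((K ⋆[lsmul ℝ ℝ, μ] f) x) := by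
  simp only [convolution, ContinuousLinearMap.lsmul_apply, ← map_smul,
    LinearIsometry.integral_comp_comm]

lemma norm_convolution_le {G E : Type*} [AddGroup G] [MeasurableSpace G] {μ : Measure G}
    [NormedAddCommGroup E] [NormedSpace ℝ E] {K : G → ℝ} (hK : Integrable K μ) {f : G → E} {B : ℝ}
    (hB : ∀ t, ‖f t‖ ≤ B) (x : G) : ‖(K ⋆[lsmul ℝ ℝ, μ] f) x‖ ≤ (∫ s, ‖K s‖ ∂μ) * B := by
  rw [← integral_mul_const]
  refine norm_integral_le_of_norm_le (hK.norm.mul_const B) (.of_forall fun s => ?_)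
  rw [ContinuousLinearMap.lsmul_apply, norm_smul]
  gcongr
  exact hB _

section Complexification

variable {G E : Type*} [NormedAddCommGroup G] [MeasurableSpace G] [BorelSpace G]
  [SecondCountableTopology G] {μ : Measure G} [SFinite μ] [IsFiniteMeasureOnCompacts μ]
  [μ.IsAddLeftInvariant] [μ.IsNegInvariant] [NormedAddCommGroup E] [NormedSpace ℝ E]
  [MeasurableSpace E] [BorelSpace E] [SecondCountableTopology E] {K : G → ℝ} {p : ℝ} {C : ℝ≥0∞}

lemma lintegral_enorm_convolution_add_rpow_le (hp : 1 ≤ p) (hK : Continuous K) {f g h : G → E}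
    (hg : BoundedCompactSupport g) (hh : BoundedCompactSupport h) (hf : f = g + h)
    (hgf : ∀ t, ‖g t‖ ≤ ‖f t‖) (hhf : ∀ t, ‖h t‖ ≤ ‖f t‖)
    (hCg : ∫⁻ x, ‖(K ⋆[lsmul ℝ ℝ, μ] g) x‖ₑ ^ p ∂μ ≤ C * ∫⁻ t, ‖g t‖ₑ ^ p ∂μ)
    (hCh : ∫⁻ x, ‖(K ⋆[lsmul ℝ ℝ, μ] h) x‖ₑ ^ p ∂μ ≤ C * ∫⁻ t, ‖h t‖ₑ ^ p ∂μ) :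
    ∫⁻ x, ‖(K ⋆[lsmul ℝ ℝ, μ] f) x‖ₑ ^ p ∂μ ≤ 2 ^ p * C * ∫⁻ t, ‖f t‖ₑ ^ p ∂μ := by
  have mono {φ : G → E} (hφ : ∀ t, ‖φ t‖ ≤ ‖f t‖) :
      C * ∫⁻ t, ‖φ t‖ₑ ^ p ∂μ ≤ C * ∫⁻ t, ‖f t‖ₑ ^ p ∂μ := by
    gcongr with t
    exact enorm_le_iff_norm_le.2 (hφ t)
  rw [mul_assoc]
  refine lintegral_rpow_le_of_le_add hp
    (measurable_convolution hK.measurable hg.measurable).enorm.aemeasurable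
    (.of_forall fun x => ?_) (hCg.trans (mono hgf)) (hCh.trans (mono hhf))
  rw [hf, ((hg.convolutionExists hK).distrib_add (hh.convolutionExists hK))]
  exact enorm_add_le _ _

lemma lintegral_enorm_convolution_rpow_le_of_nonneg (hp : 1 ≤ p) (hK : Continuous K)
    (hC : ∀ f : G → ℝ, BoundedCompactSupport f → (∀ t, 0 ≤ f t) →
      ∫⁻ x, ‖(K ⋆[lsmul ℝ ℝ, μ] f) x‖ₑ ^ p ∂μ ≤ C * ∫⁻ t, ‖f t‖ₑ ^ p ∂μ)
    {f : G → ℝ} (hf : BoundedCompactSupport f) :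
    ∫⁻ x, ‖(K ⋆[lsmul ℝ ℝ, μ] f) x‖ₑ ^ p ∂μ ≤ 2 ^ p * C * ∫⁻ t, ‖f t‖ₑ ^ p ∂μ := by
  have posPart_le (a : ℝ) : ‖a⁺‖ ≤ ‖a‖ := by
    rw [Real.norm_of_nonneg (posPart_nonneg a)]
    exact sup_le (le_abs_self a) (abs_nonneg a)
  have negPart_le (a : ℝ) : ‖a⁻‖ ≤ ‖a‖ := by
    simpa only [posPart_neg, norm_neg] using posPart_le (-a)
  have hg : BoundedCompactSupport fun t => (f t)⁺ := hf.comp (by fun_prop) posPart_le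
  have hh : BoundedCompactSupport fun t => (f t)⁻ := hf.comp (by fun_prop) negPart_le
  let neg : ℝ →ₗᵢ[ℝ] ℝ := (LinearIsometryEquiv.neg ℝ).toLinearIsometry
  refine lintegral_enorm_convolution_add_rpow_le hp hK hg (h := fun t => neg (f t)⁻)
    (hh.comp (by fun_prop) fun a => (neg.norm_map a).le) ?_ (fun t => posPart_le _)
    (fun t => (neg.norm_map _).trans_le (negPart_le _)) (hC _ hg fun t => posPart_nonneg _) ?_
  · ext t
    exact (posPart_sub_negPart (f t)).symm.trans (sub_eq_add_neg _ _)
  · simp only [convolution_linearIsometry_comp, LinearIsometry.enorm_map]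
    exact hC _ hh fun t => negPart_nonneg _

lemma lintegral_enorm_convolution_complex_rpow_le (hp : 1 ≤ p) (hK : Continuous K)
    (hC : ∀ f : G → ℝ, BoundedCompactSupport f →
      ∫⁻ x, ‖(K ⋆[lsmul ℝ ℝ, μ] f) x‖ₑ ^ p ∂μ ≤ C * ∫⁻ t, ‖f t‖ₑ ^ p ∂μ)
    {f : G → ℂ} (hf : BoundedCompactSupport f) :
    ∫⁻ x, ‖(K ⋆[lsmul ℝ ℝ, μ] f) x‖ₑ ^ p ∂μ ≤ 2 ^ p * C * ∫⁻ t, ‖f t‖ₑ ^ p ∂μ := by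
  have hre : BoundedCompactSupport fun t => (f t).re :=
    hf.comp (by fun_prop) Complex.abs_re_le_norm
  have him : BoundedCompactSupport fun t => (f t).im :=
    hf.comp (by fun_prop) Complex.abs_im_le_norm
  let real : ℝ →ₗᵢ[ℝ] ℂ := Complex.ofRealLI
  let imag : ℝ →ₗᵢ[ℝ] ℂ := (rotation ⟨I, by simp [Submonoid.unitSphere]⟩).toLinearIsometry.comp real
  refine lintegral_enorm_convolution_add_rpow_le hp hK (g := fun t => real (f t).re)
    (h := fun t => imag (f t).im) (hre.comp (by fun_prop) fun a => (real.norm_map a).le)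
    (him.comp (by fun_prop) fun a => (imag.norm_map a).le) ?_
    (fun t => (real.norm_map _).trans_le (Complex.abs_re_le_norm _))
    (fun t => (imag.norm_map _).trans_le (Complex.abs_im_le_norm _)) ?_ ?_
  · ext t
    exact (Complex.re_add_im (f t)).symm.trans (by rw [mul_comm]; rfl)
  · simpa only [convolution_linearIsometry_comp, LinearIsometry.enorm_map] using hC _ hre
  · simpa only [convolution_linearIsometry_comp, LinearIsometry.enorm_map] using hC _ him

end Complexification

section Duality

lemma le_rpow_mul_of_le_rpow_mul_rpow {p q : ℝ} (hpq : p.HolderConjugate q) {Y F C : ℝ≥0∞}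
    (hY : Y ≠ ⊤) (h : Y ≤ F ^ (1 / p) * (C * Y) ^ (1 / q)) : Y ≤ C ^ (p / q) * F := by
  have hp : 0 < p := hpq.pos
  have hq : 0 < q := hpq.symm.pos
  rcases eq_or_ne Y 0 with rfl | hY0
  · exact zero_le
  have hYpq : Y = Y ^ (1 / p) * Y ^ (1 / q) := by
    rw [← ENNReal.rpow_add _ _ hY0 hY, one_div, one_div, hpq.inv_add_inv_eq_one, ENNReal.rpow_one]
  have hYp : Y ^ (1 / p) ≤ F ^ (1 / p) * C ^ (1 / q) := by
    rw [ENNReal.mul_rpow_of_nonneg _ _ (by positivity), ← mul_assoc] at h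
    nth_rewrite 1 [hYpq] at h
    exact (ENNReal.mul_le_mul_iff_left (ENNReal.rpow_pos (pos_iff_ne_zero.2 hY0) hY).ne'
      (ENNReal.rpow_ne_top_of_nonneg (by positivity) hY)).1 h
  calc Y = (Y ^ (1 / p)) ^ p := by
        rw [← ENNReal.rpow_mul, one_div_mul_cancel hp.ne', ENNReal.rpow_one]
    _ ≤ (F ^ (1 / p) * C ^ (1 / q)) ^ p := ENNReal.rpow_le_rpow hYp hp.le
    _ = C ^ (p / q) * F := by
        rw [ENNReal.mul_rpow_of_nonneg _ _ hp.le, ← ENNReal.rpow_mul, ← ENNReal.rpow_mul,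
          one_div_mul_cancel hp.ne', ENNReal.rpow_one, one_div_mul_eq_div, mul_comm]

lemma norm_conj_mul_norm_rpow {p : ℝ} (hp : p ≠ 1) (z : ℂ) :
    ‖conj z * ((‖z‖ ^ (p - 2) : ℝ) : ℂ)‖ = ‖z‖ ^ (p - 1) := by
  rw [norm_mul, RCLike.norm_conj, Complex.norm_real, Real.norm_of_nonneg (by positivity)]
  rcases eq_or_ne z 0 with rfl | hz
  · rw [norm_zero, zero_mul, Real.zero_rpow (sub_ne_zero.2 hp)]
  · rw [mul_comm, ← Real.rpow_add_one (norm_ne_zero_iff.2 hz)]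
    congr 1
    ring

lemma mul_conj_mul_norm_rpow {p : ℝ} (hp : p ≠ 0) (z : ℂ) :
    z * (conj z * ((‖z‖ ^ (p - 2) : ℝ) : ℂ)) = ((‖z‖ ^ p : ℝ) : ℂ) := by
  rw [← mul_assoc, Complex.mul_conj, ← Complex.ofReal_mul, Complex.normSq_eq_norm_sq]
  congr 1
  rcases eq_or_ne z 0 with rfl | hz
  · simp [Real.zero_rpow hp]
  · rw [mul_comm, ← Real.rpow_add_natCast (norm_ne_zero_iff.2 hz)]
    congr 1
    push_cast
    ring

lemma exists_mul_eq_norm_rpow {α : Type*} [MeasurableSpace α] {p q : ℝ}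
    (hpq : p.HolderConjugate q) {F : α → ℂ} (hF : Measurable F) {M : ℝ} (hM : ∀ x, ‖F x‖ ≤ M) :
    ∃ g : α → ℂ, Measurable g ∧ (∃ B, ∀ x, ‖g x‖ ≤ B) ∧ (∀ x, ‖g x‖ₑ ^ q = ‖F x‖ₑ ^ p) ∧
      ∀ x, F x * g x = ((‖F x‖ ^ p : ℝ) : ℂ) := by
  have norm_g (x : α) : ‖conj (F x) * ((‖F x‖ ^ (p - 2) : ℝ) : ℂ)‖ = ‖F x‖ ^ (p - 1) :=
    norm_conj_mul_norm_rpow hpq.lt.ne' _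
  refine ⟨fun x => conj (F x) * ((‖F x‖ ^ (p - 2) : ℝ) : ℂ), ?_, ⟨M ^ (p - 1), fun x => ?_⟩,
    fun x => ?_, fun x => mul_conj_mul_norm_rpow hpq.pos.ne' _⟩
  · exact (Complex.continuous_conj.measurable.comp hF).mul (by fun_prop)
  · rw [norm_g]
    exact Real.rpow_le_rpow (norm_nonneg _) (hM x) hpq.sub_one_pos.le
  · rw [← ofReal_norm, norm_g, ← ENNReal.ofReal_rpow_of_nonneg (norm_nonneg _)
      hpq.sub_one_pos.le, ofReal_norm, ← ENNReal.rpow_mul, hpq.sub_one_mul_conj]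

lemma lintegral_enorm_rpow_eq_enorm_integral {α : Type*} [MeasurableSpace α] {μ : Measure α}
    {p : ℝ} (hp : 0 ≤ p) {F : α → ℂ} (hF : AEMeasurable F μ) (htop : ∫⁻ x, ‖F x‖ₑ ^ p ∂μ ≠ ⊤) :
    ∫⁻ x, ‖F x‖ₑ ^ p ∂μ = ‖∫ x, ((‖F x‖ ^ p : ℝ) : ℂ) ∂μ‖ₑ := by
  have henorm (x : α) : ‖F x‖ₑ ^ p = ENNReal.ofReal (‖F x‖ ^ p) := by
    rw [← ENNReal.ofReal_rpow_of_nonneg (norm_nonneg _) hp, ofReal_norm]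
  simp only [henorm] at htop ⊢
  have hint : Integrable (fun x => ‖F x‖ ^ p) μ :=
    (lintegral_ofReal_ne_top_iff_integrable (hF.norm.pow_const p).aestronglyMeasurable
      (.of_forall fun x => by positivity)).1 htop
  rw [integral_complex_ofReal, ← ofReal_norm, Complex.norm_real,
    Real.norm_of_nonneg (integral_nonneg fun x => by positivity),
    ofReal_integral_eq_lintegral_ofReal hint (.of_forall fun x => by positivity)]

variable {G : Type*} [NormedAddCommGroup G] [MeasurableSpace G] [BorelSpace G]
  [SecondCountableTopology G] {μ : Measure G} [SFinite μ] [μ.IsAddLeftInvariant]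
  [μ.IsNegInvariant] {K : G → ℝ}

lemma integral_convolution_mul_eq_neg (hK : Integrable K μ) (hK_odd : ∀ s, K (-s) = -K s)
    {f g : G → ℂ} (hf : Integrable f μ) (hg : Measurable g) (hg_bdd : ∃ B, ∀ x, ‖g x‖ ≤ B) :
    ∫ x, (K ⋆[lsmul ℝ ℝ, μ] f) x * g x ∂μ = -∫ t, f t * (K ⋆[lsmul ℝ ℝ, μ] g) t ∂μ := by
  obtain ⟨B, hB⟩ := hg_bdd
  have hint : Integrable (fun z : G × G => (K (z.1 - z.2) • f z.2) * g z.1) (μ.prod μ) := by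
    refine Integrable.mul_bdd (c := B) ?_ (hg.comp measurable_fst).aestronglyMeasurable
      (.of_forall fun _ => hB _)
    simpa using hf.convolution_integrand ((lsmul ℝ ℝ).flip : ℂ →L[ℝ] ℝ →L[ℝ] ℂ) hK
  simp only [convolution_lsmul_swap, ← integral_mul_const, ← integral_const_mul]
  rw [integral_integral_swap hint, ← integral_neg]
  congr 1 with t
  rw [← integral_neg]
  congr 1 with x
  rw [← neg_sub t x, hK_odd, neg_smul, neg_mul, smul_mul_assoc, mul_smul_comm]

lemma lintegral_enorm_convolution_rpow_le_of_holderConjugate [IsFiniteMeasureOnCompacts μ]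
    {p q : ℝ} (hpq : p.HolderConjugate q) (hK_meas : Measurable K) (hK : Integrable K μ)
    (hK_odd : ∀ s, K (-s) = -K s) {C : ℝ≥0∞}
    (hC : ∀ g : G → ℂ, Measurable g →
      ∫⁻ x, ‖(K ⋆[lsmul ℝ ℝ, μ] g) x‖ₑ ^ q ∂μ ≤ C * ∫⁻ t, ‖g t‖ₑ ^ q ∂μ)
    {f : G → ℂ} (hf : BoundedCompactSupport f) :
    ∫⁻ x, ‖(K ⋆[lsmul ℝ ℝ, μ] f) x‖ₑ ^ p ∂μ ≤ C ^ (p / q) * ∫⁻ t, ‖f t‖ₑ ^ p ∂μ := by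
  have hp : 0 < p := hpq.pos
  have hKf : Measurable (K ⋆[lsmul ℝ ℝ, μ] f) := measurable_convolution hK_meas hf.measurable
  have hfin : ∫⁻ x, ‖(K ⋆[lsmul ℝ ℝ, μ] f) x‖ₑ ^ p ∂μ ≠ ⊤ :=
    ne_top_of_le_ne_top (ENNReal.mul_ne_top (ENNReal.rpow_ne_top_of_nonneg hp.le hK.2.ne)
      (hf.lintegral_rpow_ne_top hp)) (lintegral_enorm_convolution_rpow_le hpq.lt hK_meas
        hf.measurable)
  obtain ⟨B, hB⟩ := hf.bounded
  obtain ⟨g, hg, hg_bdd, hgq, hg_mul⟩ :=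
    exists_mul_eq_norm_rpow hpq hKf (norm_convolution_le hK hB)
  refine le_rpow_mul_of_le_rpow_mul_rpow hpq hfin ?_
  calc ∫⁻ x, ‖(K ⋆[lsmul ℝ ℝ, μ] f) x‖ₑ ^ p ∂μ
      = ‖∫ x, (K ⋆[lsmul ℝ ℝ, μ] f) x * g x ∂μ‖ₑ := by
        simp only [hg_mul]
        exact lintegral_enorm_rpow_eq_enorm_integral hp.le hKf.aemeasurable hfin
    _ = ‖∫ t, f t * (K ⋆[lsmul ℝ ℝ, μ] g) t ∂μ‖ₑ := by
        rw [integral_convolution_mul_eq_neg hK hK_odd hf.integrable hg hg_bdd, enorm_neg]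
    _ ≤ ∫⁻ t, ‖f t‖ₑ * ‖(K ⋆[lsmul ℝ ℝ, μ] g) t‖ₑ ∂μ := by
        simpa only [enorm_mul] using enorm_integral_le_lintegral_enorm (μ := μ)
          fun t => f t * (K ⋆[lsmul ℝ ℝ, μ] g) t
    _ ≤ (∫⁻ t, ‖f t‖ₑ ^ p ∂μ) ^ (1 / p) *
          (∫⁻ t, ‖(K ⋆[lsmul ℝ ℝ, μ] g) t‖ₑ ^ q ∂μ) ^ (1 / q) :=
        ENNReal.lintegral_mul_le_Lp_mul_Lq μ hpq hf.measurable.enorm.aemeasurable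
          (measurable_convolution hK_meas hg).enorm.aemeasurable
    _ ≤ (∫⁻ t, ‖f t‖ₑ ^ p ∂μ) ^ (1 / p) *
          (C * ∫⁻ x, ‖(K ⋆[lsmul ℝ ℝ, μ] f) x‖ₑ ^ p ∂μ) ^ (1 / q) := by
        gcongr
        · exact one_div_nonneg.2 hpq.symm.nonneg
        · exact (hC g hg).trans_eq (by simp only [hgq])

end Duality

section TruncatedHilbertKernel

variable {y Y p : ℝ}

/-- The kernel `1 / (π s)` of the Hilbert transform, smoothly truncated to `y ≲ |s| ≲ Y` when
`y ≤ Y`. -/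
noncomputable def truncatedHilbertKernel (y Y s : ℝ) : ℝ :=
  conjPoissonKernel y s - conjPoissonKernel Y s

lemma truncatedHilbertKernel_neg (y Y s : ℝ) :
    truncatedHilbertKernel y Y (-s) = -truncatedHilbertKernel y Y s := by
  simp only [truncatedHilbertKernel, conjPoissonKernel, neg_sq, neg_div]
  ring

lemma continuous_truncatedHilbertKernel (hy : 0 < y) (hY : 0 < Y) :
    Continuous (truncatedHilbertKernel y Y) :=
  (continuous_conjPoissonKernel hy).sub (continuous_conjPoissonKernel hY)

lemma abs_conjPoissonKernel_le (hy : 0 < y) (s : ℝ) : |conjPoissonKernel y s| ≤ 1 / y := by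
  unfold conjPoissonKernel
  rw [abs_div, abs_of_pos (by positivity : 0 < π * (s ^ 2 + y ^ 2)),
    div_le_div_iff₀ (by positivity) hy, one_mul]
  calc |s| * y ≤ 1 * (s ^ 2 + y ^ 2) := by nlinarith [sq_nonneg (|s| - y), sq_abs s]
    _ ≤ π * (s ^ 2 + y ^ 2) := by
        gcongr
        linarith [Real.pi_gt_three]

lemma integrable_truncatedHilbertKernel (hy : 0 < y) (hY : 0 < Y) :
    Integrable (truncatedHilbertKernel y Y) := by
  have h : truncatedHilbertKernel y Y =
      fun s => poissonKernel y s * (π * (Y ^ 2 - y ^ 2) / y * conjPoissonKernel Y s) := by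
    ext s
    unfold truncatedHilbertKernel poissonKernel conjPoissonKernel
    field_simp
    ring
  rw [h]
  refine (integrable_poissonKernel hy).mul_bdd (c := |π * (Y ^ 2 - y ^ 2) / y| * (1 / Y))
    ((continuous_conjPoissonKernel hY).const_mul _).aestronglyMeasurable (.of_forall fun s => ?_)
  rw [norm_mul, Real.norm_eq_abs, Real.norm_eq_abs]
  gcongr
  exact abs_conjPoissonKernel_le hY s

lemma enorm_convolution_truncatedHilbertKernel_le (hy : 0 < y) (hY : 0 < Y) {f : ℝ → ℂ}
    (hf : BoundedCompactSupport f) (x : ℝ) :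
    ‖(truncatedHilbertKernel y Y ⋆[lsmul ℝ ℝ] f) x‖ₑ ≤
      ‖(conjPoissonKernel y ⋆[lsmul ℝ ℝ] f) x‖ₑ + ‖(conjPoissonKernel Y ⋆[lsmul ℝ ℝ] f) x‖ₑ := by
  have hint {t : ℝ} (ht : 0 < t) : Integrable fun s => conjPoissonKernel t s • f (x - s) :=
    hf.convolutionExists (μ := volume) (continuous_conjPoissonKernel ht) x
  have h : (truncatedHilbertKernel y Y ⋆[lsmul ℝ ℝ] f) x =
      (conjPoissonKernel y ⋆[lsmul ℝ ℝ] f) x - (conjPoissonKernel Y ⋆[lsmul ℝ ℝ] f) x := by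
    simp only [convolution, ContinuousLinearMap.lsmul_apply, truncatedHilbertKernel, sub_smul]
    exact integral_sub (hint hy) (hint hY)
  rw [h]
  exact enorm_sub_le

lemma lintegral_convolution_truncatedHilbertKernel_le_of_le_two (hp : 1 < p) (hp2 : p ≤ 2) :
    ∃ C ≠ ⊤, ∀ f : ℝ → ℂ, Measurable f → ∀ y Y, 0 < y → 0 < Y →
      ∫⁻ x, ‖(truncatedHilbertKernel y Y ⋆[lsmul ℝ ℝ] f) x‖ₑ ^ p ≤ C * ∫⁻ t, ‖f t‖ₑ ^ p := by
  obtain ⟨C, hC, hC_le⟩ := lintegral_convolution_conjPoissonKernel_le hp hp2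
  refine ⟨2 ^ p * (2 ^ p * (2 ^ p * C)), by finiteness [hp], fun f hf y Y hy hY => ?_⟩
  have hK := continuous_truncatedHilbertKernel hy hY
  refine lintegral_enorm_convolution_rpow_le_of_boundedCompactSupport hK.measurable
    (fun f hf => ?_) (by linarith) hf
  have bound {t : ℝ} (ht : 0 < t) : ∫⁻ x, ‖(conjPoissonKernel t ⋆[lsmul ℝ ℝ] f) x‖ₑ ^ p ≤
      2 ^ p * (2 ^ p * C) * ∫⁻ t, ‖f t‖ₑ ^ p :=
    have hQ := continuous_conjPoissonKernel ht
    lintegral_enorm_convolution_complex_rpow_le hp.le hQ (fun g hg =>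
      lintegral_enorm_convolution_rpow_le_of_nonneg hp.le hQ
        (fun g hg hg0 => hC_le g hg hg0 t ht) hg)
      hf
  rw [mul_assoc]
  exact lintegral_rpow_le_of_le_add hp.le (measurable_convolution
    (continuous_conjPoissonKernel hy).measurable hf.measurable).enorm.aemeasurable
    (.of_forall (enorm_convolution_truncatedHilbertKernel_le hy hY hf)) (bound hy) (bound hY)

lemma lintegral_convolution_truncatedHilbertKernel_le (hp : 1 < p) :
    ∃ C ≠ ⊤, ∀ f : ℝ → ℂ, Measurable f → ∀ y Y, 0 < y → 0 < Y →
      ∫⁻ x, ‖(truncatedHilbertKernel y Y ⋆[lsmul ℝ ℝ] f) x‖ₑ ^ p ≤ C * ∫⁻ t, ‖f t‖ₑ ^ p := by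
  rcases le_or_gt p 2 with hp2 | hp2
  · exact lintegral_convolution_truncatedHilbertKernel_le_of_le_two hp hp2
  have hpq := Real.HolderConjugate.conjExponent hp
  have hq2 : p.conjExponent ≤ 2 := by
    rw [Real.conjExponent, div_le_iff₀ (by linarith)]
    linarith
  obtain ⟨C, hC, hC_le⟩ := lintegral_convolution_truncatedHilbertKernel_le_of_le_two hpq.symm.lt hq2
  refine ⟨C ^ (p / p.conjExponent), ENNReal.rpow_ne_top_of_nonneg
    (div_nonneg hpq.nonneg hpq.symm.nonneg) hC, fun f hf y Y hy hY => ?_⟩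
  have hK := (continuous_truncatedHilbertKernel hy hY).measurable
  refine lintegral_enorm_convolution_rpow_le_of_boundedCompactSupport hK
    (fun g hg => ?_) (by linarith) hf
  exact lintegral_enorm_convolution_rpow_le_of_holderConjugate hpq hK
    (integrable_truncatedHilbertKernel hy hY) (truncatedHilbertKernel_neg y Y)
    (fun h hh => hC_le h hh y Y hy hY) hg

end TruncatedHilbertKernel

end Hilbert

section Rotations

open ContinuousLinearMap (lsmul)
open Complex (I)
open FourierTransform
open scoped Convolution Real RealInnerProductSpace ComplexConjugate

/-- The convolution of a function on the plane with a kernel on the line, in the direction `e`. -/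
noncomputable def directionalConvolution (K : ℝ → ℝ) (e : ℂ) (g : ℂ → ℂ) (x : ℂ) : ℂ :=
  ∫ s : ℝ, K s • g (x - s * e)

/-- The average of the directional convolutions with `K` against `exp (-iθ)`. When `K` approximates
the Hilbert kernel this approximates a multiple of the complex Riesz transform. -/
noncomputable def rotationAverage (K : ℝ → ℝ) (g : ℂ → ℂ) (x : ℂ) : ℂ :=
  ∫ θ : ℝ in Ioc 0 (2 * π), Circle.exp (-θ) * directionalConvolution K (Circle.exp θ) g x

/-- The Fourier multiplier of `rotationAverage K`, where `h` is the Fourier transform of `K`. -/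
noncomputable def angularMultiplier (h : ℝ → ℂ) (ξ : ℂ) : ℂ :=
  ∫ θ : ℝ in Ioc 0 (2 * π), Circle.exp (-θ) * h ⟪(Circle.exp θ : ℂ), ξ⟫

lemma lintegral_complex_eq_lintegral_lintegral {φ : ℂ → ℝ≥0∞} (hφ : Measurable φ) :
    ∫⁻ z, φ z = ∫⁻ b : ℝ, ∫⁻ a : ℝ, φ (a + b * I) := by
  rw [← Complex.volume_preserving_equiv_real_prod.symm.lintegral_comp hφ,
    Measure.volume_eq_prod, lintegral_prod_symm _ (by fun_prop)]
  simp [Complex.measurableEquivRealProd_symm_apply, Complex.mk_eq_add_mul_I]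

lemma lintegral_circle_mul_left (φ : ℂ → ℝ≥0∞) (e : Circle) : ∫⁻ z, φ (e * z) = ∫⁻ z, φ z :=
  (rotation e).measurePreserving.lintegral_comp_emb
    (rotation e).toHomeomorph.measurableEmbedding φ

section Bounds

variable {p : ℝ} {K : ℝ → ℝ} {g : ℂ → ℂ} {C : ℝ≥0∞}

lemma measurable_directionalConvolution (hK : Measurable K) (hg : Measurable g) :
    Measurable fun q : ℂ × ℂ => directionalConvolution K q.1 g q.2 := by
  have h : StronglyMeasurable fun q : (ℂ × ℂ) × ℝ => K q.2 • g (q.1.2 - q.2 * q.1.1) :=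
    Measurable.stronglyMeasurable (by fun_prop)
  exact h.integral_prod_right'.measurable

lemma measurable_circleExp_directionalConvolution (hK : Measurable K) (hg : Measurable g) :
    Measurable fun q : ℂ × ℝ => directionalConvolution K (Circle.exp q.2) g q.1 :=
  (measurable_directionalConvolution hK hg).comp
    (f := fun q : ℂ × ℝ => ((Circle.exp q.2 : ℂ), q.1)) (by fun_prop)

lemma measurable_rotationAverage (hK : Measurable K) (hg : Measurable g) :
    Measurable (rotationAverage K g) := by
  have h : StronglyMeasurable fun q : ℂ × ℝ =>
      (Circle.exp (-q.2) : ℂ) * directionalConvolution K (Circle.exp q.2) g q.1 :=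
    (Measurable.mul (by fun_prop)
      (measurable_circleExp_directionalConvolution hK hg)).stronglyMeasurable
  exact h.integral_prod_right'.measurable

lemma lintegral_enorm_directionalConvolution_rpow_le (hK : Measurable K)
    (hKC : ∀ f : ℝ → ℂ, Measurable f →
      ∫⁻ x, ‖(K ⋆[lsmul ℝ ℝ] f) x‖ₑ ^ p ≤ C * ∫⁻ t, ‖f t‖ₑ ^ p)
    (e : Circle) (hg : Measurable g) :
    ∫⁻ x, ‖directionalConvolution K e g x‖ₑ ^ p ≤ C * ∫⁻ x, ‖g x‖ₑ ^ p := by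
  have hmeas : Measurable fun x => ‖directionalConvolution K e g (e * x)‖ₑ ^ p :=
    ((measurable_directionalConvolution hK hg).comp
      (f := fun x : ℂ => ((e : ℂ), (e * x : ℂ))) (by fun_prop)).enorm.pow_const p
  have hline : ∀ a b : ℝ, directionalConvolution K e g (e * (a + b * I)) =
      (K ⋆[lsmul ℝ ℝ] fun t : ℝ => g (e * (t + b * I))) a := fun a b => by
    refine integral_congr_ae (.of_forall fun s => ?_)
    simp only [ContinuousLinearMap.lsmul_apply]
    congr 2
    push_cast
    ring
  rw [← lintegral_circle_mul_left _ e, ← lintegral_circle_mul_left (fun x => ‖g x‖ₑ ^ p) e,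
    lintegral_complex_eq_lintegral_lintegral hmeas,
    lintegral_complex_eq_lintegral_lintegral (by fun_prop), ← lintegral_const_mul _
      (Measurable.lintegral_prod_right (f := fun b a : ℝ => ‖g (e * (a + b * I))‖ₑ ^ p)
        (by fun_prop))]
  refine lintegral_mono fun b => ?_
  simp only [hline]
  exact hKC _ (by fun_prop)

lemma lintegral_enorm_rotationAverage_rpow_le (hp : 1 < p) (hK : Measurable K)
    (hKC : ∀ f : ℝ → ℂ, Measurable f →
      ∫⁻ x, ‖(K ⋆[lsmul ℝ ℝ] f) x‖ₑ ^ p ≤ C * ∫⁻ t, ‖f t‖ₑ ^ p)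
    (hg : Measurable g) :
    ∫⁻ x, ‖rotationAverage K g x‖ₑ ^ p ≤
      ENNReal.ofReal (2 * π) ^ p * (C * ∫⁻ x, ‖g x‖ₑ ^ p) := by
  have hle : ∀ x, ‖rotationAverage K g x‖ₑ ≤
      ∫⁻ θ : ℝ in Ioc 0 (2 * π), 1 * ‖directionalConvolution K (Circle.exp θ) g x‖ₑ := fun x => by
    refine (enorm_integral_le_lintegral_enorm _).trans_eq (lintegral_congr fun θ => ?_)
    rw [enorm_mul, ← ofReal_norm, Circle.norm_coe, ENNReal.ofReal_one]
  calc ∫⁻ x, ‖rotationAverage K g x‖ₑ ^ p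
      ≤ ∫⁻ x, (∫⁻ θ : ℝ in Ioc 0 (2 * π),
          1 * ‖directionalConvolution K (Circle.exp θ) g x‖ₑ) ^ p :=
        lintegral_mono fun x => ENNReal.rpow_le_rpow (hle x) (by linarith)
    _ ≤ (∫⁻ _ in Ioc 0 (2 * π), 1) ^ p * (C * ∫⁻ x, ‖g x‖ₑ ^ p) :=
        lintegral_lintegral_mul_rpow_le hp measurable_const
          (measurable_circleExp_directionalConvolution hK hg).enorm
          fun θ => lintegral_enorm_directionalConvolution_rpow_le hK hKC (Circle.exp θ) hg
    _ = ENNReal.ofReal (2 * π) ^ p * (C * ∫⁻ x, ‖g x‖ₑ ^ p) := by simp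

end Bounds

section Multiplier

variable {h : ℝ → ℂ}

lemma measurable_circleExp_inner (hh : Measurable h) :
    Measurable fun q : ℂ × ℝ => (Circle.exp (-q.2) : ℂ) * h ⟪(Circle.exp q.2 : ℂ), q.1⟫ :=
  .mul (by fun_prop) (hh.comp (Continuous.measurable (by fun_prop)))

lemma measurable_angularMultiplier (hh : Measurable h) : Measurable (angularMultiplier h) :=
  (measurable_circleExp_inner hh).stronglyMeasurable.integral_prod_right'.measurable

lemma norm_angularMultiplier_le {B : ℝ} (hB : ∀ τ, ‖h τ‖ ≤ B) (ξ : ℂ) :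
    ‖angularMultiplier h ξ‖ ≤ 2 * π * B := by
  have hbound := norm_setIntegral_le_of_norm_le_const (μ := volume) (s := Ioc 0 (2 * π))
    (f := fun θ : ℝ => (Circle.exp (-θ) : ℂ) * h ⟪(Circle.exp θ : ℂ), ξ⟫) measure_Ioc_lt_top
    fun θ _ => by simpa using hB _
  simpa [angularMultiplier, Real.pi_nonneg, mul_comm B] using hbound

variable {K : ℝ → ℝ} {a : ℂ → ℂ}

lemma directionalConvolution_fourierInv (hK : Integrable K) (ha : Integrable a) (e x : ℂ) :
    directionalConvolution K e (𝓕⁻ a) x =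
      𝓕⁻ (fun ξ => 𝓕 (fun s => (K s : ℂ)) ⟪e, ξ⟫ * a ξ) x := by
  have hprod : Integrable (Function.uncurry fun (s : ℝ) (ξ : ℂ) =>
      K s • (𝐞 ⟪ξ, x - s * e⟫ • a ξ)) (volume.prod volume) := by
    have h : Integrable (fun q : ℝ × ℂ => (K q.1 : ℂ) * a q.2) (volume.prod volume) :=
      (hK.ofReal (𝕜 := ℂ)).mul_prod ha
    refine (h.bdd_mul (c := 1) (f := fun q : ℝ × ℂ => (𝐞 ⟪q.2, x - q.1 * e⟫ : ℂ))
      (Continuous.aestronglyMeasurable (by fun_prop)) (.of_forall fun q =>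
        (Circle.norm_coe _).le)).congr (.of_forall fun q => ?_)
    simp only [Function.uncurry, Circle.smul_def, Complex.real_smul, smul_eq_mul]
    ring
  simp only [directionalConvolution, Real.fourierInv_eq, ← integral_smul]
  rw [integral_integral_swap hprod]
  refine integral_congr_ae (.of_forall fun ξ => ?_)
  simp only [Real.fourier_real_eq, Circle.smul_def, smul_eq_mul, Complex.real_smul,
    ← integral_const_mul, ← integral_mul_const]
  refine integral_congr_ae (.of_forall fun s => ?_)
  have hinner : ⟪ξ, x - s * e⟫ = ⟪ξ, x⟫ + -(s * ⟪e, ξ⟫) := by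
    rw [inner_sub_right, ← Complex.real_smul, inner_smul_right, real_inner_comm e,
      sub_eq_add_neg]
  simp only [hinner, AddChar.map_add_eq_mul, Circle.coe_mul]
  ring

lemma rotationAverage_fourierInv (hK : Integrable K) (ha : Integrable a) (x : ℂ) :
    rotationAverage K (𝓕⁻ a) x =
      𝓕⁻ (fun ξ => angularMultiplier (𝓕 fun s => (K s : ℂ)) ξ * a ξ) x := by
  set h : ℝ → ℂ := 𝓕 fun s => (K s : ℂ)
  have hmeas : Measurable h := (VectorFourier.fourierIntegral_continuous Real.continuous_fourierChar
    (by exact (innerSL ℝ).continuous₂) hK.ofReal).measurable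
  have hbound : ∀ τ, ‖h τ‖ ≤ ∫ s, ‖(K s : ℂ)‖ := fun τ =>
    VectorFourier.norm_fourierIntegral_le_integral_norm _ _ _ _ τ
  have hprod : Integrable (Function.uncurry fun (θ : ℝ) (ξ : ℂ) =>
      (Circle.exp (-θ) : ℂ) * (𝐞 ⟪ξ, x⟫ • (h ⟪(Circle.exp θ : ℂ), ξ⟫ * a ξ)))
      ((volume.restrict (Ioc 0 (2 * π))).prod volume) := by
    have ha1 := (integrable_const (μ := volume.restrict (Ioc 0 (2 * π))) (1 : ℂ)).mul_prod ha
    refine (ha1.bdd_mul (c := ∫ s, ‖(K s : ℂ)‖) (f := fun q : ℝ × ℂ => (𝐞 ⟪q.2, x⟫ : ℂ) *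
        ((Circle.exp (-q.1) : ℂ) * h ⟪(Circle.exp q.1 : ℂ), q.2⟫)) ?_
      (.of_forall fun q => ?_)).congr (.of_forall fun q => ?_)
    · exact ((Continuous.measurable (by fun_prop)).mul ((measurable_circleExp_inner hmeas).comp
        measurable_swap)).aestronglyMeasurable
    · simpa only [norm_mul, Circle.norm_coe, one_mul] using hbound _
    · simp only [Function.uncurry, Circle.smul_def, smul_eq_mul]
      ring
  simp only [rotationAverage, directionalConvolution_fourierInv hK ha, Real.fourierInv_eq,
    ← integral_const_mul]
  rw [integral_integral_swap hprod]
  refine integral_congr_ae (.of_forall fun ξ => ?_)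
  simp only [angularMultiplier, Circle.smul_def, smul_eq_mul, ← integral_const_mul,
    ← integral_mul_const]
  refine integral_congr_ae (.of_forall fun θ => ?_)
  ring

end Multiplier

end Rotations

section Multipliers

open Complex (I)
open FourierTransform
open scoped Real RealInnerProductSpace ComplexConjugate

section HilbertMultiplier

variable {y Y : ℝ}

lemma integral_Ioi_fourierChar_smul_exp (hy : 0 < y) (w : ℝ) :
    IntegrableOn (fun v : ℝ => 𝐞 (-(v * w)) • (Real.exp (-(2 * π * y * v)) : ℂ)) (Ioi 0) ∧
    ∫ v in Ioi (0 : ℝ), 𝐞 (-(v * w)) • (Real.exp (-(2 * π * y * v)) : ℂ) =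
      1 / (2 * π * (y + w * I)) := by
  have hre : (-(2 * π * (y + w * I)) : ℂ).re < 0 := by
    have : (-(2 * π * (y + w * I)) : ℂ).re = -(2 * π * y) := by simp
    rw [this, neg_lt_zero]
    positivity
  have heq : (fun v : ℝ => 𝐞 (-(v * w)) • (Real.exp (-(2 * π * y * v)) : ℂ)) =
      fun v : ℝ => Complex.exp (-(2 * π * (y + w * I)) * v) := by
    ext v
    rw [Circle.smul_def, Real.fourierChar_apply, smul_eq_mul, Complex.ofReal_exp,
      ← Complex.exp_add]
    congr 1
    push_cast
    ring
  rw [heq, integral_exp_mul_complex_Ioi hre 0]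
  exact ⟨integrableOn_exp_mul_complex_Ioi hre 0, by simp⟩

lemma integral_Iio_fourierChar_smul_exp (hy : 0 < y) (w : ℝ) :
    IntegrableOn (fun v : ℝ => 𝐞 (-(v * w)) • (Real.exp (2 * π * y * v) : ℂ)) (Iio 0) ∧
    ∫ v in Iio (0 : ℝ), 𝐞 (-(v * w)) • (Real.exp (2 * π * y * v) : ℂ) =
      1 / (2 * π * (y - w * I)) := by
  obtain ⟨hint, heq⟩ := integral_Ioi_fourierChar_smul_exp hy (-w)
  set f : ℝ → ℂ := fun v => 𝐞 (-(v * w)) • (Real.exp (2 * π * y * v) : ℂ)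
  have hf : (fun v : ℝ => 𝐞 (-(v * -w)) • (Real.exp (-(2 * π * y * v)) : ℂ)) =
      fun v => f (-v) := by
    ext v
    simp only [f, neg_mul, mul_neg]
  rw [hf] at hint heq
  constructor
  · simpa using (show IntegrableOn (fun v => f (-v)) (Ioi (-0)) by simpa using hint).comp_neg_Iio
  · rw [← integral_Iic_eq_integral_Iio, ← neg_zero, ← integral_comp_neg_Ioi, heq]
    push_cast
    ring

lemma fourier_sign_mul_exp (hy : 0 < y) :
    Integrable (fun v : ℝ => (Real.sign v * Real.exp (-(2 * π * y * |v|)) : ℂ)) ∧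
    ∀ w, 𝓕 (fun v : ℝ => (Real.sign v * Real.exp (-(2 * π * y * |v|)) : ℂ)) w =
      -I * conjPoissonKernel y w := by
  set f : ℝ → ℂ := fun v => Real.sign v * Real.exp (-(2 * π * y * |v|))
  have hpos (w : ℝ) : EqOn (fun v : ℝ => 𝐞 (-(v * w)) • f v)
      (fun v => 𝐞 (-(v * w)) • (Real.exp (-(2 * π * y * v)) : ℂ)) (Ioi 0) := fun v hv => by
    simp only [f, Real.sign_of_pos hv, abs_of_pos (mem_Ioi.1 hv), Complex.ofReal_one, one_mul]
  have hneg (w : ℝ) : EqOn (fun v : ℝ => 𝐞 (-(v * w)) • f v)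
      (fun v => -(𝐞 (-(v * w)) • (Real.exp (2 * π * y * v) : ℂ))) (Iio 0) := fun v hv => by
    simp only [f, Real.sign_of_neg hv, abs_of_neg (mem_Iio.1 hv), Complex.ofReal_neg,
      Complex.ofReal_one, neg_one_mul, smul_neg, mul_neg, neg_neg]
  have hint_pos (w : ℝ) : IntegrableOn (fun v : ℝ => 𝐞 (-(v * w)) • f v) (Ioi 0) :=
    (integral_Ioi_fourierChar_smul_exp hy w).1.congr_fun (hpos w).symm measurableSet_Ioi
  have hint_neg (w : ℝ) : IntegrableOn (fun v : ℝ => 𝐞 (-(v * w)) • f v) (Iic 0) :=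
    (integrableOn_Iic_iff_integrableOn_Iio).2
      ((integral_Iio_fourierChar_smul_exp hy w).1.neg.congr_fun (hneg w).symm measurableSet_Iio)
  refine ⟨?_, fun w => ?_⟩
  · have h := (hint_neg 0).union (hint_pos 0)
    rw [Iic_union_Ioi, integrableOn_univ] at h
    simpa only [mul_zero, neg_zero, AddChar.map_zero_eq_one, one_smul] using h
  have hden : (w ^ 2 + y ^ 2 : ℂ) = (y + w * I) * (y - w * I) := by
    linear_combination (w : ℂ) ^ 2 * Complex.I_sq
  have hne (s : ℝ) : (y + s * I : ℂ) ≠ 0 := fun h => hy.ne' (by simpa using congrArg Complex.re h)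
  have hne_neg : (y - w * I : ℂ) ≠ 0 := by simpa [sub_eq_add_neg] using hne (-w)
  rw [Real.fourier_real_eq, ← intervalIntegral.integral_Iic_add_Ioi (hint_neg w) (hint_pos w),
    integral_Iic_eq_integral_Iio, setIntegral_congr_fun measurableSet_Ioi (hpos w),
    setIntegral_congr_fun measurableSet_Iio (hneg w), integral_neg,
    (integral_Ioi_fourierChar_smul_exp hy w).2, (integral_Iio_fourierChar_smul_exp hy w).2,
    conjPoissonKernel]
  push_cast
  rw [hden]
  field_simp [hne w, hne_neg]
  ring

/-- The Fourier transform of `truncatedHilbertKernel y Y`. -/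
noncomputable def truncatedHilbertMultiplier (y Y τ : ℝ) : ℂ :=
  -I * (Real.sign τ * (Real.exp (-(2 * π * y * |τ|)) - Real.exp (-(2 * π * Y * |τ|))) : ℝ)

lemma continuous_sign_mul_comp_abs {g : ℝ → ℝ} (hg : Continuous g) (hg0 : g 0 = 0) :
    Continuous fun τ => Real.sign τ * g |τ| := by
  have h : (fun τ => Real.sign τ * g |τ|) = fun τ => g (max τ 0) - g (max (-τ) 0) := by
    ext τ
    rcases lt_trichotomy τ 0 with h | rfl | h
    · simp [Real.sign_of_neg h, abs_of_neg h, h.le, hg0]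
    · simp
    · simp [Real.sign_of_pos h, abs_of_pos h, h.le, hg0]
  rw [h]
  fun_prop

lemma continuous_truncatedHilbertMultiplier (y Y : ℝ) :
    Continuous (truncatedHilbertMultiplier y Y) :=
  continuous_const.mul (Complex.continuous_ofReal.comp (continuous_sign_mul_comp_abs
    (g := fun t => Real.exp (-(2 * π * y * t)) - Real.exp (-(2 * π * Y * t)))
    (by fun_prop) (by simp)))

lemma norm_truncatedHilbertMultiplier_le (hy : 0 < y) (hY : 0 < Y) (τ : ℝ) :
    ‖truncatedHilbertMultiplier y Y τ‖ ≤ 1 := by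
  have hexp {t : ℝ} (ht : 0 < t) : Real.exp (-(2 * π * t * |τ|)) ∈ Icc (0 : ℝ) 1 :=
    ⟨(Real.exp_pos _).le, Real.exp_le_one_iff.2 (neg_nonpos.2 (by positivity))⟩
  have hdiff : |Real.exp (-(2 * π * y * |τ|)) - Real.exp (-(2 * π * Y * |τ|))| ≤ 1 :=
    abs_sub_le_of_nonneg_of_le (hexp hy).1 (hexp hy).2 (hexp hY).1 (hexp hY).2
  have hsign : |Real.sign τ| ≤ 1 := by
    rcases Real.sign_apply_eq τ with h | h | h <;> simp [h]
  rw [truncatedHilbertMultiplier, norm_mul, norm_neg, Complex.norm_I, one_mul, Complex.norm_real,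
    Real.norm_eq_abs, abs_mul]
  exact mul_le_one₀ hsign (abs_nonneg _) hdiff

lemma fourier_truncatedHilbertKernel (hy : 0 < y) (hY : 0 < Y) :
    𝓕 (fun s => (truncatedHilbertKernel y Y s : ℂ)) = truncatedHilbertMultiplier y Y := by
  obtain ⟨hint_y, hfourier_y⟩ := fourier_sign_mul_exp hy
  obtain ⟨hint_Y, hfourier_Y⟩ := fourier_sign_mul_exp hY
  have heq : truncatedHilbertMultiplier y Y = (-I) •
      ((fun v : ℝ => (Real.sign v * Real.exp (-(2 * π * y * |v|)) : ℂ)) -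
        fun v : ℝ => (Real.sign v * Real.exp (-(2 * π * Y * |v|)) : ℂ)) := by
    ext v
    simp only [truncatedHilbertMultiplier, Pi.smul_apply, Pi.sub_apply, smul_eq_mul]
    push_cast
    ring
  have hint : Integrable (truncatedHilbertMultiplier y Y) :=
    heq ▸ (hint_y.sub hint_Y).smul (-I)
  have hfourier (w : ℝ) :
      𝓕 (truncatedHilbertMultiplier y Y) w = -(truncatedHilbertKernel y Y w : ℂ) := by
    have hlin : 𝓕 (truncatedHilbertMultiplier y Y) w =
        -I * (-I * conjPoissonKernel y w - -I * conjPoissonKernel Y w) := by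
      rw [← hfourier_y w, ← hfourier_Y w, heq]
      simp only [Real.fourier_eq]
      rw [← integral_sub ((Real.fourierIntegral_convergent_iff w).2 hint_y)
        ((Real.fourierIntegral_convergent_iff w).2 hint_Y), ← integral_const_mul]
      refine integral_congr_ae (.of_forall fun v => ?_)
      simp only [Pi.smul_apply, Pi.sub_apply, Circle.smul_def, smul_eq_mul]
      ring
    rw [hlin, truncatedHilbertKernel]
    push_cast
    linear_combination (conjPoissonKernel y w - conjPoissonKernel Y w : ℂ) * Complex.I_sq
  have hinv : 𝓕⁻ (truncatedHilbertMultiplier y Y) =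
      fun s => (truncatedHilbertKernel y Y s : ℂ) := by
    ext s
    rw [Real.fourierInv_eq_fourier_neg, hfourier, truncatedHilbertKernel_neg, Complex.ofReal_neg,
      neg_neg]
  rw [← hinv]
  refine (continuous_truncatedHilbertMultiplier y Y).fourier_fourierInv_eq hint ?_
  rw [funext hfourier]
  exact (integrable_truncatedHilbertKernel hy hY).ofReal.neg

lemma tendsto_truncatedHilbertMultiplier {ι : Type*} {l : Filter ι} {y Y : ι → ℝ}
    (hy : Tendsto y l (𝓝 0)) (hY : Tendsto Y l atTop) (τ : ℝ) :
    Tendsto (fun n => truncatedHilbertMultiplier (y n) (Y n) τ) l (𝓝 (-I * Real.sign τ)) := by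
  unfold truncatedHilbertMultiplier
  refine ((Complex.continuous_ofReal.tendsto _).comp ?_).const_mul (-I)
  rcases eq_or_ne τ 0 with rfl | hτ
  · simp [tendsto_const_nhds]
  have hone : Tendsto (fun n => Real.exp (-(2 * π * y n * |τ|))) l (𝓝 1) := by
    have h : Tendsto (fun n => -(2 * π * y n * |τ|)) l (𝓝 0) := by
      simpa using ((hy.const_mul (2 * π)).mul_const |τ|).neg
    simpa using h.rexp
  have hzero : Tendsto (fun n => Real.exp (-(2 * π * Y n * |τ|))) l (𝓝 0) :=
    Real.tendsto_exp_neg_atTop_nhds_zero.comp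
      ((hY.const_mul_atTop Real.two_pi_pos).atTop_mul_const (abs_pos.2 hτ))
  simpa using (hone.sub hzero).const_mul (Real.sign τ)

end HilbertMultiplier

section AngularMultiplier

lemma angularMultiplier_eq (h : ℝ → ℂ) {ξ : ℂ} (hξ : ξ ≠ 0) :
    angularMultiplier h ξ =
      conj ξ / ‖ξ‖ * ∫ θ in -(π / 2)..3 * π / 2, Circle.exp (-θ) * h (‖ξ‖ * Real.cos θ) := by
  set f : ℝ → ℂ := fun θ => Circle.exp (-θ) * h (‖ξ‖ * Real.cos θ) with hf
  have hperiodic : Function.Periodic f (2 * π) := fun θ => by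
    simp only [hf, Real.cos_add_two_pi, neg_add, ← sub_eq_add_neg, Circle.periodic_exp.sub_eq]
  have hpolar : ‖ξ‖ * (Circle.exp ξ.arg : ℂ) = ξ := Complex.norm_mul_exp_arg_mul_I ξ
  have hconj : conj ξ / ‖ξ‖ = (Circle.exp (-ξ.arg) : ℂ) := by
    rw [div_eq_iff (by exact_mod_cast norm_ne_zero_iff.2 hξ), Circle.exp_neg,
      Circle.coe_inv_eq_conj, ← Complex.conj_ofReal ‖ξ‖, ← map_mul, mul_comm, hpolar]
  have hinner (θ : ℝ) : ⟪(Circle.exp θ : ℂ), ξ⟫ = ‖ξ‖ * Real.cos (θ - ξ.arg) := by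
    rw [Complex.inner, ← Circle.coe_inv_eq_conj, ← hpolar, mul_assoc, ← Circle.coe_mul,
      ← Circle.exp_neg, ← Circle.exp_add, Complex.re_ofReal_mul, Circle.coe_exp,
      Complex.exp_ofReal_mul_I_re, hpolar, ← Real.cos_neg]
    congr 2
    ring
  have hintegrand (θ : ℝ) : (Circle.exp (-θ) : ℂ) * h ⟪(Circle.exp θ : ℂ), ξ⟫ =
      conj ξ / ‖ξ‖ * f (θ - ξ.arg) := by
    rw [hconj, hf, ← mul_assoc, ← Circle.coe_mul, ← Circle.exp_add, hinner]
    congr 4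
    ring
  simp only [angularMultiplier, hintegrand]
  rw [integral_const_mul, ← intervalIntegral.integral_of_le Real.two_pi_pos.le,
    intervalIntegral.integral_comp_sub_right]
  have hshift := hperiodic.intervalIntegral_add_eq (0 - ξ.arg) (-(π / 2))
  rw [show 2 * π - ξ.arg = 0 - ξ.arg + 2 * π by ring, hshift,
    show -(π / 2) + 2 * π = 3 * π / 2 by ring]

lemma integral_circleExp_neg_mul_sign_cos :
    ∫ θ in -(π / 2)..3 * π / 2, (Circle.exp (-θ) : ℂ) * Real.sign (Real.cos θ) = 4 := by
  set f : ℝ → ℂ := fun θ => Circle.exp (-θ) * Real.sign (Real.cos θ) with hf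
  have hperiodic : Function.Periodic f π := fun θ => by
    have hexp : (Circle.exp (-(θ + π)) : ℂ) = -Circle.exp (-θ) := by
      rw [Circle.coe_exp, Circle.coe_exp, neg_add, ← sub_eq_add_neg, Complex.ofReal_sub, sub_mul,
        Complex.exp_sub, Complex.exp_pi_mul_I, div_neg, div_one]
    simp only [hf, hexp, Real.cos_add_pi, Real.sign_neg, Complex.ofReal_neg, neg_mul_neg]
  have hEq : EqOn f (fun θ => Complex.exp (-I * θ)) (Ioo (-(π / 2)) (π / 2)) := fun θ hθ => by
    simp only [hf, Real.sign_of_pos (Real.cos_pos_of_mem_Ioo hθ), Complex.ofReal_one, mul_one,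
      Circle.coe_exp, Complex.ofReal_neg, neg_mul, mul_comm I]
  have hle : -(π / 2) ≤ π / 2 := by linarith [Real.pi_pos]
  have hint : IntervalIntegrable f volume (-(π / 2)) (-(π / 2) + π) := by
    rw [show -(π / 2) + π = π / 2 by ring, intervalIntegrable_iff_integrableOn_Ioo_of_le hle]
    refine IntegrableOn.congr_fun ?_ hEq.symm measurableSet_Ioo
    rw [← intervalIntegrable_iff_integrableOn_Ioo_of_le hle]
    exact Continuous.intervalIntegrable (by fun_prop) _ _
  calc ∫ θ in -(π / 2)..3 * π / 2, f θ
      = ∫ θ in -(π / 2)..-(π / 2) + (2 : ℤ) • π, f θ := by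
        congr 1
        simp only [zsmul_eq_mul, Int.cast_ofNat]
        ring
    _ = (2 : ℤ) • ∫ θ in -(π / 2)..-(π / 2) + π, f θ :=
        hperiodic.intervalIntegral_add_zsmul_eq 2 _
          (hperiodic.intervalIntegrable Real.pi_ne_zero hint)
    _ = (2 : ℤ) • ∫ θ in -(π / 2)..π / 2, Complex.exp (-I * θ) := by
        rw [show -(π / 2) + π = π / 2 by ring, intervalIntegral.integral_of_le hle,
          intervalIntegral.integral_of_le hle, integral_Ioc_eq_integral_Ioo,
          integral_Ioc_eq_integral_Ioo, setIntegral_congr_fun measurableSet_Ioo hEq]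
    _ = 4 := by
        rw [integral_exp_mul_complex (neg_ne_zero.2 Complex.I_ne_zero),
          show -I * (π / 2 : ℝ) = -(π / 2 * I) by push_cast; ring,
          show -I * (-(π / 2) : ℝ) = π / 2 * I by push_cast; ring, Complex.exp_neg,
          Complex.exp_pi_div_two_mul_I, Complex.inv_I, zsmul_eq_mul,
          mul_div_assoc', div_eq_iff (neg_ne_zero.2 Complex.I_ne_zero)]
        push_cast
        ring

lemma angularMultiplier_sign {ξ : ℂ} (hξ : ξ ≠ 0) :
    angularMultiplier (fun τ => -I * Real.sign τ) ξ = -4 * I * (conj ξ / ‖ξ‖) := by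
  have hsign (θ : ℝ) : Real.sign (‖ξ‖ * Real.cos θ) = Real.sign (Real.cos θ) := by
    simp [Real.sign, mul_pos_iff_of_pos_left (norm_pos_iff.2 hξ), mul_neg_iff, hξ,
      (norm_nonneg ξ).not_gt]
  simp only [angularMultiplier_eq _ hξ, hsign, mul_left_comm _ (-I),
    intervalIntegral.integral_const_mul, integral_circleExp_neg_mul_sign_cos]
  ring

variable {ι : Type*} {l : Filter ι} [l.IsCountablyGenerated]

lemma tendsto_angularMultiplier {h : ι → ℝ → ℂ} {h₀ : ℝ → ℂ} {B : ℝ}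
    (hmeas : ∀ n, Measurable (h n)) (hB : ∀ n τ, ‖h n τ‖ ≤ B)
    (hlim : ∀ τ, Tendsto (fun n => h n τ) l (𝓝 (h₀ τ))) (ξ : ℂ) :
    Tendsto (fun n => angularMultiplier (h n) ξ) l (𝓝 (angularMultiplier h₀ ξ)) :=
  tendsto_integral_filter_of_dominated_convergence (fun _ => B)
    (.of_forall fun n => ((measurable_circleExp_inner (hmeas n)).comp
      measurable_prodMk_left).aestronglyMeasurable)
    (.of_forall fun n => .of_forall fun θ => by simpa using hB n _)
    (integrable_const _) (.of_forall fun θ => (hlim _).const_mul _)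

lemma tendsto_fourierInv_of_dominated {F : ι → ℂ → ℂ} {f : ℂ → ℂ} {bound : ℂ → ℝ}
    (hmeas : ∀ n, AEStronglyMeasurable (F n)) (hbound : Integrable bound)
    (hle : ∀ n ξ, ‖F n ξ‖ ≤ bound ξ) (hlim : ∀ᵐ ξ, Tendsto (fun n => F n ξ) l (𝓝 (f ξ))) (x : ℂ) :
    Tendsto (fun n => 𝓕⁻ (F n) x) l (𝓝 (𝓕⁻ f x)) := by
  simp only [Real.fourierInv_eq]
  refine tendsto_integral_filter_of_dominated_convergence bound
    (.of_forall fun n => ?_) (.of_forall fun n => .of_forall fun ξ => ?_) hbound ?_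
  · exact AEStronglyMeasurable.smul (Continuous.aestronglyMeasurable (by fun_prop)) (hmeas n)
  · simpa only [Circle.norm_smul] using hle n ξ
  · filter_upwards [hlim] with ξ hξ using hξ.const_smul _

lemma tendsto_rotationAverage_rotationAverage {y Y : ι → ℝ} (hy_pos : ∀ n, 0 < y n)
    (hY_pos : ∀ n, 0 < Y n) (hy : Tendsto y l (𝓝 0)) (hY : Tendsto Y l atTop) {a : ℂ → ℂ}
    (ha : Integrable a) (x : ℂ) :
    Tendsto (fun n => rotationAverage (truncatedHilbertKernel (y n) (Y n))
        (rotationAverage (truncatedHilbertKernel (y n) (Y n)) (𝓕⁻ a)) x) l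
      (𝓝 (𝓕⁻ (fun ξ => -16 * (conj ξ / ξ) * a ξ) x)) := by
  set m : ι → ℂ → ℂ := fun n => angularMultiplier (truncatedHilbertMultiplier (y n) (Y n))
  have hmeas (n : ι) : Measurable (m n) :=
    measurable_angularMultiplier (continuous_truncatedHilbertMultiplier _ _).measurable
  have hbound (n : ι) (ξ : ℂ) : ‖m n ξ‖ ≤ 2 * π * 1 :=
    norm_angularMultiplier_le (norm_truncatedHilbertMultiplier_le (hy_pos n) (hY_pos n)) ξ
  have hlim {ξ : ℂ} (hξ : ξ ≠ 0) : Tendsto (fun n => m n ξ) l (𝓝 (-4 * I * (conj ξ / ‖ξ‖))) := by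
    rw [← angularMultiplier_sign hξ]
    exact tendsto_angularMultiplier
      (fun n => (continuous_truncatedHilbertMultiplier _ _).measurable)
      (fun n => norm_truncatedHilbertMultiplier_le (hy_pos n) (hY_pos n))
      (tendsto_truncatedHilbertMultiplier hy hY) ξ
  have rotationAverage_eq (n : ι) {b : ℂ → ℂ} (hb : Integrable b) :
      rotationAverage (truncatedHilbertKernel (y n) (Y n)) (𝓕⁻ b) =
        𝓕⁻ fun ξ => m n ξ * b ξ := by
    ext z
    rw [rotationAverage_fourierInv (integrable_truncatedHilbertKernel (hy_pos n) (hY_pos n)) hb,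
      fourier_truncatedHilbertKernel (hy_pos n) (hY_pos n)]
  have hint (n : ι) : Integrable fun ξ => m n ξ * a ξ :=
    ha.bdd_mul (hmeas n).aestronglyMeasurable (.of_forall (hbound n))
  simp only [rotationAverage_eq _ ha, rotationAverage_eq _ (hint _)]
  refine tendsto_fourierInv_of_dominated
    (fun n => (hmeas n).aestronglyMeasurable.fun_mul (hint n).1)
    ((ha.norm.const_mul (2 * π * 1)).const_mul (2 * π * 1)) (fun n ξ => ?_) ?_ x
  · rw [norm_mul, norm_mul]
    gcongr
    exacts [hbound n ξ, hbound n ξ]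
  · filter_upwards [Measure.ae_ne volume (0 : ℂ)] with ξ hξ
    convert (hlim hξ).mul ((hlim hξ).mul_const (a ξ)) using 2
    have hsq : (‖ξ‖ : ℂ) ^ 2 = ξ * conj ξ := (Complex.mul_conj' ξ).symm
    have hconj : conj ξ / ‖ξ‖ * (conj ξ / ‖ξ‖) = conj ξ / ξ := by
      rw [div_mul_div_comm, ← sq (‖ξ‖ : ℂ), hsq, mul_div_mul_right _ _ (by simpa using hξ)]
    linear_combination
      (-16 * a ξ * (conj ξ / ‖ξ‖) ^ 2) * Complex.I_sq + 16 * a ξ * hconj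

end AngularMultiplier

end Multipliers

section Wirtinger

open Complex (I)
open FourierTransform LineDeriv
open scoped Real RealInnerProductSpace ComplexConjugate SchwartzMap

/-- The first-order operator `½ (∂ₓ + c ∂ᵧ)`, which covers both Wirtinger derivatives. -/
noncomputable def wirtingerOp (c : ℂ) (v : ℂ → ℂ) (x : ℂ) : ℂ :=
  2⁻¹ * (fderiv ℝ v x 1 + c * fderiv ℝ v x I)

/-- The Wirtinger derivative `∂v/∂z`. -/
noncomputable abbrev wirtingerDeriv : (ℂ → ℂ) → ℂ → ℂ := wirtingerOp (-I)

/-- The Wirtinger derivative `∂v/∂z̄`. -/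
noncomputable abbrev wirtingerDerivBar : (ℂ → ℂ) → ℂ → ℂ := wirtingerOp I

section Basic

variable (c : ℂ) {u v : ℂ → ℂ} {x : ℂ}

lemma wirtingerOp_congr (h : u =ᶠ[𝓝 x] v) : wirtingerOp c u x = wirtingerOp c v x := by
  rw [wirtingerOp, wirtingerOp, h.fderiv_eq]

lemma wirtingerOp_mul (hu : DifferentiableAt ℝ u x) (hv : DifferentiableAt ℝ v x) :
    wirtingerOp c (fun x => u x * v x) x = u x * wirtingerOp c v x + wirtingerOp c u x * v x := by
  simp only [wirtingerOp, fderiv_fun_mul hu hv, add_apply, smul_apply, smul_eq_mul]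
  ring

lemma wirtingerOp_comp_sub_left (hv : Differentiable ℝ v) (z t : ℂ) :
    wirtingerOp c (fun t => v (z - t)) t = -wirtingerOp c v (z - t) := by
  have h : HasFDerivAt (fun t => v (z - t)) (fderiv ℝ v (z - t) ∘L (-.id ℝ ℂ)) t :=
    (hv (z - t)).hasFDerivAt.comp t ((hasFDerivAt_id t).const_sub z)
  simp only [wirtingerOp, h.fderiv, ContinuousLinearMap.comp_neg, ContinuousLinearMap.comp_id,
    neg_apply, mul_neg]
  ring

lemma continuous_wirtingerOp (hv : ContDiff ℝ 1 v) : Continuous (wirtingerOp c v) := by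
  have h := hv.continuous_fderiv one_ne_zero
  exact continuous_const.mul ((h.clm_apply continuous_const).add
    (continuous_const.mul (h.clm_apply continuous_const)))

lemma hasCompactSupport_wirtingerOp (hv : HasCompactSupport v) :
    HasCompactSupport (wirtingerOp c v) :=
  ((hv.fderiv_apply (𝕜 := ℝ) 1).add (hv.fderiv_apply (𝕜 := ℝ) I).mul_left).mul_left

lemma integral_mul_wirtingerOp (hu : ContDiff ℝ 1 u) (hv : ContDiff ℝ 1 v)
    (hc : HasCompactSupport v) :
    ∫ x, u x * wirtingerOp c v x = -∫ x, wirtingerOp c u x * v x := by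
  have hderiv {w : ℂ → ℂ} (hw : ContDiff ℝ 1 w) (m : ℂ) : Continuous fun x => fderiv ℝ w x m :=
    (hw.continuous_fderiv one_ne_zero).clm_apply continuous_const
  have hu'v (m : ℂ) : Integrable fun x => fderiv ℝ u x m * v x :=
    ((hderiv hu m).mul hv.continuous).integrable_of_hasCompactSupport hc.mul_left
  have huv' (m : ℂ) : Integrable fun x => u x * fderiv ℝ v x m :=
    (hu.continuous.mul (hderiv hv m)).integrable_of_hasCompactSupport
      (hc.fderiv_apply (𝕜 := ℝ) m).mul_left
  have hparts (m : ℂ) : ∫ x, u x * fderiv ℝ v x m = -∫ x, fderiv ℝ u x m * v x :=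
    integral_mul_fderiv_eq_neg_fderiv_mul_of_integrable (hu'v m) (huv' m)
      ((hu.continuous.mul hv.continuous).integrable_of_hasCompactSupport hc.mul_left)
      (fun x _ => hu.differentiable one_ne_zero x) (fun x _ => hv.differentiable one_ne_zero x)
  calc ∫ x, u x * wirtingerOp c v x
      = ∫ x, 2⁻¹ * (u x * fderiv ℝ v x 1 + c * (u x * fderiv ℝ v x I)) := by
        refine integral_congr_ae (.of_forall fun x => ?_)
        simp only [wirtingerOp]
        ring
    _ = -(2⁻¹ * ((∫ x, fderiv ℝ u x 1 * v x) + c * ∫ x, fderiv ℝ u x I * v x)) := by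
        rw [integral_const_mul, integral_add (huv' 1) ((huv' I).const_mul c), integral_const_mul,
          hparts, hparts]
        ring
    _ = -∫ x, wirtingerOp c u x * v x := by
        rw [← integral_const_mul, ← integral_add (hu'v 1) ((hu'v I).const_mul c),
          ← integral_const_mul]
        congr 2 with x
        simp only [wirtingerOp]
        ring

end Basic

lemma fourier_lineDeriv_apply (v : 𝓢(ℂ, ℂ)) (m ξ : ℂ) :
    𝓕 (∂_{m} v) ξ = 2 * π * I * ⟪ξ, m⟫ * 𝓕 v ξ := by
  have h : (fun ξ : ℂ => ⟪ξ, m⟫).HasTemperateGrowth := by fun_prop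
  rw [SchwartzMap.fourier_lineDerivOp_eq, smul_apply, SchwartzMap.smulLeftCLM_apply_apply h]
  simp [mul_assoc]

lemma wirtingerOp_eq_fourierInv (c : ℂ) (v : 𝓢(ℂ, ℂ)) :
    Integrable (fun ξ : ℂ => π * I * (ξ.re + c * ξ.im) * 𝓕 v ξ) ∧
    wirtingerOp c v = 𝓕⁻ fun ξ : ℂ => π * I * (ξ.re + c * ξ.im) * 𝓕 v ξ := by
  set D : 𝓢(ℂ, ℂ) := (2⁻¹ : ℂ) • (∂_{(1 : ℂ)} v + c • ∂_{I} v) with hD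
  have hfourier : (fun ξ : ℂ => π * I * (ξ.re + c * ξ.im) * 𝓕 v ξ) = 𝓕 D := by
    ext ξ
    rw [hD, FourierTransform.fourier_smul, FourierTransform.fourier_add,
      FourierTransform.fourier_smul]
    simp only [smul_apply, add_apply, smul_eq_mul, fourier_lineDeriv_apply]
    simp only [Complex.inner, one_mul, Complex.conj_re, Complex.mul_re, Complex.I_re, zero_mul,
      Complex.I_im, Complex.conj_im, mul_neg, sub_neg_eq_add, zero_add]
    ring
  rw [hfourier]
  refine ⟨SchwartzMap.integrable _, ?_⟩
  rw [← SchwartzMap.fourierInv_coe, FourierTransform.fourierInv_fourier_eq]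
  ext x
  simp [hD, wirtingerOp, SchwartzMap.lineDerivOp_apply_eq_fderiv, mul_add]

lemma wirtingerDerivBar_eq_fourierInv (v : 𝓢(ℂ, ℂ)) :
    Integrable (fun ξ : ℂ => π * I * ξ * 𝓕 v ξ) ∧
    wirtingerDerivBar v = 𝓕⁻ fun ξ : ℂ => π * I * ξ * 𝓕 v ξ := by
  have hξ (ξ : ℂ) : (ξ.re + I * ξ.im : ℂ) = ξ := by rw [mul_comm, Complex.re_add_im]
  simpa only [hξ] using wirtingerOp_eq_fourierInv I v

lemma wirtingerDeriv_eq_fourierInv (v : 𝓢(ℂ, ℂ)) :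
    wirtingerDeriv v = 𝓕⁻ fun ξ : ℂ => π * I * conj ξ * 𝓕 v ξ := by
  have hconj (ξ : ℂ) : (ξ.re + -I * ξ.im : ℂ) = conj ξ := by
    apply Complex.ext <;> simp
  simpa only [hconj] using (wirtingerOp_eq_fourierInv (-I) v).2

lemma tendsto_rotationAverage_wirtingerDerivBar {v : ℂ → ℂ} (hv : ContDiff ℝ (⊤ : ℕ∞) v)
    (hc : HasCompactSupport v) {ι : Type*} {l : Filter ι} [l.IsCountablyGenerated] {y Y : ι → ℝ}
    (hy_pos : ∀ n, 0 < y n) (hY_pos : ∀ n, 0 < Y n) (hy : Tendsto y l (𝓝 0))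
    (hY : Tendsto Y l atTop) (x : ℂ) :
    Tendsto (fun n => rotationAverage (truncatedHilbertKernel (y n) (Y n))
        (rotationAverage (truncatedHilbertKernel (y n) (Y n)) (wirtingerDerivBar v)) x) l
      (𝓝 (-16 * wirtingerDeriv v x)) := by
  set V : 𝓢(ℂ, ℂ) := hc.toSchwartzMap hv
  obtain ⟨hint, hbar⟩ := wirtingerDerivBar_eq_fourierInv V
  have hderiv : -16 * wirtingerDeriv v x =
      𝓕⁻ (fun ξ => -16 * (conj ξ / ξ) * (π * I * ξ * 𝓕 V ξ)) x := by
    change -16 * wirtingerDeriv V x = _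
    rw [wirtingerDeriv_eq_fourierInv V, Real.fourierInv_eq, Real.fourierInv_eq,
      ← integral_const_mul]
    refine integral_congr_ae (.of_forall fun ξ => ?_)
    rcases eq_or_ne ξ 0 with rfl | hξ
    · simp
    · simp only [Circle.smul_def, smul_eq_mul]
      field_simp
  rw [hderiv, show wirtingerDerivBar v = _ from hbar]
  exact tendsto_rotationAverage_rotationAverage hy_pos hY_pos hy hY hint x

lemma lintegral_enorm_wirtingerDeriv_rpow_le {p : ℝ} (hp : 1 < p) :
    ∃ C : ℝ≥0∞, C ≠ ⊤ ∧ ∀ v : ℂ → ℂ, ContDiff ℝ (⊤ : ℕ∞) v → HasCompactSupport v →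
      ∫⁻ x, ‖wirtingerDeriv v x‖ₑ ^ p ≤ C * ∫⁻ x, ‖wirtingerDerivBar v x‖ₑ ^ p := by
  obtain ⟨C, hC, hHilbert⟩ := lintegral_convolution_truncatedHilbertKernel_le hp
  set A : ℝ≥0∞ := ENNReal.ofReal (2 * π) ^ p
  have hA : A ≠ ⊤ := ENNReal.rpow_ne_top_of_nonneg (by linarith) ENNReal.ofReal_ne_top
  refine ⟨A * (C * (A * C)), by finiteness, fun v hv hc => ?_⟩
  set y : ℕ → ℝ := fun n => 1 / ((n : ℝ) + 1)
  set Y : ℕ → ℝ := fun n => (n : ℝ) + 1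
  have hy_pos (n : ℕ) : 0 < y n := by positivity
  have hY_pos (n : ℕ) : 0 < Y n := by positivity
  set R : ℕ → (ℂ → ℂ) → ℂ → ℂ := fun n => rotationAverage (truncatedHilbertKernel (y n) (Y n))
  have hmeas (n : ℕ) {g : ℂ → ℂ} (hg : Measurable g) : Measurable (R n g) :=
    measurable_rotationAverage
      (continuous_truncatedHilbertKernel (hy_pos n) (hY_pos n)).measurable hg
  have hR (n : ℕ) {g : ℂ → ℂ} (hg : Measurable g) :
      ∫⁻ x, ‖R n g x‖ₑ ^ p ≤ A * (C * ∫⁻ x, ‖g x‖ₑ ^ p) :=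
    lintegral_enorm_rotationAverage_rpow_le hp
      (continuous_truncatedHilbertKernel (hy_pos n) (hY_pos n)).measurable
      (fun f hf => hHilbert f hf _ _ (hy_pos n) (hY_pos n)) hg
  have hbar : Measurable (wirtingerDerivBar v) :=
    (continuous_wirtingerOp I (hv.of_le (by exact_mod_cast le_top))).measurable
  have hlim := tendsto_rotationAverage_wirtingerDerivBar hv hc hy_pos hY_pos
    tendsto_one_div_add_atTop_nhds_zero_nat
    (tendsto_atTop_add_const_right _ _ tendsto_natCast_atTop_atTop)
  calc ∫⁻ x, ‖wirtingerDeriv v x‖ₑ ^ p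
      ≤ ∫⁻ x, ‖-16 * wirtingerDeriv v x‖ₑ ^ p := by
        refine lintegral_mono fun x => ENNReal.rpow_le_rpow ?_ (by linarith)
        rw [enorm_le_iff_norm_le, norm_mul]
        exact le_mul_of_one_le_left (norm_nonneg _) (by norm_num)
    _ ≤ A * (C * (A * (C * ∫⁻ x, ‖wirtingerDerivBar v x‖ₑ ^ p))) := by
        refine lintegral_enorm_rpow_le_of_tendsto_ae
          (fun n => (hmeas n (hmeas n hbar)).aestronglyMeasurable) (.of_forall hlim) fun n => ?_
        refine (hR n (hmeas n hbar)).trans ?_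
        gcongr
        exact hR n hbar
    _ = A * (C * (A * C)) * ∫⁻ x, ‖wirtingerDerivBar v x‖ₑ ^ p := by ring

end Wirtinger

section CauchyKernel

open Complex (I)
open scoped Real ComplexConjugate

lemma locallyIntegrable_inv : LocallyIntegrable fun t : ℂ => t⁻¹ := by
  refine locallyIntegrable_of_norm_le_rpow (C := 1) (α := 1) (by simp) (by simp)
    (.of_forall fun t => ?_) measurable_inv.aestronglyMeasurable
  rw [Real.rpow_neg_one, norm_inv, one_mul]

lemma integrableOn_inv_ball (R : ℝ) : IntegrableOn (fun t : ℂ => t⁻¹) (ball 0 R) :=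
  (locallyIntegrable_inv.integrableOn_isCompact (isCompact_closedBall 0 R)).mono_set
    ball_subset_closedBall

lemma integrable_inv_mul {ψ : ℂ → ℂ} (hψ : Continuous ψ) (hc : HasCompactSupport ψ) :
    Integrable fun t => t⁻¹ * ψ t := by
  simpa only [smul_eq_mul] using
    locallyIntegrable_inv.integrable_smul_right_of_hasCompactSupport hψ hc

section RotationOdd

lemma integral_eq_zero_of_I_mul {F : ℂ → ℂ} (hF : ∀ t, F (I * t) = -F t) : ∫ t, F t = 0 := by
  have hrot (t : ℂ) : rotation (Circle.exp (π / 2)) t = I * t := by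
    rw [rotation_apply, Circle.coe_exp, Complex.ofReal_div, Complex.ofReal_ofNat,
      Complex.exp_pi_div_two_mul_I]
  have h := (rotation (Circle.exp (π / 2))).measurePreserving.integral_comp
    (rotation _).toHomeomorph.measurableEmbedding F
  simp only [hrot, hF, integral_neg] at h
  exact self_eq_neg.1 h.symm

lemma setIntegral_ball_eq_zero_of_I_mul {F : ℂ → ℂ} (hF : ∀ t, F (I * t) = -F t) (R : ℝ) :
    ∫ t in ball 0 R, F t = 0 := by
  rw [← integral_indicator measurableSet_ball]
  refine integral_eq_zero_of_I_mul fun t => ?_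
  simp only [indicator, mem_ball_zero_iff, norm_mul, Complex.norm_I, one_mul, hF]
  split_ifs
  · rfl
  · exact neg_zero.symm

/-- The singularity `t⁻²` is cancelled by the symmetry of the kernels under a quarter turn. -/
lemma tendsto_integral_mul_of_I_mul {k : ℝ → ℂ → ℂ} (hk : ∀ ε, Measurable (k ε))
    (hk_I : ∀ ε t, k ε (I * t) = -k ε t) (hk_le : ∀ ε t, ‖k ε t‖ ≤ (‖t‖ ^ 2)⁻¹)
    (hk_bdd : ∀ ε > 0, ∀ t, ‖k ε t‖ ≤ (ε ^ 2)⁻¹)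
    (hk_lim : ∀ t ≠ 0, Tendsto (k · t) (𝓝[>] 0) (𝓝 (t ^ 2)⁻¹)) {φ : ℂ → ℂ}
    (hφ : ContDiff ℝ 1 φ) (hc : HasCompactSupport φ) {R : ℝ} (hR : φ.support ⊆ ball 0 R) :
    Tendsto (fun ε => ∫ t, k ε t * φ t) (𝓝[>] 0)
      (𝓝 (∫ t in ball 0 R, (t ^ 2)⁻¹ * (φ t - φ 0))) := by
  obtain ⟨K, hK⟩ := ContDiff.lipschitzWith_of_hasCompactSupport hc hφ one_ne_zero
  have hbound (ε : ℝ) (t : ℂ) : ‖k ε t * (φ t - φ 0)‖ ≤ K * ‖t⁻¹‖ := by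
    rcases eq_or_ne t 0 with rfl | ht
    · simp
    calc ‖k ε t * (φ t - φ 0)‖ ≤ (‖t‖ ^ 2)⁻¹ * (K * ‖t‖) := by
          rw [norm_mul]
          gcongr
          · exact hk_le ε t
          · simpa [dist_eq_norm] using hK.dist_le_mul t 0
      _ = K * ‖t⁻¹‖ := by
          rw [norm_inv]
          field_simp
  have hcancel {ε : ℝ} (hε : 0 < ε) :
      ∫ t in ball 0 R, k ε t * (φ t - φ 0) = ∫ t, k ε t * φ t := by
    have hint {f : ℂ → ℂ} (hf : Continuous f) : IntegrableOn (fun t => k ε t * f t) (ball 0 R) :=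
      ((hf.locallyIntegrable.integrableOn_isCompact (isCompact_closedBall 0 R)).mono_set
        ball_subset_closedBall).bdd_mul (hk ε).aestronglyMeasurable (.of_forall (hk_bdd ε hε))
    have hzero : ∫ t in ball 0 R, k ε t * φ 0 = 0 :=
      setIntegral_ball_eq_zero_of_I_mul (fun t => by rw [hk_I, neg_mul]) R
    simp only [mul_sub]
    rw [integral_sub (hint hφ.continuous) (hint continuous_const), hzero, sub_zero]
    refine setIntegral_eq_integral_of_forall_compl_eq_zero fun t ht => ?_
    rw [Function.notMem_support.1 fun h => ht (hR h), mul_zero]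
  refine Tendsto.congr' (eventually_nhdsWithin_of_forall fun ε hε => hcancel hε) ?_
  refine tendsto_integral_filter_of_dominated_convergence (fun t => K * ‖t⁻¹‖)
    (.of_forall fun ε => ?_) (.of_forall fun ε => .of_forall (hbound ε))
    ((integrableOn_inv_ball R).norm.const_mul _) ?_
  · exact ((hk ε).mul (hφ.continuous.measurable.sub_const _)).aestronglyMeasurable
  · filter_upwards [ae_restrict_of_ae (Measure.ae_ne volume (0 : ℂ))] with t ht
    exact (hk_lim t ht).mul_const _

end RotationOdd

/-- The smooth approximation `t̄ / (|t|² + ε²)` of the Cauchy kernel `1 / t`. -/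
noncomputable def regularizedCauchyKernel (ε : ℝ) (t : ℂ) : ℂ :=
  conj t * (t * conj t + ε ^ 2)⁻¹

lemma mul_conj_add_sq (ε : ℝ) (t : ℂ) : t * conj t + ε ^ 2 = ((‖t‖ ^ 2 + ε ^ 2 : ℝ) : ℂ) := by
  rw [Complex.mul_conj']
  push_cast
  rfl

lemma norm_regularizedCauchyKernel (ε : ℝ) (t : ℂ) :
    ‖regularizedCauchyKernel ε t‖ = ‖t‖ / (‖t‖ ^ 2 + ε ^ 2) := by
  rw [regularizedCauchyKernel, mul_conj_add_sq, norm_mul, RCLike.norm_conj, norm_inv,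
    Complex.norm_of_nonneg (by positivity), div_eq_mul_inv]

lemma norm_regularizedCauchyKernel_le (ε : ℝ) (t : ℂ) :
    ‖regularizedCauchyKernel ε t‖ ≤ ‖t‖⁻¹ := by
  rw [norm_regularizedCauchyKernel]
  rcases eq_or_ne t 0 with rfl | ht
  · simp
  have := norm_pos_iff.2 ht
  rw [inv_eq_one_div, div_le_div_iff₀ (by positivity) this]
  nlinarith [sq_nonneg ε]

lemma norm_regularizedCauchyKernel_le_inv {ε : ℝ} (hε : 0 < ε) (t : ℂ) :
    ‖regularizedCauchyKernel ε t‖ ≤ ε⁻¹ := by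
  rw [norm_regularizedCauchyKernel, inv_eq_one_div, div_le_div_iff₀ (by positivity) hε]
  nlinarith [sq_nonneg (‖t‖ - ε), norm_nonneg t]

lemma regularizedCauchyKernel_I_mul (ε : ℝ) (t : ℂ) :
    regularizedCauchyKernel ε (I * t) = -I * regularizedCauchyKernel ε t := by
  rw [regularizedCauchyKernel, mul_conj_add_sq, norm_mul, Complex.norm_I, one_mul,
    ← mul_conj_add_sq, map_mul, Complex.conj_I, regularizedCauchyKernel, mul_assoc]

lemma tendsto_regularizedCauchyKernel {t : ℂ} (ht : t ≠ 0) :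
    Tendsto (regularizedCauchyKernel · t) (𝓝[>] 0) (𝓝 t⁻¹) := by
  have hconj : conj t ≠ 0 := by simpa using ht
  have hε : Tendsto (fun ε : ℝ => (ε : ℂ) ^ 2) (𝓝[>] 0) (𝓝 ((0 : ℝ) ^ 2)) :=
    tendsto_nhdsWithin_of_tendsto_nhds ((Complex.continuous_ofReal.pow 2).tendsto 0)
  rw [Complex.ofReal_zero, zero_pow two_ne_zero] at hε
  have h := ((hε.const_add (t * conj t)).inv₀ (by simpa using ht)).const_mul (conj t)
  rwa [add_zero, mul_inv_rev, mul_inv_cancel_left₀ hconj] at h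

section Derivatives

variable {ε : ℝ} (hε : 0 < ε)

include hε

lemma mul_conj_add_sq_ne_zero (t : ℂ) : t * conj t + ε ^ 2 ≠ 0 := by
  rw [mul_conj_add_sq, Complex.ofReal_ne_zero]
  positivity

lemma contDiff_regularizedCauchyKernel {n : WithTop ℕ∞} :
    ContDiff ℝ n (regularizedCauchyKernel ε) := by
  have hconj : ContDiff ℝ n (fun t : ℂ => conj t) := Complex.conjCLE.contDiff
  exact hconj.mul (((contDiff_id.mul hconj).add contDiff_const).inv (mul_conj_add_sq_ne_zero hε))

lemma fderiv_regularizedCauchyKernel (t m : ℂ) :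
    fderiv ℝ (regularizedCauchyKernel ε) t m =
      (conj m * (t * conj t + ε ^ 2) - conj t * (m * conj t + t * conj m)) /
        (t * conj t + ε ^ 2) ^ 2 := by
  have hconj : HasFDerivAt (fun t : ℂ => conj t) (Complex.conjCLE : ℂ →L[ℝ] ℂ) t :=
    Complex.conjCLE.hasFDerivAt
  have hne := mul_conj_add_sq_ne_zero hε t
  have hinv := ((hasDerivAt_inv hne).hasFDerivAt.restrictScalars ℝ).comp t
    (((hasFDerivAt_id (𝕜 := ℝ) t).mul hconj).add_const ((ε : ℂ) ^ 2))
  have h : fderiv ℝ (regularizedCauchyKernel ε) t = _ := (hconj.mul hinv).fderiv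
  rw [h]
  simp only [id_eq, Pi.mul_apply, Function.comp_apply, add_apply, smul_apply,
    ContinuousLinearMap.comp_apply, ContinuousLinearEquiv.coe_coe, smul_eq_mul, mul_neg,
    ContinuousAlgEquiv.coeCLE_apply, Complex.conjCAE_apply, ContinuousLinearMap.id_apply,
    ContinuousLinearMap.coe_restrictScalars', ContinuousLinearMap.toSpanSingleton_apply]
  field_simp
  ring

lemma wirtingerDeriv_regularizedCauchyKernel (t : ℂ) :
    wirtingerDeriv (regularizedCauchyKernel ε) t = -regularizedCauchyKernel ε t ^ 2 := by
  have hne := mul_conj_add_sq_ne_zero hε t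
  rw [wirtingerDeriv, wirtingerOp, fderiv_regularizedCauchyKernel hε,
    fderiv_regularizedCauchyKernel hε, regularizedCauchyKernel, map_one, Complex.conj_I]
  field_simp
  ring_nf
  simp only [Complex.I_sq]
  ring

lemma wirtingerDerivBar_regularizedCauchyKernel (t : ℂ) :
    wirtingerDerivBar (regularizedCauchyKernel ε) t = ε ^ 2 / (t * conj t + ε ^ 2) ^ 2 := by
  have hne := mul_conj_add_sq_ne_zero hε t
  rw [wirtingerDerivBar, wirtingerOp, fderiv_regularizedCauchyKernel hε,
    fderiv_regularizedCauchyKernel hε, map_one, Complex.conj_I]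
  field_simp
  ring_nf
  simp only [Complex.I_sq]
  ring

end Derivatives

lemma tendsto_integral_regularizedCauchyKernel_mul {ψ : ℂ → ℂ} (hψ : Continuous ψ)
    (hc : HasCompactSupport ψ) :
    Tendsto (fun ε => ∫ t, regularizedCauchyKernel ε t * ψ t) (𝓝[>] 0)
      (𝓝 (∫ t, t⁻¹ * ψ t)) := by
  refine tendsto_integral_filter_of_dominated_convergence (fun t => ‖t⁻¹ * ψ t‖)
    (eventually_nhdsWithin_of_forall fun ε hε => ?_) (.of_forall fun ε => .of_forall fun t => ?_)
    (integrable_inv_mul hψ hc).norm ?_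
  · exact ((contDiff_regularizedCauchyKernel hε (n := 0)).continuous.mul hψ).aestronglyMeasurable
  · rw [norm_mul, norm_mul, norm_inv]
    gcongr
    exact norm_regularizedCauchyKernel_le ε t
  · filter_upwards [Measure.ae_ne volume (0 : ℂ)] with t ht
    exact (tendsto_regularizedCauchyKernel ht).mul_const _

/-- The normalized area of the Riemann sphere in stereographic coordinates. Its dilates are
`∂/∂z̄` of the regularized Cauchy kernels. -/
noncomputable def sphereDensity (s : ℂ) : ℝ :=
  π⁻¹ * ((1 + ‖s‖ ^ 2) ^ 2)⁻¹

lemma sphereDensity_nonneg (s : ℂ) : 0 ≤ sphereDensity s := by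
  unfold sphereDensity
  positivity

lemma integral_sphereDensity : ∫ s, sphereDensity s = 1 := by
  have hderiv (r : ℝ) :
      HasDerivAt (fun r : ℝ => -(2⁻¹ * (1 + r ^ 2)⁻¹)) (r * ((1 + r ^ 2) ^ 2)⁻¹) r := by
    refine ((((hasDerivAt_pow 2 r).const_add 1).fun_inv (by positivity)).const_mul
      2⁻¹).fun_neg.congr_deriv ?_
    push_cast
    ring
  have hlim : Tendsto (fun r : ℝ => -(2⁻¹ * (1 + r ^ 2)⁻¹)) atTop (𝓝 0) := by
    have h := (tendsto_atTop_add_const_left atTop (1 : ℝ)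
      (tendsto_pow_atTop two_ne_zero)).inv_tendsto_atTop
    simpa using (h.const_mul 2⁻¹).neg
  have hradial : ∫ r in Ioi (0 : ℝ), r * ((1 + r ^ 2) ^ 2)⁻¹ = 2⁻¹ := by
    rw [integral_Ioi_of_hasDerivAt_of_nonneg' (fun r _ => hderiv r)
      (fun r hr => mul_nonneg (le_of_lt hr) (by positivity)) hlim]
    norm_num
  simp only [sphereDensity]
  rw [integral_const_mul, integral_fun_norm_addHaar volume fun r => ((1 + r ^ 2) ^ 2)⁻¹]
  simp only [Complex.finrank_real_complex, Measure.real, Complex.volume_ball, ofReal_one, one_pow,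
    one_mul, coe_toReal, coe_real_pi, Nat.add_one_sub_one, pow_one, smul_eq_mul, hradial,
    nsmul_eq_mul, Nat.cast_ofNat]
  field_simp

lemma tendsto_sphereDensity_cobounded :
    Tendsto (fun s => ‖s‖ ^ 2 * sphereDensity s) (Bornology.cobounded ℂ) (𝓝 0) := by
  have hinv := ((tendsto_pow_atTop two_ne_zero).comp
    (tendsto_norm_cobounded_atTop (E := ℂ))).inv_tendsto_atTop
  refine squeeze_zero'
    (.of_forall fun s => mul_nonneg (sq_nonneg _) (sphereDensity_nonneg s)) ?_ hinv
  filter_upwards [Bornology.eventually_ne_cobounded (0 : ℂ)] with s hs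
  calc ‖s‖ ^ 2 * sphereDensity s
      ≤ ‖s‖ ^ 2 * (1 * ((‖s‖ ^ 2) ^ 2)⁻¹) := by
        unfold sphereDensity
        gcongr
        · exact inv_le_one_of_one_le₀ (by linarith [Real.pi_gt_three])
        · linarith
    _ = (‖s‖ ^ 2)⁻¹ := by field_simp

lemma wirtingerDerivBar_regularizedCauchyKernel_eq_sphereDensity {ε : ℝ} (hε : 0 < ε) (t : ℂ) :
    wirtingerDerivBar (regularizedCauchyKernel ε) t =
      π * (ε⁻¹ ^ 2 * sphereDensity (ε⁻¹ • t) : ℝ) := by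
  rw [wirtingerDerivBar_regularizedCauchyKernel hε, mul_conj_add_sq, ← Complex.ofReal_mul,
    ← Complex.ofReal_pow, ← Complex.ofReal_pow, ← Complex.ofReal_div, sphereDensity, norm_smul,
    Real.norm_of_nonneg (inv_nonneg.2 hε.le)]
  congr 1
  have := Real.pi_ne_zero
  field_simp
  ring

/-- Integrating by parts against the regularized kernel, `∂/∂z̄` falls on it and produces a
rescaled sphere density. -/
lemma integral_inv_mul_wirtingerDerivBar {φ : ℂ → ℂ} (hφ : ContDiff ℝ 1 φ)
    (hc : HasCompactSupport φ) : ∫ t, t⁻¹ * wirtingerDerivBar φ t = -π * φ 0 := by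
  have hpeak := (tendsto_integral_comp_smul_smul_of_integrable sphereDensity_nonneg
    integral_sphereDensity (by simpa using tendsto_sphereDensity_cobounded)
    (hφ.continuous.integrable_of_hasCompactSupport hc)
    hφ.continuous.continuousAt).comp tendsto_inv_nhdsGT_zero
  have hparts {ε : ℝ} (hε : 0 < ε) :
      -π * ∫ t, (ε⁻¹ ^ Module.finrank ℝ ℂ * sphereDensity (ε⁻¹ • t)) • φ t =
        ∫ t, regularizedCauchyKernel ε t * wirtingerDerivBar φ t := by
    rw [integral_mul_wirtingerOp I (contDiff_regularizedCauchyKernel hε) hφ hc, neg_mul,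
      ← integral_const_mul, Complex.finrank_real_complex]
    congr 2 with t
    rw [← wirtingerDerivBar, wirtingerDerivBar_regularizedCauchyKernel_eq_sphereDensity hε,
      Complex.real_smul, mul_assoc]
  refine tendsto_nhds_unique (tendsto_integral_regularizedCauchyKernel_mul
    (continuous_wirtingerOp I hφ) (hasCompactSupport_wirtingerOp I hc)) ?_
  exact (hpeak.const_mul (-π : ℂ)).congr' (eventually_nhdsWithin_of_forall fun ε hε => hparts hε)

lemma tendsto_integral_regularizedCauchyKernel_sq_mul {φ : ℂ → ℂ} (hφ : ContDiff ℝ 1 φ)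
    (hc : HasCompactSupport φ) {R : ℝ} (hR : φ.support ⊆ ball 0 R) :
    Tendsto (fun ε => ∫ t, regularizedCauchyKernel ε t ^ 2 * φ t) (𝓝[>] 0)
      (𝓝 (∫ t in ball 0 R, (t ^ 2)⁻¹ * (φ t - φ 0))) := by
  refine tendsto_integral_mul_of_I_mul (fun ε => ?_) (fun ε t => ?_) (fun ε t => ?_)
    (fun ε hε t => ?_) (fun t ht => ?_) hφ hc hR
  · unfold regularizedCauchyKernel
    fun_prop
  · rw [regularizedCauchyKernel_I_mul, mul_pow, neg_sq, Complex.I_sq, neg_one_mul]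
  · rw [norm_pow, ← inv_pow]
    gcongr
    exact norm_regularizedCauchyKernel_le ε t
  · rw [norm_pow, ← inv_pow]
    gcongr
    exact norm_regularizedCauchyKernel_le_inv hε t
  · simpa only [inv_pow] using (tendsto_regularizedCauchyKernel ht).pow 2

lemma tendsto_setIntegral_compl_ball_inv_sq_mul {φ : ℂ → ℂ} (hφ : ContDiff ℝ 1 φ)
    (hc : HasCompactSupport φ) {R : ℝ} (hR : φ.support ⊆ ball 0 R) :
    Tendsto (fun ε => ∫ t in (ball 0 ε)ᶜ, (t ^ 2)⁻¹ * φ t) (𝓝[>] 0)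
      (𝓝 (∫ t in ball 0 R, (t ^ 2)⁻¹ * (φ t - φ 0))) := by
  have hk (ε : ℝ) (t : ℂ) : ‖(ball 0 ε)ᶜ.indicator (fun t : ℂ => (t ^ 2)⁻¹) t‖ ≤ (‖t‖ ^ 2)⁻¹ :=
    (norm_indicator_le_norm_self _ _).trans_eq (by rw [norm_inv, norm_pow])
  simp only [← integral_indicator measurableSet_ball.compl, indicator_mul_left]
  refine tendsto_integral_mul_of_I_mul (fun ε => ?_) (fun ε t => ?_) hk
    (fun ε hε t => ?_) (fun t ht => ?_) hφ hc hR
  · exact (measurable_id.pow_const 2).inv.indicator measurableSet_ball.compl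
  · simp only [indicator, mem_compl_iff, mem_ball_zero_iff, norm_mul, Complex.norm_I, one_mul,
      mul_pow, Complex.I_sq, neg_one_mul, inv_neg]
    split_ifs
    · exact neg_zero.symm
    · rfl
  · by_cases ht : t ∈ ball 0 ε
    · rw [indicator_of_notMem (notMem_compl_iff.2 ht), norm_zero]
      positivity
    · refine (hk ε t).trans ?_
      gcongr
      exact not_lt.1 fun h => ht (mem_ball_zero_iff.2 h)
  · refine tendsto_const_nhds.congr' ?_
    filter_upwards [nhdsWithin_le_nhds (Iio_mem_nhds (norm_pos_iff.2 ht))] with ε hε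
    have hmem : t ∈ (ball (0 : ℂ) ε)ᶜ := fun h => lt_asymm hε (mem_ball_zero_iff.1 h)
    simp only [indicator_of_mem hmem]

lemma tendsto_setIntegral_compl_ball_integral_inv_mul_wirtingerDeriv {φ : ℂ → ℂ}
    (hφ : ContDiff ℝ 1 φ) (hc : HasCompactSupport φ) :
    Tendsto (fun ε => ∫ t in (ball 0 ε)ᶜ, (t ^ 2)⁻¹ * φ t) (𝓝[>] 0)
      (𝓝 (∫ t, t⁻¹ * wirtingerDeriv φ t)) := by
  obtain ⟨R, hR⟩ := hc.isCompact.isBounded.subset_ball 0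
  replace hR := (subset_tsupport φ).trans hR
  have hparts : ∀ ε ∈ Ioi (0 : ℝ), ∫ t, regularizedCauchyKernel ε t * wirtingerDeriv φ t =
      ∫ t, regularizedCauchyKernel ε t ^ 2 * φ t := by
    intro ε hε
    rw [integral_mul_wirtingerOp (-I) (contDiff_regularizedCauchyKernel hε) hφ hc]
    simp only [wirtingerDeriv_regularizedCauchyKernel hε, neg_mul, integral_neg, neg_neg]
  have hlim := (tendsto_integral_regularizedCauchyKernel_mul (continuous_wirtingerOp (-I) hφ)
    (hasCompactSupport_wirtingerOp (-I) hc)).congr'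
      (eventually_nhdsWithin_of_forall hparts)
  rw [tendsto_nhds_unique hlim (tendsto_integral_regularizedCauchyKernel_sq_mul hφ hc hR)]
  exact tendsto_setIntegral_compl_ball_inv_sq_mul hφ hc hR

end CauchyKernel

section BeurlingTransform

open Complex (I)
open scoped Real Convolution

/-- The Cauchy transform, the solution operator of `∂u/∂z̄ = g`. -/
noncomputable def cauchyTransform (g : ℂ → ℂ) (z : ℂ) : ℂ :=
  (π : ℂ)⁻¹ * ∫ t, t⁻¹ * g (z - t)

/-- The Beurling transform `∂(cauchyTransform g)/∂z`; that it is given by the principal value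
integral is `tendsto_setIntegral_compl_ball_beurlingTransform`. -/
noncomputable def beurlingTransform (g : ℂ → ℂ) : ℂ → ℂ :=
  wirtingerDeriv (cauchyTransform g)

lemma cauchyTransform_eq_convolution (g : ℂ → ℂ) :
    cauchyTransform g = (π : ℂ)⁻¹ • ((fun t : ℂ => t⁻¹) ⋆[ContinuousLinearMap.mul ℝ ℂ] g) :=
  rfl

lemma contDiff_cauchyTransform {n : ℕ∞} {g : ℂ → ℂ} (hg : ContDiff ℝ n g)
    (hc : HasCompactSupport g) : ContDiff ℝ n (cauchyTransform g) := by
  rw [cauchyTransform_eq_convolution]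
  exact (hc.contDiff_convolution_right _ locallyIntegrable_inv hg).const_smul (π : ℂ)⁻¹

section ContDiff

variable {g : ℂ → ℂ} (hg : ContDiff ℝ 1 g) (hc : HasCompactSupport g)

include hg hc

lemma fderiv_cauchyTransform (z m : ℂ) :
    fderiv ℝ (cauchyTransform g) z m = cauchyTransform (fun w => fderiv ℝ g w m) z := by
  have h := (hc.hasFDerivAt_convolution_right (ContinuousLinearMap.mul ℝ ℂ) (μ := volume)
    locallyIntegrable_inv hg z).const_smul (π : ℂ)⁻¹
  have hint := (hc.fderiv (𝕜 := ℝ)).convolutionExists_right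
    ((ContinuousLinearMap.mul ℝ ℂ).precompR ℂ) (μ := volume) locallyIntegrable_inv
    (hg.continuous_fderiv one_ne_zero) z
  rw [cauchyTransform_eq_convolution, h.fderiv, smul_apply, convolution_def,
    ContinuousLinearMap.integral_apply hint]
  rfl

lemma wirtingerOp_cauchyTransform (c z : ℂ) :
    wirtingerOp c (cauchyTransform g) z = cauchyTransform (wirtingerOp c g) z := by
  have hint (m : ℂ) : Integrable fun t => t⁻¹ * fderiv ℝ g (z - t) m :=
    integrable_inv_mul (((hg.continuous_fderiv one_ne_zero).comp (continuous_sub_left z)).clm_apply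
      continuous_const) ((hc.fderiv_apply (𝕜 := ℝ) m).comp_homeomorph (Homeomorph.subLeft z))
  rw [wirtingerOp, fderiv_cauchyTransform hg hc, fderiv_cauchyTransform hg hc]
  simp only [cauchyTransform]
  rw [mul_left_comm c, ← mul_add, ← integral_const_mul,
    ← integral_add (hint 1) ((hint I).const_mul c), mul_left_comm, ← integral_const_mul]
  congr 2 with t
  rw [wirtingerOp]
  ring

lemma integral_inv_mul_wirtingerOp_comp_sub_left (c z : ℂ) :
    ∫ t, t⁻¹ * wirtingerOp c (fun t => g (z - t)) t =
      -π * wirtingerOp c (cauchyTransform g) z := by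
  have hπ : (π : ℂ) ≠ 0 := Complex.ofReal_ne_zero.2 Real.pi_ne_zero
  simp only [wirtingerOp_cauchyTransform hg hc, cauchyTransform,
    wirtingerOp_comp_sub_left c (hg.differentiable one_ne_zero), mul_neg, integral_neg, neg_mul,
    mul_inv_cancel_left₀ hπ]

lemma wirtingerDerivBar_cauchyTransform (z : ℂ) :
    wirtingerDerivBar (cauchyTransform g) z = g z := by
  have hπ : (-π : ℂ) ≠ 0 := neg_ne_zero.2 (Complex.ofReal_ne_zero.2 Real.pi_ne_zero)
  have h := integral_inv_mul_wirtingerDerivBar (φ := fun t => g (z - t))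
    (hg.comp (contDiff_const.sub contDiff_id)) (hc.comp_homeomorph (Homeomorph.subLeft z))
  rw [integral_inv_mul_wirtingerOp_comp_sub_left hg hc, sub_zero] at h
  exact mul_left_cancel₀ hπ h

lemma continuous_beurlingTransform : Continuous (beurlingTransform g) :=
  continuous_wirtingerOp _ (contDiff_cauchyTransform (n := 1) hg hc)

lemma tendsto_setIntegral_compl_ball_beurlingTransform (z : ℂ) :
    Tendsto (fun ε => -(π : ℂ)⁻¹ * ∫ w in (ball z ε)ᶜ, g w / (w - z) ^ 2) (𝓝[>] 0)
      (𝓝 (beurlingTransform g z)) := by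
  have h := tendsto_setIntegral_compl_ball_integral_inv_mul_wirtingerDeriv
    (φ := fun t => g (z - t)) (hg.comp (contDiff_const.sub contDiff_id))
    (hc.comp_homeomorph (Homeomorph.subLeft z))
  rw [integral_inv_mul_wirtingerOp_comp_sub_left hg hc] at h
  have hπ : (π : ℂ) ≠ 0 := Complex.ofReal_ne_zero.2 Real.pi_ne_zero
  convert h.const_mul (-(π : ℂ)⁻¹) using 2 with ε
  · rw [← integral_indicator measurableSet_ball.compl, ← integral_sub_left_eq_self _ volume z,
      ← integral_indicator measurableSet_ball.compl]
    congr 2 with t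
    simp only [indicator, mem_compl_iff, mem_ball, dist_eq_norm, sub_sub_cancel_left, norm_neg,
      sub_zero, neg_sq, div_eq_inv_mul]
  · rw [beurlingTransform, neg_mul, neg_mul, mul_neg, neg_neg, inv_mul_cancel_left₀ hπ]

lemma tendsto_setIntegral_diff_ball_beurlingTransform {s : Set ℂ} (hs : g.support ⊆ s) (z : ℂ) :
    Tendsto (fun ε => -(π : ℂ)⁻¹ * ∫ w in s \ ball z ε, g w / (w - z) ^ 2) (𝓝[>] 0)
      (𝓝 (beurlingTransform g z)) := by
  refine (tendsto_setIntegral_compl_ball_beurlingTransform hg hc z).congr fun ε => ?_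
  congr 1
  refine setIntegral_eq_of_subset_of_forall_sdiff_eq_zero measurableSet_ball.compl
    (fun w hw => hw.2) fun w hw => ?_
  rw [Function.notMem_support.1 fun h => hw.2 ⟨hs h, hw.1⟩, zero_div]

end ContDiff

end BeurlingTransform

section LocalBounds

open scoped Real

variable {p : ℝ}

lemma lintegral_enorm_inv_ball_ne_top (R : ℝ) : ∫⁻ t in ball (0 : ℂ) R, ‖t⁻¹‖ₑ ≠ ⊤ :=
  (integrableOn_inv_ball R).2.ne

lemma enorm_cauchyTransform_le {g : ℂ → ℂ} {r s : ℝ} (hg : g.support ⊆ ball 0 r) {z : ℂ}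
    (hz : z ∈ ball 0 s) :
    ‖cauchyTransform g z‖ₑ ≤ ∫⁻ t in ball 0 (r + s), ‖t⁻¹‖ₑ * ‖g (z - t)‖ₑ := by
  have hπ : ‖(π : ℂ)⁻¹‖ₑ ≤ 1 := by
    rw [← ofReal_norm, norm_inv, Complex.norm_of_nonneg Real.pi_pos.le]
    exact ENNReal.ofReal_le_one.2 (inv_le_one_of_one_le₀ (by linarith [Real.pi_gt_three]))
  have hsupp : ∫ t, t⁻¹ * g (z - t) = ∫ t in ball 0 (r + s), t⁻¹ * g (z - t) := by
    refine (setIntegral_eq_integral_of_forall_compl_eq_zero fun t ht => ?_).symm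
    suffices z - t ∉ g.support by rw [Function.notMem_support.1 this, mul_zero]
    refine fun h => ht ?_
    rw [mem_ball_zero_iff] at hz ⊢
    calc ‖t‖ = ‖z - (z - t)‖ := by rw [_root_.sub_sub_cancel]
      _ ≤ ‖z‖ + ‖z - t‖ := norm_sub_le _ _
      _ < r + s := by linarith [mem_ball_zero_iff.1 (hg h)]
  calc ‖cauchyTransform g z‖ₑ ≤ 1 * ∫⁻ t in ball 0 (r + s), ‖t⁻¹ * g (z - t)‖ₑ := by
        rw [cauchyTransform, enorm_mul, hsupp]
        gcongr
        exact enorm_integral_le_lintegral_enorm _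
    _ = _ := by simp only [one_mul, enorm_mul]

lemma lintegral_enorm_cauchyTransform_rpow_le (hp : 1 < p) {g : ℂ → ℂ} (hg : Measurable g)
    {r : ℝ} (hsupp : g.support ⊆ ball 0 r) (s : ℝ) :
    ∫⁻ z in ball 0 s, ‖cauchyTransform g z‖ₑ ^ p ≤
      (∫⁻ t in ball (0 : ℂ) (r + s), ‖t⁻¹‖ₑ) ^ p * ∫⁻ z, ‖g z‖ₑ ^ p := by
  calc ∫⁻ z in ball 0 s, ‖cauchyTransform g z‖ₑ ^ p
      ≤ ∫⁻ z in ball 0 s, (∫⁻ t in ball 0 (r + s), ‖t⁻¹‖ₑ * ‖g (z - t)‖ₑ) ^ p := by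
        refine setLIntegral_mono' measurableSet_ball fun z hz => ?_
        gcongr
        exact enorm_cauchyTransform_le hsupp hz
    _ ≤ _ := by
        refine lintegral_lintegral_mul_rpow_le hp (by fun_prop)
          (hg.comp measurable_sub).enorm fun t => ?_
        calc ∫⁻ z in ball 0 s, ‖g (z - t)‖ₑ ^ p ≤ ∫⁻ z, ‖g (z - t)‖ₑ ^ p :=
              setLIntegral_le_lintegral _ _
          _ = ∫⁻ z, ‖g z‖ₑ ^ p := lintegral_sub_right_eq_self (fun z => ‖g z‖ₑ ^ p) t

lemma lintegral_enorm_mul_cauchyTransform_rpow_le (hp : 1 < p) {ψ : ℂ → ℂ} (hψ : Continuous ψ)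
    (hc : HasCompactSupport ψ) (r : ℝ) :
    ∃ C : ℝ≥0∞, C ≠ ⊤ ∧ ∀ g : ℂ → ℂ, Measurable g → g.support ⊆ ball 0 r →
      ∫⁻ z, ‖ψ z * cauchyTransform g z‖ₑ ^ p ≤ C * ∫⁻ z, ‖g z‖ₑ ^ p := by
  have hp0 : 0 < p := one_pos.trans hp
  obtain ⟨s, hs⟩ := hc.isCompact.isBounded.subset_ball 0
  obtain ⟨B, hB⟩ := hc.exists_bound_of_continuous hψ
  refine ⟨ENNReal.ofReal B ^ p * (∫⁻ t in ball (0 : ℂ) (r + s), ‖t⁻¹‖ₑ) ^ p, ?_,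
    fun g hg hsupp => ?_⟩
  · have := lintegral_enorm_inv_ball_ne_top (r + s)
    finiteness
  calc ∫⁻ z, ‖ψ z * cauchyTransform g z‖ₑ ^ p
      = ∫⁻ z in ball 0 s, ‖ψ z * cauchyTransform g z‖ₑ ^ p := by
        refine (setLIntegral_eq_of_support_subset ?_).symm
        refine fun z hz => hs (subset_tsupport _ fun h => hz ?_)
        simp only [h, zero_mul, enorm_zero, ENNReal.zero_rpow_of_pos hp0]
    _ ≤ ∫⁻ z in ball 0 s, ENNReal.ofReal B ^ p * ‖cauchyTransform g z‖ₑ ^ p := by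
        gcongr with z
        rw [enorm_mul, ENNReal.mul_rpow_of_nonneg _ _ hp0.le, ← ofReal_norm (ψ z)]
        gcongr
        exact hB z
    _ ≤ _ := by
        rw [lintegral_const_mul' _ _ (by finiteness), mul_assoc]
        gcongr
        exact lintegral_enorm_cauchyTransform_rpow_le hp hg hsupp s

lemma enorm_wirtingerDerivBar_mul_cauchyTransform_le {χ g : ℂ → ℂ} (hχ : ContDiff ℝ 1 χ)
    (hχ_le : ∀ z, ‖χ z‖ₑ ≤ 1) (hg : ContDiff ℝ 1 g) (hc : HasCompactSupport g) (z : ℂ) :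
    ‖wirtingerDerivBar (fun z => χ z * cauchyTransform g z) z‖ₑ ≤
      ‖g z‖ₑ + ‖wirtingerDerivBar χ z * cauchyTransform g z‖ₑ := by
  have hCg : ContDiff ℝ 1 (cauchyTransform g) := contDiff_cauchyTransform (n := 1) hg hc
  have hprod := wirtingerOp_mul Complex.I (hχ.differentiable one_ne_zero z)
    (hCg.differentiable one_ne_zero z)
  rw [← wirtingerDerivBar, wirtingerDerivBar_cauchyTransform hg hc] at hprod
  rw [hprod]
  refine (enorm_add_le _ _).trans ?_
  gcongr
  rw [enorm_mul]
  exact mul_le_of_le_one_left' (hχ_le z)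

lemma wirtingerDeriv_mul_cauchyTransform {χ : ℂ → ℂ} (g : ℂ → ℂ) {z : ℂ} (hχ : χ =ᶠ[𝓝 z] 1) :
    wirtingerDeriv (fun z => χ z * cauchyTransform g z) z = beurlingTransform g z := by
  refine wirtingerOp_congr _ ?_
  filter_upwards [hχ] with w hw
  rw [hw, Pi.one_apply, one_mul]

lemma lintegral_enorm_beurlingTransform_rpow_le (hp : 1 < p) {r : ℝ} (hr : 0 < r) :
    ∃ C : ℝ≥0∞, C ≠ ⊤ ∧ ∀ g : ℂ → ℂ, ContDiff ℝ (⊤ : ℕ∞) g → HasCompactSupport g →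
      g.support ⊆ ball 0 r →
        ∫⁻ z in ball 0 r, ‖beurlingTransform g z‖ₑ ^ p ≤ C * ∫⁻ z, ‖g z‖ₑ ^ p := by
  let b : ContDiffBump (0 : ℂ) := ⟨r, 2 * r, hr, by linarith⟩
  let χ (z : ℂ) : ℂ := b z
  have hχ : ContDiff ℝ (⊤ : ℕ∞) χ := Complex.ofRealCLM.contDiff.comp b.contDiff
  have hχc : HasCompactSupport χ := b.hasCompactSupport.comp_left Complex.ofReal_zero
  have hχ_le (z : ℂ) : ‖χ z‖ₑ ≤ 1 := by
    rw [← ofReal_norm, Complex.norm_of_nonneg b.nonneg]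
    exact ENNReal.ofReal_le_one.2 b.le_one
  obtain ⟨C₁, hC₁, hderiv⟩ := lintegral_enorm_wirtingerDeriv_rpow_le hp
  obtain ⟨C₂, hC₂, hcutoff⟩ := lintegral_enorm_mul_cauchyTransform_rpow_le hp
    (continuous_wirtingerOp Complex.I (hχ.of_le (by simp)))
    (hasCompactSupport_wirtingerOp Complex.I hχc) r
  refine ⟨C₁ * (2 ^ p * (1 + C₂)), by finiteness, fun g hg hgc hsupp => ?_⟩
  have hg1 : ContDiff ℝ 1 g := hg.of_le (by simp)
  have hCg : ContDiff ℝ (⊤ : ℕ∞) (cauchyTransform g) := contDiff_cauchyTransform hg hgc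
  have hχ_one : ∀ z ∈ ball 0 r, χ =ᶠ[𝓝 z] 1 := fun z hz =>
    (b.eventuallyEq_one_of_mem_ball hz).mono fun w hw => congrArg Complex.ofReal hw
  calc ∫⁻ z in ball 0 r, ‖beurlingTransform g z‖ₑ ^ p
      ≤ ∫⁻ z, ‖wirtingerDeriv (fun z => χ z * cauchyTransform g z) z‖ₑ ^ p := by
        rw [setLIntegral_congr_fun measurableSet_ball fun z hz => by
          rw [← wirtingerDeriv_mul_cauchyTransform g (hχ_one z hz)]]
        exact setLIntegral_le_lintegral _ _
    _ ≤ C₁ * ∫⁻ z, ‖wirtingerDerivBar (fun z => χ z * cauchyTransform g z) z‖ₑ ^ p :=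
        hderiv _ (hχ.mul hCg) hχc.mul_right
    _ ≤ C₁ * (2 ^ p * ((1 + C₂) * ∫⁻ z, ‖g z‖ₑ ^ p)) := by
        gcongr
        refine lintegral_rpow_le_of_le_add hp.le hg.continuous.measurable.enorm.aemeasurable
          (.of_forall
            (enorm_wirtingerDerivBar_mul_cauchyTransform_le (hχ.of_le (by simp)) hχ_le hg1 hgc))
          ?_ ?_
        · rw [add_mul, one_mul]
          exact le_self_add
        · rw [add_mul]
          exact (hcutoff g hg.continuous.measurable hsupp).trans le_add_self
    _ = _ := by ring

end LocalBounds

section PowerWeightKernel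

lemma abs_rpow_sub_one_le_of_exponent_le {x a b : ℝ} (hx : 0 ≤ x) (ha : 0 ≤ a) (hab : a ≤ b) :
    |x ^ a - 1| ≤ |x ^ b - 1| := by
  refine abs_sub_left_of_mem_uIcc (mem_uIcc.2 ?_)
  rcases le_total x 1 with h | h
  · exact .inr ⟨Real.rpow_le_rpow_of_exponent_ge_of_imp hx h hab fun _ hb => by linarith,
      Real.rpow_le_one hx h ha⟩
  · exact .inl ⟨Real.one_le_rpow h ha, Real.rpow_le_rpow_of_exponent_le h hab⟩

lemma abs_rpow_sub_one_le_of_mem_uIcc {x y a : ℝ} (hx : 0 ≤ x) (hxy : x ∈ uIcc 1 y) (hy : 0 ≤ y)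
    (ha : 0 ≤ a) : |x ^ a - 1| ≤ |y ^ a - 1| := by
  refine abs_sub_left_of_mem_uIcc (mem_uIcc.2 ?_)
  rcases mem_uIcc.1 hxy with ⟨h1, h2⟩ | ⟨h1, h2⟩
  · exact .inl ⟨Real.one_le_rpow h1 ha, Real.rpow_le_rpow hx h2 ha⟩
  · exact .inr ⟨Real.rpow_le_rpow hy h1 ha, Real.rpow_le_one hx h2 ha⟩

/-- The kernel of the commutator of the Beurling transform with the weight `‖·‖ ^ a`, after the
substitution `w = z * l` that turns it into an integral over dilations. -/
noncomputable def powerWeightKernel (a : ℝ) (l : ℂ) : ℝ := (‖l‖ ^ a - 1) / ‖l - 1‖ ^ 2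

variable {a b : ℝ} {l : ℂ}

lemma measurable_powerWeightKernel (a : ℝ) : Measurable (powerWeightKernel a) := by
  unfold powerWeightKernel
  have := measurable_norm (α := ℂ).pow_const a
  fun_prop

lemma norm_powerWeightKernel (a : ℝ) (l : ℂ) :
    ‖powerWeightKernel a l‖ = |‖l‖ ^ a - 1| / ‖l - 1‖ ^ 2 := by
  rw [powerWeightKernel, norm_div, Real.norm_eq_abs, norm_pow, norm_norm]

lemma norm_powerWeightKernel_le_of_norm_lt_half (ha : 0 ≤ a) (hl : ‖l‖ < 1 / 2) :
    ‖powerWeightKernel a l‖ ≤ 4 := by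
  have htri : 1 ≤ ‖l‖ + ‖l - 1‖ := by simpa using norm_sub_le l (l - 1)
  have hpow : |‖l‖ ^ a - 1| ≤ 1 := by
    have := Real.rpow_le_one (norm_nonneg l) (by linarith) ha
    rw [abs_le]
    constructor <;> linarith [Real.rpow_nonneg (norm_nonneg l) a]
  rw [norm_powerWeightKernel, div_le_iff₀ (by nlinarith)]
  nlinarith

lemma norm_powerWeightKernel_le_of_norm_lt_two (ha : 0 ≤ a) (ha2 : a ≤ 2) (hl : ‖l‖ < 2) :
    ‖powerWeightKernel a l‖ ≤ 3 * ‖(l - 1)⁻¹‖ := by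
  have hpow : |‖l‖ ^ a - 1| ≤ 3 * ‖l - 1‖ := calc
    |‖l‖ ^ a - 1| ≤ |‖l‖ ^ (2 : ℝ) - 1| :=
      abs_rpow_sub_one_le_of_exponent_le (norm_nonneg l) ha ha2
    _ = |‖l‖ + 1| * |‖l‖ - ‖(1 : ℂ)‖| := by
      rw [norm_one, ← abs_mul, Real.rpow_two]
      ring_nf
    _ ≤ 3 * ‖l - 1‖ := by
      gcongr
      · rw [abs_of_nonneg (by positivity)]
        linarith
      · exact abs_norm_sub_norm_le l 1
  rcases eq_or_ne (l - 1) 0 with h | h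
  · simp [powerWeightKernel, h]
  have : 0 < ‖l - 1‖ := norm_pos_iff.2 h
  rw [norm_powerWeightKernel, norm_inv, div_le_iff₀ (by positivity)]
  field_simp
  assumption

lemma norm_powerWeightKernel_le_of_two_le_norm (ha : 0 ≤ a) (hl : 2 ≤ ‖l‖) :
    ‖powerWeightKernel a l‖ ≤ 4 * ‖l‖ ^ (a - 2) := by
  have htri : ‖l‖ ≤ ‖l - 1‖ + 1 := by simpa using norm_add_le (l - 1) 1
  have hpow : 1 ≤ ‖l‖ ^ a := Real.one_le_rpow (by linarith) ha
  rw [norm_powerWeightKernel, Real.rpow_sub (by linarith), Real.rpow_two,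
    abs_of_nonneg (by linarith), ← mul_div_assoc, div_le_div_iff₀ (by nlinarith) (by nlinarith)]
  calc (‖l‖ ^ a - 1) * ‖l‖ ^ 2 ≤ ‖l‖ ^ a * (2 * ‖l - 1‖) ^ 2 := by
        gcongr <;> linarith
    _ = 4 * ‖l‖ ^ a * ‖l - 1‖ ^ 2 := by ring

lemma norm_powerWeightKernel_mul_rpow_le_of_two_le_norm (ha : 0 ≤ a) (hab : a ≤ b) (hb : b ≤ 2)
    (hl : 2 ≤ ‖l‖) :
    ‖powerWeightKernel a l‖ * ‖l‖ ^ (-b) ≤ 64 * (1 + ‖l‖) ^ (-(2 + (b - a))) := by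
  calc
    ‖powerWeightKernel a l‖ * ‖l‖ ^ (-b) ≤ 4 * ‖l‖ ^ (a - 2) * ‖l‖ ^ (-b) := by
      gcongr
      exact norm_powerWeightKernel_le_of_two_le_norm ha hl
    _ = 4 * ‖l‖ ^ (-(2 + (b - a))) := by
      rw [mul_assoc, ← Real.rpow_add (by linarith)]
      ring_nf
    _ ≤ 4 * ((1 + ‖l‖) / 2) ^ (-(2 + (b - a))) := by
      gcongr 4 * ?_
      exact Real.rpow_le_rpow_of_nonpos (by positivity) (by linarith) (by linarith)
    _ = 4 * (2 ^ (2 + (b - a)) * (1 + ‖l‖) ^ (-(2 + (b - a)))) := by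
      rw [Real.div_rpow (by positivity) zero_le_two, Real.rpow_neg zero_le_two, div_inv_eq_mul,
        mul_comm (2 ^ _)]
    _ ≤ 4 * (2 ^ (4 : ℝ) * (1 + ‖l‖) ^ (-(2 + (b - a)))) := by
      gcongr
      · exact one_le_two
      · linarith
    _ = 64 * (1 + ‖l‖) ^ (-(2 + (b - a))) := by norm_num; ring

lemma norm_powerWeightKernel_mul_rpow_le (ha : 0 ≤ a) (hab : a ≤ b) (hb : b ≤ 2) (l : ℂ) :
    ‖powerWeightKernel a l * ‖l‖ ^ (-b)‖ ≤ (ball 0 1).indicator (fun l => 4 * ‖l‖ ^ (-b)) l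
      + (ball 0 4).indicator (fun t => 12 * ‖t⁻¹‖) (l - 1)
      + 64 * (1 + ‖l‖) ^ (-(2 + (b - a))) := by
  have h₁ : 0 ≤ (ball (0 : ℂ) 1).indicator (fun l => 4 * ‖l‖ ^ (-b)) l :=
    indicator_nonneg (fun _ _ => by positivity) _
  have h₂ : 0 ≤ (ball (0 : ℂ) 4).indicator (fun t => 12 * ‖t⁻¹‖) (l - 1) :=
    indicator_nonneg (fun _ _ => by positivity) _
  have h₃ : 0 ≤ 64 * (1 + ‖l‖) ^ (-(2 + (b - a))) := by positivity
  rw [norm_mul, Real.norm_of_nonneg (by positivity : 0 ≤ ‖l‖ ^ (-b))]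
  rcases lt_or_ge ‖l‖ (1 / 2) with hl | hl
  · have := norm_powerWeightKernel_le_of_norm_lt_half ha hl
    rw [indicator_of_mem (mem_ball_zero_iff.2 (by linarith))]
    have : ‖powerWeightKernel a l‖ * ‖l‖ ^ (-b) ≤ 4 * ‖l‖ ^ (-b) := by gcongr
    linarith
  rcases lt_or_ge ‖l‖ 2 with hl2 | hl2
  · have hpow : ‖l‖ ^ (-b) ≤ 4 := calc
      ‖l‖ ^ (-b) ≤ (1 / 2) ^ (-b) :=
        Real.rpow_le_rpow_of_nonpos (by norm_num) hl (by linarith)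
      _ ≤ (1 / 2) ^ (-2 : ℝ) :=
        Real.rpow_le_rpow_of_exponent_ge (by norm_num) (by norm_num) (by linarith)
      _ = 4 := by norm_num [Real.rpow_neg]
    rw [indicator_of_mem (a := l - 1) (mem_ball_zero_iff.2 (by
      linarith [(by simpa using norm_sub_le l 1 : ‖l - 1‖ ≤ ‖l‖ + 1)]))]
    have : ‖powerWeightKernel a l‖ * ‖l‖ ^ (-b) ≤ 3 * ‖(l - 1)⁻¹‖ * 4 := by
      gcongr
      exact norm_powerWeightKernel_le_of_norm_lt_two ha (hab.trans hb) hl2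
    linarith
  · linarith [norm_powerWeightKernel_mul_rpow_le_of_two_le_norm ha hab hb hl2]

lemma integrable_powerWeightKernel_mul_rpow (ha : 0 ≤ a) (hab : a < b) (hb : b < 2) :
    Integrable fun l => powerWeightKernel a l * ‖l‖ ^ (-b) := by
  have hmeas (c : ℝ) : Measurable fun l : ℂ => ‖l‖ ^ c := measurable_norm.pow_const c
  have hzero : Integrable ((ball (0 : ℂ) 1).indicator fun l => 4 * ‖l‖ ^ (-b)) := by
    rw [integrable_indicator_iff measurableSet_ball]
    refine integrableOn_ball_of_norm_le_rpow (C := 4) (α := b) (by simp) (by simpa using hb)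
      (.of_forall fun x => ?_) ((hmeas _).const_mul _).aestronglyMeasurable
    rw [Real.norm_of_nonneg (by positivity)]
  have hone : Integrable ((ball (0 : ℂ) 4).indicator fun t => 12 * ‖t⁻¹‖) := by
    rw [integrable_indicator_iff measurableSet_ball]
    exact (integrableOn_inv_ball 4).norm.const_mul 12
  have hinfty : Integrable fun l : ℂ => 64 * (1 + ‖l‖) ^ (-(2 + (b - a))) :=
    (integrable_one_add_norm (by simpa using hab)).const_mul _
  exact ((hzero.add (hone.comp_sub_right 1)).add hinfty).mono'
    ((measurable_powerWeightKernel a).mul (hmeas _)).aestronglyMeasurable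
    (.of_forall (norm_powerWeightKernel_mul_rpow_le ha hab.le hb.le))

lemma lintegral_enorm_powerWeightKernel_mul_rpow_ne_top (ha : 0 ≤ a) (hab : a < b) (hb : b < 2) :
    ∫⁻ l, ‖powerWeightKernel a l‖ₑ * ‖l‖ₑ ^ (-b) ≠ ⊤ := by
  convert (integrable_powerWeightKernel_mul_rpow ha hab hb).2.ne using 1
  refine lintegral_congr_ae ?_
  filter_upwards [Measure.ae_ne volume (0 : ℂ)] with l hl
  rw [enorm_mul, Real.enorm_of_nonneg (by positivity : 0 ≤ ‖l‖ ^ (-b)), ← ofReal_norm l,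
    ENNReal.ofReal_rpow_of_pos (norm_pos_iff.2 hl)]

end PowerWeightKernel

section Dilation

lemma enorm_sq_mul_lintegral_comp_mul_left {z : ℂ} (hz : z ≠ 0) (f : ℂ → ℝ≥0∞) :
    ‖z‖ₑ ^ 2 * ∫⁻ l, f (z * l) = ∫⁻ w, f w := by
  have hz' : ‖z‖ ≠ 0 := norm_ne_zero_iff.2 hz
  have hpolar (l : ℂ) : z * l = ‖z‖ • ((Circle.exp z.arg : ℂ) * l) := by
    rw [Circle.coe_exp, Complex.real_smul, ← mul_assoc, Complex.norm_mul_exp_arg_mul_I]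
  have hpos : 0 < ‖z‖ ^ 2 := by positivity
  simp_rw [hpolar]
  rw [lintegral_circle_mul_left (fun l => f (‖z‖ • l)),
    ← (measurableEmbedding_const_smul₀ hz').lintegral_map, Measure.map_addHaar_smul volume hz',
    lintegral_smul_measure, Complex.finrank_real_complex, abs_of_nonneg (by positivity),
    ← ofReal_norm, ← ENNReal.ofReal_pow (norm_nonneg z), smul_eq_mul, ← mul_assoc,
    ← ENNReal.ofReal_mul hpos.le, mul_inv_cancel₀ hpos.ne', ENNReal.ofReal_one, one_mul]

variable {p : ℝ} {k G : ℂ → ℝ≥0∞}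

lemma lintegral_rpow_enorm_rpow_mul_comp_mul (hp : 0 < p) (G : ℂ → ℝ≥0∞) {l : ℂ} (hl : l ≠ 0) :
    ∫⁻ z, (‖l‖ₑ ^ (2 / p) * G (z * l)) ^ p = ∫⁻ w, G w ^ p := by
  have hscale (z : ℂ) : (‖l‖ₑ ^ (2 / p) * G (z * l)) ^ p = ‖l‖ₑ ^ 2 * G (l * z) ^ p := by
    rw [ENNReal.mul_rpow_of_nonneg _ _ hp.le, ← ENNReal.rpow_mul, div_mul_cancel₀ _ hp.ne',
      ENNReal.rpow_two, mul_comm z]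
  simp_rw [hscale]
  rw [lintegral_const_mul' _ _ (by finiteness)]
  exact enorm_sq_mul_lintegral_comp_mul_left hl fun w => G w ^ p

lemma lintegral_lintegral_mul_comp_mul_rpow_le (hp : 1 < p) (hk : Measurable k)
    (hG : Measurable G) :
    ∫⁻ z, (∫⁻ l, k l * G (z * l)) ^ p ≤
      (∫⁻ l, k l * ‖l‖ₑ ^ (-(2 / p))) ^ p * ∫⁻ w, G w ^ p := by
  have hp0 : 0 < p := by linarith
  have hsplit (z : ℂ) : ∫⁻ l, k l * G (z * l) =
      ∫⁻ l, k l * ‖l‖ₑ ^ (-(2 / p)) * (‖l‖ₑ ^ (2 / p) * G (z * l)) := by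
    refine lintegral_congr_ae ?_
    filter_upwards [Measure.ae_ne volume (0 : ℂ)] with l hl
    have hl' : ‖l‖ₑ ≠ 0 := enorm_ne_zero.2 hl
    rw [mul_assoc, ← mul_assoc (_ ^ _), ← ENNReal.rpow_add _ _ hl' enorm_ne_top,
      neg_add_cancel, ENNReal.rpow_zero, one_mul]
  simp_rw [hsplit]
  refine lintegral_lintegral_mul_rpow_le hp (by fun_prop) ?_ fun l => ?_
  · have : Measurable fun q : ℂ × ℂ => ‖q.2‖ₑ ^ (2 / p) * G (q.1 * q.2) := by fun_prop
    exact this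
  rcases eq_or_ne l 0 with rfl | hl
  · simp [hp0]
  · exact (lintegral_rpow_enorm_rpow_mul_comp_mul hp0 G hl).le

end Dilation

section RegularizedPowerWeight

/-- The weight `‖·‖ ^ a`, regularized at the origin at scale `δ`. -/
noncomputable def regularizedPowerWeight (a δ : ℝ) (z : ℂ) : ℝ := (‖z‖ ^ 2 + δ ^ 2) ^ (a / 2)

variable {a δ : ℝ}

lemma regularizedPowerWeight_pos (hδ : 0 < δ) (z : ℂ) : 0 < regularizedPowerWeight a δ z := by
  unfold regularizedPowerWeight
  positivity

lemma contDiff_inv_regularizedPowerWeight (hδ : 0 < δ) :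
    ContDiff ℝ (⊤ : ℕ∞) fun z => (regularizedPowerWeight a δ z)⁻¹ :=
  (((contDiff_norm_sq ℝ).add contDiff_const).rpow_const_of_ne fun z => by positivity).inv
    fun z => (regularizedPowerWeight_pos hδ z).ne'

lemma sq_rpow_half {x : ℝ} (hx : 0 ≤ x) (a : ℝ) : (x ^ 2) ^ (a / 2) = x ^ a := by
  rw [← Real.rpow_two, ← Real.rpow_mul hx, mul_div_cancel₀ _ two_ne_zero]

lemma rpow_norm_le_regularizedPowerWeight (ha : 0 ≤ a) (z : ℂ) :
    ‖z‖ ^ a ≤ regularizedPowerWeight a δ z := by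
  rw [← sq_rpow_half (norm_nonneg z), regularizedPowerWeight]
  gcongr
  linarith [sq_nonneg δ]

lemma enorm_inv_regularizedPowerWeight_le (ha : 0 ≤ a) (hδ : 0 < δ) (z : ℂ) :
    ‖(regularizedPowerWeight a δ z)⁻¹‖ₑ ≤ ‖z‖ₑ ^ (-a) := by
  have hpos := regularizedPowerWeight_pos (a := a) hδ z
  rw [enorm_inv hpos.ne', ENNReal.rpow_neg, ENNReal.inv_le_inv, ← enorm_norm,
    ← Real.enorm_rpow_of_nonneg (norm_nonneg z) ha]
  rw [Real.enorm_of_nonneg (by positivity), Real.enorm_of_nonneg hpos.le]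
  exact ENNReal.ofReal_le_ofReal (rpow_norm_le_regularizedPowerWeight ha z)

lemma tendsto_regularizedPowerWeight {z : ℂ} (hz : z ≠ 0) (a : ℝ) :
    Tendsto (fun δ => regularizedPowerWeight a δ z) (𝓝 0) (𝓝 (‖z‖ ^ a)) := by
  rw [← sq_rpow_half (norm_nonneg z)]
  refine Tendsto.rpow_const ?_ (.inl (by positivity))
  exact (by fun_prop : Continuous fun δ : ℝ => ‖z‖ ^ 2 + δ ^ 2).tendsto' _ _ (by simp)

lemma add_div_add_mem_uIcc_one {x y d : ℝ} (hy : 0 < y) (hd : 0 ≤ d) :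
    (x + d) / (y + d) ∈ uIcc 1 (x / y) := by
  rw [mem_uIcc, one_le_div (by linarith), div_le_one (by linarith),
    div_le_div_iff₀ (by linarith) hy, div_le_div_iff₀ hy (by linarith)]
  rcases le_total x y with h | h
  · exact .inr ⟨by nlinarith, by linarith⟩
  · exact .inl ⟨by linarith, by nlinarith⟩

lemma abs_regularizedPowerWeight_div_sub_one_le (ha : 0 ≤ a) {z : ℂ} (hz : z ≠ 0) (w : ℂ) :
    |regularizedPowerWeight a δ w / regularizedPowerWeight a δ z - 1| ≤ |‖w / z‖ ^ a - 1| := by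
  have hz' : 0 < ‖z‖ ^ 2 := by positivity
  rw [norm_div, ← sq_rpow_half (by positivity : 0 ≤ ‖w‖ / ‖z‖), div_pow, regularizedPowerWeight,
    regularizedPowerWeight, ← Real.div_rpow (by positivity) (by positivity)]
  exact abs_rpow_sub_one_le_of_mem_uIcc (by positivity)
    (add_div_add_mem_uIcc_one hz' (sq_nonneg δ)) (by positivity) (by positivity)

lemma enorm_inv_regularizedPowerWeight_sub_div_le (ha : 0 ≤ a) (hδ : 0 < δ) {z : ℂ} (hz : z ≠ 0)
    (w : ℂ) :
    ‖(regularizedPowerWeight a δ z)⁻¹ - (regularizedPowerWeight a δ w)⁻¹‖ₑ * ‖((w - z) ^ 2)⁻¹‖ₑ ≤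
      ‖(z ^ 2)⁻¹‖ₑ * ‖powerWeightKernel a (w / z)‖ₑ * ‖w‖ₑ ^ (-a) := by
  have hωz := regularizedPowerWeight_pos (a := a) hδ z
  have hωw := regularizedPowerWeight_pos (a := a) hδ w
  have hkernel : ‖regularizedPowerWeight a δ w / regularizedPowerWeight a δ z - 1‖ *
      ‖((w - z) ^ 2)⁻¹‖ ≤ ‖(z ^ 2)⁻¹‖ * ‖powerWeightKernel a (w / z)‖ := calc
    _ ≤ |‖w / z‖ ^ a - 1| * ‖((w - z) ^ 2)⁻¹‖ := by
      gcongr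
      exact abs_regularizedPowerWeight_div_sub_one_le ha hz w
    _ = ‖(z ^ 2)⁻¹‖ * ‖powerWeightKernel a (w / z)‖ := by
      rw [norm_powerWeightKernel, div_sub_one hz, norm_div (w - z), div_pow]
      simp only [norm_inv, norm_pow]
      field_simp
  have hsplit : (regularizedPowerWeight a δ z)⁻¹ - (regularizedPowerWeight a δ w)⁻¹ =
      (regularizedPowerWeight a δ w / regularizedPowerWeight a δ z - 1) *
        (regularizedPowerWeight a δ w)⁻¹ := by
    field_simp
  rw [hsplit, enorm_mul, mul_right_comm]
  gcongr ?_ * ?_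
  · simp only [← ofReal_norm, ← ENNReal.ofReal_mul (norm_nonneg _)]
    exact ENNReal.ofReal_le_ofReal hkernel
  · exact enorm_inv_regularizedPowerWeight_le ha hδ w

end RegularizedPowerWeight

section Commutator

open scoped Real

lemma integrableOn_compl_ball_div_sub_sq {g : ℂ → ℂ} (hg : Integrable g) (z : ℂ) {ε : ℝ}
    (hε : 0 < ε) : IntegrableOn (fun w => g w / (w - z) ^ 2) (ball z ε)ᶜ := by
  simp_rw [div_eq_mul_inv]
  refine hg.integrableOn.mul_bdd (c := (ε ^ 2)⁻¹)
    (Measurable.aestronglyMeasurable (by fun_prop)) ?_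
  filter_upwards [ae_restrict_mem measurableSet_ball.compl] with w hw
  rw [mem_compl_iff, mem_ball, dist_eq_norm, not_lt] at hw
  rw [norm_inv, norm_pow]
  gcongr

lemma enorm_smul_beurlingTransform_sub_le {φ : ℂ → ℝ} {g : ℂ → ℂ} (hφ : ContDiff ℝ 1 φ)
    (hg : ContDiff ℝ 1 g) (hc : HasCompactSupport g) (z : ℂ) :
    ‖φ z • beurlingTransform g z - beurlingTransform (φ • g) z‖ₑ ≤
      ∫⁻ w, ‖φ z - φ w‖ₑ * ‖((w - z) ^ 2)⁻¹‖ₑ * ‖g w‖ₑ := by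
  have hφg : ContDiff ℝ 1 (φ • g) := hφ.smul hg
  have hφgc : HasCompactSupport (φ • g) := hc.smul_left
  refine le_of_tendsto
    (((tendsto_setIntegral_compl_ball_beurlingTransform hg hc z).const_smul (φ z)).sub
      (tendsto_setIntegral_compl_ball_beurlingTransform hφg hφgc z)).enorm ?_
  filter_upwards [self_mem_nhdsWithin] with ε hε
  have hint {f : ℂ → ℂ} (hf : ContDiff ℝ 1 f) (hfc : HasCompactSupport f) :
      IntegrableOn (fun w => f w / (w - z) ^ 2) (ball z ε)ᶜ :=
    integrableOn_compl_ball_div_sub_sq (hf.continuous.integrable_of_hasCompactSupport hfc) z hε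
  calc ‖φ z • (-(π : ℂ)⁻¹ * ∫ w in (ball z ε)ᶜ, g w / (w - z) ^ 2) -
        -(π : ℂ)⁻¹ * ∫ w in (ball z ε)ᶜ, (φ • g) w / (w - z) ^ 2‖ₑ
      = ‖(π : ℂ)⁻¹‖ₑ * ‖∫ w in (ball z ε)ᶜ, (φ z - φ w) • (((w - z) ^ 2)⁻¹ * g w)‖ₑ := by
        have hsplit (w : ℂ) : (φ z - φ w) • (((w - z) ^ 2)⁻¹ * g w) =
            φ z • (g w / (w - z) ^ 2) - (φ • g) w / (w - z) ^ 2 := by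
          simp only [Pi.smul_apply', Complex.real_smul]
          push_cast
          ring
        simp_rw [hsplit]
        rw [integral_sub ((hint hg hc).fun_smul (φ z)) (hint hφg hφgc), integral_smul,
          ← mul_smul_comm, ← mul_sub, enorm_mul, enorm_neg]
    _ ≤ 1 * ∫⁻ w in (ball z ε)ᶜ, ‖(φ z - φ w) • (((w - z) ^ 2)⁻¹ * g w)‖ₑ := by
        gcongr
        · rw [← ofReal_norm, norm_inv, Complex.norm_of_nonneg Real.pi_pos.le]
          exact ENNReal.ofReal_le_one.2
            (inv_le_one_of_one_le₀ (by linarith [Real.pi_gt_three]))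
        · exact enorm_integral_le_lintegral_enorm _
    _ ≤ ∫⁻ w, ‖φ z - φ w‖ₑ * ‖((w - z) ^ 2)⁻¹‖ₑ * ‖g w‖ₑ := by
        rw [one_mul]
        refine (setLIntegral_le_lintegral _ _).trans_eq (lintegral_congr fun w => ?_)
        rw [enorm_smul, enorm_mul, mul_assoc]

lemma enorm_inv_regularizedPowerWeight_smul_beurlingTransform_sub_le {a δ : ℝ} (ha : 0 ≤ a)
    (hδ : 0 < δ) {g : ℂ → ℂ} (hg : ContDiff ℝ 1 g) (hc : HasCompactSupport g) {z : ℂ}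
    (hz : z ≠ 0) :
    ‖(regularizedPowerWeight a δ z)⁻¹ • beurlingTransform g z -
        beurlingTransform ((fun w => (regularizedPowerWeight a δ w)⁻¹) • g) z‖ₑ ≤
      ∫⁻ l, ‖powerWeightKernel a l‖ₑ * (‖z * l‖ₑ ^ (-a) * ‖g (z * l)‖ₑ) := by
  calc _ ≤ ∫⁻ w, ‖(regularizedPowerWeight a δ z)⁻¹ - (regularizedPowerWeight a δ w)⁻¹‖ₑ *
          ‖((w - z) ^ 2)⁻¹‖ₑ * ‖g w‖ₑ :=
        enorm_smul_beurlingTransform_sub_le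
          ((contDiff_inv_regularizedPowerWeight hδ).of_le (by simp)) hg hc z
    _ ≤ ∫⁻ w, ‖(z ^ 2)⁻¹‖ₑ * ‖powerWeightKernel a (w / z)‖ₑ * ‖w‖ₑ ^ (-a) * ‖g w‖ₑ := by
        gcongr ∫⁻ w, ?_ * _ with w
        exact enorm_inv_regularizedPowerWeight_sub_div_le ha hδ hz w
    _ = ∫⁻ l, ‖powerWeightKernel a l‖ₑ * (‖z * l‖ₑ ^ (-a) * ‖g (z * l)‖ₑ) := by
        rw [← enorm_sq_mul_lintegral_comp_mul_left hz, ← lintegral_const_mul' _ _ (by finiteness)]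
        refine lintegral_congr fun l => ?_
        rw [mul_div_cancel_left₀ l hz]
        simp only [← mul_assoc]
        rw [← enorm_pow, ← enorm_mul, mul_inv_cancel₀ (pow_ne_zero 2 hz), enorm_one, one_mul]

end Commutator

section PowerWeight

variable {p s : ℝ}

lemma exists_lintegral_lintegral_powerWeightKernel_rpow_le (hp : 1 < p) (hs : 0 ≤ s)
    (hs2 : s < 2) :
    ∃ C : ℝ≥0∞, C ≠ ⊤ ∧ ∀ G : ℂ → ℝ≥0∞, Measurable G →
      ∫⁻ z, (∫⁻ l, ‖powerWeightKernel (s / p) l‖ₑ * G (z * l)) ^ p ≤ C * ∫⁻ w, G w ^ p := by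
  have hp0 : 0 < p := by linarith
  have hC := lintegral_enorm_powerWeightKernel_mul_rpow_ne_top (by positivity : 0 ≤ s / p)
    (div_lt_div_of_pos_right hs2 hp0) ((div_lt_iff₀ hp0).2 (by linarith))
  exact ⟨_, ENNReal.rpow_ne_top_of_nonneg hp0.le hC, fun G hG =>
    lintegral_lintegral_mul_comp_mul_rpow_le hp (measurable_powerWeightKernel _).enorm hG⟩

lemma lintegral_enorm_inv_regularizedPowerWeight_smul_beurlingTransform_rpow_le (hp : 1 < p)
    (hs : 0 ≤ s) (hs2 : s < 2) {r : ℝ} (hr : 0 < r) :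
    ∃ C : ℝ≥0∞, C ≠ ⊤ ∧ ∀ δ > 0, ∀ g : ℂ → ℂ, ContDiff ℝ (⊤ : ℕ∞) g → HasCompactSupport g →
      g.support ⊆ ball 0 r →
        ∫⁻ z in ball 0 r,
            ‖(regularizedPowerWeight (s / p) δ z)⁻¹ • beurlingTransform g z‖ₑ ^ p ≤
          C * ∫⁻ z, (‖z‖ₑ ^ (-(s / p)) * ‖g z‖ₑ) ^ p := by
  have ha : 0 ≤ s / p := div_nonneg hs (by linarith)
  obtain ⟨N, hN, hkernel⟩ := exists_lintegral_lintegral_powerWeightKernel_rpow_le hp hs hs2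
  obtain ⟨C, hC, hunweighted⟩ := lintegral_enorm_beurlingTransform_rpow_le hp hr
  refine ⟨2 ^ p * (C + N), by finiteness, fun δ hδ g hg hc hsupp => ?_⟩
  have hg1 : ContDiff ℝ 1 g := hg.of_le (by simp)
  set φ := fun z => (regularizedPowerWeight (s / p) δ z)⁻¹
  have hφg : ContDiff ℝ (⊤ : ℕ∞) (φ • g) := (contDiff_inv_regularizedPowerWeight hδ).smul hg
  have hφgc : HasCompactSupport (φ • g) := hc.smul_left
  have hφg_le (z : ℂ) : ‖(φ • g) z‖ₑ ≤ ‖z‖ₑ ^ (-(s / p)) * ‖g z‖ₑ := by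
    rw [Pi.smul_apply', enorm_smul]
    gcongr
    exact enorm_inv_regularizedPowerWeight_le ha hδ z
  rw [mul_assoc]
  refine lintegral_rpow_le_of_le_add hp.le
    (continuous_beurlingTransform (hφg.of_le (by simp)) hφgc).measurable.enorm.aemeasurable
    (h := fun z => ∫⁻ l, ‖powerWeightKernel (s / p) l‖ₑ *
      (‖z * l‖ₑ ^ (-(s / p)) * ‖g (z * l)‖ₑ)) ?_ ?_ ?_
  · filter_upwards [ae_restrict_of_ae (Measure.ae_ne volume (0 : ℂ))] with z hz
    rw [← sub_add_cancel (φ z • beurlingTransform g z) (beurlingTransform (φ • g) z), add_comm]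
    refine (enorm_add_le _ _).trans ?_
    gcongr
    exact enorm_inv_regularizedPowerWeight_smul_beurlingTransform_sub_le ha hδ hg1 hc hz
  · calc _ ≤ C * ∫⁻ z, ‖(φ • g) z‖ₑ ^ p :=
          hunweighted _ hφg hφgc ((Function.support_smul_subset_right _ _).trans hsupp)
      _ ≤ (C + N) * ∫⁻ z, (‖z‖ₑ ^ (-(s / p)) * ‖g z‖ₑ) ^ p := by
          gcongr with z
          · exact le_self_add
          · exact hφg_le z
  · have hgm := hg.continuous.measurable
    calc _ ≤ N * ∫⁻ z, (‖z‖ₑ ^ (-(s / p)) * ‖g z‖ₑ) ^ p :=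
          (setLIntegral_le_lintegral _ _).trans <| hkernel _
            (by fun_prop : Measurable fun z => ‖z‖ₑ ^ (-(s / p)) * ‖g z‖ₑ)
      _ ≤ _ := by
          gcongr
          exact le_add_self

lemma rpow_neg_div_mul_rpow (hp : 0 < p) (x y : ℝ≥0∞) :
    (x ^ (-(s / p)) * y) ^ p = y ^ p * x ^ (-s) := by
  rw [ENNReal.mul_rpow_of_nonneg _ _ hp.le, ← ENNReal.rpow_mul, neg_mul, div_mul_cancel₀ _ hp.ne',
    mul_comm]

lemma lintegral_enorm_beurlingTransform_rpow_mul_rpow_neg_le (hp : 1 < p) (hs : 0 ≤ s)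
    (hs2 : s < 2) {r : ℝ} (hr : 0 < r) :
    ∃ C : ℝ≥0∞, C ≠ ⊤ ∧ ∀ g : ℂ → ℂ, ContDiff ℝ (⊤ : ℕ∞) g → HasCompactSupport g →
      g.support ⊆ ball 0 r →
        ∫⁻ z in ball 0 r, ‖beurlingTransform g z‖ₑ ^ p * ‖z‖ₑ ^ (-s) ≤
          C * ∫⁻ z in ball 0 r, ‖g z‖ₑ ^ p * ‖z‖ₑ ^ (-s) := by
  have hp0 : 0 < p := by linarith
  obtain ⟨C, hC, hC_le⟩ :=
    lintegral_enorm_inv_regularizedPowerWeight_smul_beurlingTransform_rpow_le hp hs hs2 hr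
  refine ⟨C, hC, fun g hg hc hsupp => ?_⟩
  have hne := ae_restrict_of_ae (s := ball 0 r) (Measure.ae_ne volume (0 : ℂ))
  have hball : ∫⁻ z in ball 0 r, ‖g z‖ₑ ^ p * ‖z‖ₑ ^ (-s) = ∫⁻ z, ‖g z‖ₑ ^ p * ‖z‖ₑ ^ (-s) :=
    setLIntegral_eq_of_support_subset fun z hz => hsupp fun h => hz (by simp [h, hp0])
  calc ∫⁻ z in ball 0 r, ‖beurlingTransform g z‖ₑ ^ p * ‖z‖ₑ ^ (-s)
      = ∫⁻ z in ball 0 r, ‖(‖z‖ ^ (s / p))⁻¹ • beurlingTransform g z‖ₑ ^ p := by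
        refine lintegral_congr_ae ?_
        filter_upwards [hne] with z hz
        rw [← rpow_neg_div_mul_rpow hp0, enorm_smul, enorm_inv (by positivity), ENNReal.rpow_neg,
          Real.enorm_rpow_of_nonneg (norm_nonneg z) (by positivity), enorm_norm]
    _ ≤ C * ∫⁻ z, (‖z‖ₑ ^ (-(s / p)) * ‖g z‖ₑ) ^ p := by
        refine lintegral_enorm_rpow_le_of_tendsto_ae
          (F := fun (n : ℕ) z => (regularizedPowerWeight (s / p) (1 / ((n : ℝ) + 1)) z)⁻¹ •
            beurlingTransform g z) (fun n => ?_) ?_ fun n => hC_le _ (by positivity) g hg hc hsupp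
        · exact ((contDiff_inv_regularizedPowerWeight (by positivity)).continuous.smul
            (continuous_beurlingTransform (hg.of_le (by simp)) hc)).aestronglyMeasurable
        · filter_upwards [hne] with z hz
          exact (((tendsto_regularizedPowerWeight hz (s / p)).comp
            tendsto_one_div_add_atTop_nhds_zero_nat).inv₀ (by positivity)).smul_const _
    _ = C * ∫⁻ z in ball 0 r, ‖g z‖ₑ ^ p * ‖z‖ₑ ^ (-s) := by
        simp_rw [hball, rpow_neg_div_mul_rpow hp0]

end PowerWeight

end Beurling

theorem singular_integral_bounded_weighted_Lp_general {p s r : ℝ} (hp : 1 < p) (hs : 0 ≤ s)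
    (hs2 : s < 2) (hr : 0 < r) :
    (∀ g : ℂ → ℂ, ContDiff ℝ 1 g → HasCompactSupport g → g.support ⊆ ball 0 r →
      ∀ z, ∃ L : ℂ,
        Tendsto (fun ε : ℝ =>
            -(Real.pi : ℂ)⁻¹ * ∫ w in ball (0 : ℂ) r \ ball z ε, g w / (w - z) ^ 2)
          (𝓝[>] 0) (𝓝 L)) ∧
    (∃ C : ℝ, 0 < C ∧
      ∀ g : ℂ → ℂ, ContDiff ℝ (⊤ : ℕ∞) g → HasCompactSupport g → g.support ⊆ ball 0 r →
        ∀ Sg : ℂ → ℂ,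
          (∀ z ∈ ball (0 : ℂ) r,
            Tendsto (fun ε : ℝ =>
                -(Real.pi : ℂ)⁻¹ * ∫ w in ball (0 : ℂ) r \ ball z ε, g w / (w - z) ^ 2)
              (𝓝[>] 0) (𝓝 (Sg z))) →
          ∫⁻ z in ball (0 : ℂ) r, ‖Sg z‖ₑ ^ p * ‖z‖ₑ ^ (-s) ≤
            ENNReal.ofReal C * ∫⁻ z in ball (0 : ℂ) r, ‖g z‖ₑ ^ p * ‖z‖ₑ ^ (-s)) := by
  obtain ⟨C, hC, hbound⟩ :=
    Beurling.lintegral_enorm_beurlingTransform_rpow_mul_rpow_neg_le hp hs hs2 hr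
  refine ⟨fun g hg hc hsupp z =>
    ⟨_, Beurling.tendsto_setIntegral_diff_ball_beurlingTransform hg hc hsupp z⟩,
    C.toReal + 1, by positivity, fun g hg hc hsupp Sg hSg => ?_⟩
  have hSg_eq : ∀ z ∈ ball (0 : ℂ) r, Sg z = Beurling.beurlingTransform g z := fun z hz =>
    tendsto_nhds_unique (hSg z hz)
      (Beurling.tendsto_setIntegral_diff_ball_beurlingTransform (hg.of_le (by simp)) hc hsupp z)
  rw [setLIntegral_congr_fun measurableSet_ball fun z hz => by rw [hSg_eq z hz]]
  refine (hbound g hg hc hsupp).trans ?_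
  gcongr
  exact ENNReal.le_ofReal_iff_toReal_le hC (by positivity) |>.2 (by linarith)

/-- The principal value singular integral `Sg(z) = p.v. -(1/π)∫_𝔻 g(w)/(w-z)² dμ(w)` exists
pointwise on the unit disk 𝔻 and is bounded on `Lᵖ(𝔻)` with respect to the Muckenhoupt
weight `|z|⁻¹` (Proposition `CalderonZygmund`). -/
theorem singular_integral_bounded_weighted_Lp (p : ℝ) (hp : 1 < p) :
    -- (i) the principal value limit exists for every z ∈ 𝔻
    (∀ g : ℂ → ℂ, ContDiff ℝ (⊤ : ℕ∞) g → HasCompactSupport g →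
      tsupport g ⊆ ball (0:ℂ) 1 →
      ∀ z ∈ ball (0:ℂ) 1, ∃ L : ℂ,
        Tendsto (fun ε : ℝ =>
            -(Real.pi : ℂ)⁻¹ * ∫ w in ball (0:ℂ) 1 \ ball z ε, g w / (w - z) ^ 2)
          (𝓝[>] 0) (𝓝 L)) ∧
    -- (ii) S is bounded on Lᵖ of the disk with weight |z|⁻¹
    (∃ C : ℝ, 0 < C ∧
      ∀ g : ℂ → ℂ, ContDiff ℝ (⊤ : ℕ∞) g → HasCompactSupport g →
        tsupport g ⊆ ball (0:ℂ) 1 →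
        ∀ Sg : ℂ → ℂ,
          (∀ z ∈ ball (0:ℂ) 1,
            Tendsto (fun ε : ℝ =>
                -(Real.pi : ℂ)⁻¹ * ∫ w in ball (0:ℂ) 1 \ ball z ε, g w / (w - z) ^ 2)
              (𝓝[>] 0) (𝓝 (Sg z))) →
          ∫⁻ z in ball (0:ℂ) 1, (‖Sg z‖₊ : ℝ≥0∞) ^ p * (‖z‖₊ : ℝ≥0∞)⁻¹ ≤
            ENNReal.ofReal C *
              ∫⁻ z in ball (0:ℂ) 1, (‖g z‖₊ : ℝ≥0∞) ^ p * (‖z‖₊ : ℝ≥0∞)⁻¹) := by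
  obtain ⟨hlim, C, hC, hbound⟩ :=
    singular_integral_bounded_weighted_Lp_general hp zero_le_one one_lt_two one_pos
  exact ⟨fun g hg hc hsupp z _ =>
      hlim g (hg.of_le (by simp)) hc ((subset_tsupport g).trans hsupp) z,
    C, hC, fun g hg hc hsupp Sg hSg => by
      simpa only [ENNReal.rpow_neg_one, enorm_eq_nnnorm] using
        hbound g hg hc ((subset_tsupport g).trans hsupp) Sg hSg⟩
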